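/- Let γ ∈ [0, 1/2], u ∈ (0,1), β > 1 − 2γ, and θ ∈ (−∞, 2]. Consider the discursive voter model with temperature θ on the Simplified Norros–Reittu graph G_N, started from the initial law μ_u in which each vertex independently has opinion 1 with probability u. Then the conditional expected consensus time satisfies E^θ_{μ_u}(τ_cons | G_N) = Θ_P^{log N}(N); that is, there exists C > 0 such that with probability tending to 1 as N → ∞ (over the random graph G_N), N·log^{−C} N ≤ E^θ_{μ_u}(τ_cons | G_N) ≤ N·log^C N. -/

import Mathlib

open scoped Classical
open Filter

noncomputable section

/-- Edge probability of the Simplified Norros–Reittu graph between (1-based) vertices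
`i` and `j` of `[N]`: `1 - exp(-β N^(2γ-1) i^(-γ) j^(-γ))`. -/
def snrEdgeProb (β γ : ℝ) (N i j : ℕ) : ℝ :=
  1 - Real.exp (-(β * (N : ℝ) ^ (2 * γ - 1) * (i : ℝ) ^ (-γ) * (j : ℝ) ^ (-γ)))

/-- Probability weight of a given simple graph on `[N]` when each edge `{i,j}` (`i ≠ j`)
is present independently with probability `p i j` (indices 1-based). -/
def graphWeight (p : ℕ → ℕ → ℝ) (N : ℕ) (G : SimpleGraph (Fin N)) : ℝ :=
  ∏ i : Fin N, ∏ j : Fin N,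
    if i < j then
      (if G.Adj i j then p ((i : ℕ) + 1) ((j : ℕ) + 1)
       else 1 - p ((i : ℕ) + 1) ((j : ℕ) + 1))
    else 1

/-- Probability that the random graph with independent edge probabilities `p` satisfies the
property `A`. -/
def graphProb (p : ℕ → ℕ → ℝ) (N : ℕ) (A : SimpleGraph (Fin N) → Prop) : ℝ :=
  ∑ G : SimpleGraph (Fin N), if A G then graphWeight p N G else 0

/-- Probability that the Simplified Norros–Reittu graph `G_N` satisfies the property `A`. -/
def snrProb (β γ : ℝ) (N : ℕ) (A : SimpleGraph (Fin N) → Prop) : ℝ :=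
  graphProb (snrEdgeProb β γ N) N A

/-- Generator matrix `Q` of the discursive voter model with temperature `θ` on a graph `G`,
acting on the state space `{0,1}^N`:
`(ℒ f)(η) = Σ_η' Q η η' f(η')` where
`ℒ f(η) = Σ_i d(i)^θ Σ_{j∼i} (1/d(i)) (½ f(η^{j←i}) + ½ f(η^{i←j}) − f(η))`. -/
def voterQ {N : ℕ} (G : SimpleGraph (Fin N)) (θ : ℝ) :
    Matrix (Fin N → Bool) (Fin N → Bool) ℝ :=
  Matrix.of fun η η' =>
    ∑ i : Fin N, (G.degree i : ℝ) ^ θ *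
      ∑ j ∈ G.neighborFinset i, ((G.degree i : ℝ))⁻¹ *
        ((1 / 2) * (if Function.update η j (η i) = η' then 1 else 0)
          + (1 / 2) * (if Function.update η i (η j) = η' then 1 else 0)
          - (if η = η' then 1 else 0))

/-- The set of absorbing configurations: those constant on each connected component of `G`. -/
def consensusStates {N : ℕ} (G : SimpleGraph (Fin N)) : Set (Fin N → Bool) :=
  {η | ∀ i j : Fin N, G.Reachable i j → η i = η j}

/-- The initial law `μ_u` in which each vertex independently has opinion 1 with
probability `u`. -/
def muU {N : ℕ} (u : ℝ) (η : Fin N → Bool) : ℝ :=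
  ∏ i : Fin N, if η i then u else 1 - u

/-- `P_{μ_u}(η_t ∈ A)`: the probability that the discursive voter model with temperature `θ`
on `G`, started from `μ_u`, is in an absorbing (componentwise constant) state at time `t`;
the law at time `t` is obtained from `μ_u` via the semigroup `exp(tℒ)`. -/
def probConsensusAt {N : ℕ} (G : SimpleGraph (Fin N)) (θ u t : ℝ) : ℝ :=
  ∑ η : Fin N → Bool, ∑ η' : Fin N → Bool,
    muU u η * (NormedSpace.exp (t • voterQ G θ)) η η' *
      (if η' ∈ consensusStates G then 1 else 0)

/-- The expected consensus time `E^θ_{μ_u}(τ_cons | G)` of the discursive voter model with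
temperature `θ` on the realized graph `G`, from initial law `μ_u`:
`E_{μ_u}(τ_cons) = ∫_0^∞ (1 − P_{μ_u}(η_t ∈ A)) dt`. -/
def expectedConsensusTime {N : ℕ} (G : SimpleGraph (Fin N)) (θ u : ℝ) : ℝ :=
  ∫ t in Set.Ioi (0 : ℝ), (1 - probConsensusAt G θ u t)

/-!
The probability that two connected vertices disagree vanishes on the diagonal and otherwise evolves
by two independent walks with the symmetric conductances `(d(i)^(θ-1) + d(j)^(θ-1)) / 2`. Hence its
squared `ℓ²` norm decreases at twice the rate of its Dirichlet energy, and Cauchy–Schwarz along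
paths to the diagonal gives exponential decay at rate of order `1 / (N * l * ρ)` whenever connected
vertices are joined by paths of length at most `l` along edges of conductance at least `1 / ρ`. This
bounds the consensus time from above. Conversely, the total disagreement decreases at rate at most
twice the total conductance, which for `θ ≤ 2` is at most `∑ i, d(i)^2`, while a component of size
`q` starts with disagreement of order `q^2`.

It remains to see that, up to powers of `log N`, the graph has `∑ i, d(i)^2` of order `N`, a
component of order `N`, and connected vertices joined by short paths all of whose edges meet a
vertex of small degree; the conductances of such edges are not small for any `θ`. The paths come
from breadth-first explorations inside the vertices of weight at most `log N ^ 2`. Because `β > 1 -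
2 * γ`, these explorations are supercritical even with the weights capped at a large constant, so
within a polylogarithmic number of generations each one dies out or reaches a frontier so large that
the frontiers of two explorations are adjacent.
-/

namespace RandomGraph

section Expectation

variable {V : Type*} [Fintype V] [LinearOrder V]

/-- Probability of drawing the graph `G` when the edges `{i, j}` are present independently with
probabilities `p i j`. The product runs over pairs `i < j`, so the values of `p` on and below the
diagonal are ignored. -/
def weight (p : V → V → ℝ) (G : SimpleGraph V) : ℝ :=
  ∏ i, ∏ j, if i < j then (if G.Adj i j then p i j else 1 - p i j) else 1

/-- Expectation of `f` under the random graph with independent edge probabilities `p`. -/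
def expect (p : V → V → ℝ) (f : SimpleGraph V → ℝ) : ℝ :=
  ∑ G, weight p G * f G

/-- Probability of the event `A` under the random graph with independent edge probabilities `p`. -/
def prob (p : V → V → ℝ) (A : SimpleGraph V → Prop) : ℝ :=
  expect p fun G => if A G then 1 else 0

variable {p : V → V → ℝ}

lemma expect_sum {ι : Type*} (s : Finset ι) (f : ι → SimpleGraph V → ℝ) :
    expect p (fun G => ∑ a ∈ s, f a G) = ∑ a ∈ s, expect p (f a) := by
  simp_rw [expect, Finset.mul_sum]
  exact Finset.sum_comm

lemma expect_add (f g : SimpleGraph V → ℝ) :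
    expect p (fun G => f G + g G) = expect p f + expect p g := by
  simp_rw [expect, mul_add, Finset.sum_add_distrib]

lemma expect_mul_const (f : SimpleGraph V → ℝ) (c : ℝ) :
    expect p (fun G => f G * c) = expect p f * c := by
  simp_rw [expect, Finset.sum_mul, mul_assoc]

lemma weight_nonneg (hp : ∀ i j, p i j ∈ Set.Icc 0 1) (G : SimpleGraph V) : 0 ≤ weight p G := by
  refine Finset.prod_nonneg fun i _ => Finset.prod_nonneg fun j _ => ?_
  have := hp i j
  split_ifs <;> linarith [this.1, this.2]

lemma expect_mono (hp : ∀ i j, p i j ∈ Set.Icc 0 1) {f g : SimpleGraph V → ℝ}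
    (h : ∀ G, f G ≤ g G) : expect p f ≤ expect p g :=
  Finset.sum_le_sum fun G _ => mul_le_mul_of_nonneg_left (h G) (weight_nonneg hp G)

end Expectation

section ProductStructure

variable {V : Type*} [LinearOrder V]

/-- Simple graphs on `V` encoded by the indicators of the pairs `i < j`. -/
def edgeIndicatorEquiv : ({e : V × V // e.1 < e.2} → Bool) ≃ SimpleGraph V where
  toFun x := SimpleGraph.mk fun i j =>
    (∃ h : i < j, x ⟨(i, j), h⟩ = true) ∨ ∃ h : j < i, x ⟨(j, i), h⟩ = true
  invFun G e := decide (G.Adj e.1.1 e.1.2)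
  left_inv x := by
    funext ⟨⟨i, j⟩, (h : i < j)⟩
    simp [h, h.not_gt]
  right_inv G := by
    ext i j
    rcases lt_trichotomy i j with h | rfl | h
    · simp [h, h.not_gt]
    · simp
    · simp [h, h.not_gt, G.adj_comm]

lemma edgeIndicatorEquiv_adj (x : {e : V × V // e.1 < e.2} → Bool) (e : {e : V × V // e.1 < e.2}) :
    (edgeIndicatorEquiv x).Adj e.1.1 e.1.2 ↔ x e = true := by
  rcases e with ⟨⟨i, j⟩, (h : i < j)⟩
  simp [edgeIndicatorEquiv, h, h.not_gt]

variable [Fintype V] {p : V → V → ℝ}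

lemma weight_edgeIndicatorEquiv (p : V → V → ℝ) (x : {e : V × V // e.1 < e.2} → Bool) :
    weight p (edgeIndicatorEquiv x) = ∏ e, if x e then p e.1.1 e.1.2 else 1 - p e.1.1 e.1.2 := by
  rw [weight, ← Finset.prod_product', ← Finset.prod_filter, Finset.univ_product_univ,
    Finset.prod_subtype (F := inferInstance) (p := fun e : V × V => e.1 < e.2)]
  · simp only [edgeIndicatorEquiv_adj]
  · simp

lemma expect_eq_prod (g : {e : V × V // e.1 < e.2} → Bool → ℝ) {f : SimpleGraph V → ℝ}
    (hf : ∀ x, f (edgeIndicatorEquiv x) = ∏ e, g e (x e)) :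
    expect p f = ∏ e, (p e.1.1 e.1.2 * g e true + (1 - p e.1.1 e.1.2) * g e false) := by
  have hprod := Finset.prod_univ_sum
    (fun _ : {e : V × V // e.1 < e.2} => (Finset.univ : Finset Bool))
    fun e b => (if b then p e.1.1 e.1.2 else 1 - p e.1.1 e.1.2) * g e b
  rw [Fintype.piFinset_univ] at hprod
  rw [expect, ← edgeIndicatorEquiv.sum_comp]
  simp_rw [weight_edgeIndicatorEquiv, hf, ← Finset.prod_mul_distrib]
  rw [← hprod]
  exact Finset.prod_congr rfl fun e _ => by simp

lemma expect_const (p : V → V → ℝ) (c : ℝ) : expect p (fun _ => c) = c := by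
  have h_one : expect p (fun _ => 1) = 1 := by
    rw [expect_eq_prod (fun _ _ => 1) (by simp)]
    simp
  simpa [h_one] using expect_mul_const (p := p) (fun _ => 1) c

lemma expect_ite_adj (hp : ∀ i j, p i j = p j i) {i j : V} (hij : i ≠ j) (a b : ℝ) :
    expect p (fun G => if G.Adj i j then a else b) = p i j * a + (1 - p i j) * b := by
  wlog h : i < j generalizing i j
  · simpa only [hp i j, SimpleGraph.adj_comm] using this hij.symm (hij.lt_or_gt.resolve_left h)
  let e₀ : {e : V × V // e.1 < e.2} := ⟨(i, j), h⟩
  rw [expect_eq_prod fun e c => if e = e₀ then (if c then a else b) else 1,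
    Finset.prod_eq_single e₀ (fun e _ he => by simp [he]) (by simp)]
  · simp [e₀]
  · intro x
    rw [Finset.prod_ite_eq' Finset.univ]
    simp only [Finset.mem_univ, if_true, ← edgeIndicatorEquiv_adj, e₀]

end ProductStructure

section Probability

variable {V : Type*} [Fintype V] [LinearOrder V] {p : V → V → ℝ}

lemma prob_eq_expect (A : SimpleGraph V → Prop) [DecidablePred A] :
    prob p A = expect p fun G => if A G then 1 else 0 := by
  rw [prob]
  congr!

lemma prob_const (p : V → V → ℝ) (Q : Prop) : prob p (fun _ => Q) = if Q then 1 else 0 :=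
  expect_const p _

lemma prob_mono (hp : ∀ i j, p i j ∈ Set.Icc 0 1) {A B : SimpleGraph V → Prop}
    (h : ∀ G, A G → B G) : prob p A ≤ prob p B :=
  expect_mono hp fun G => by
    by_cases hA : A G
    · simp [hA, h G hA]
    · simp only [hA, if_false]
      split_ifs <;> norm_num

lemma prob_nonneg (hp : ∀ i j, p i j ∈ Set.Icc 0 1) (A : SimpleGraph V → Prop) : 0 ≤ prob p A := by
  simpa [prob_const] using prob_mono (A := fun _ => False) (B := A) hp (by simp)

lemma prob_le_one (hp : ∀ i j, p i j ∈ Set.Icc 0 1) (A : SimpleGraph V → Prop) : prob p A ≤ 1 := by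
  simpa [prob_const] using prob_mono (A := A) (B := fun _ => True) hp (by simp)

lemma prob_not (A : SimpleGraph V → Prop) : prob p (fun G => ¬ A G) = 1 - prob p A := by
  have h_sum : ∀ G, (if ¬ A G then (1 : ℝ) else 0) + (if A G then 1 else 0) = 1 := fun G => by
    by_cases h : A G <;> simp [h]
  rw [eq_sub_iff_add_eq, prob_eq_expect, prob_eq_expect A, ← expect_add, funext h_sum, expect_const]

lemma prob_or_le (hp : ∀ i j, p i j ∈ Set.Icc 0 1) (A B : SimpleGraph V → Prop) :
    prob p (fun G => A G ∨ B G) ≤ prob p A + prob p B := by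
  rw [prob, prob, prob, ← expect_add]
  refine expect_mono hp fun G => ?_
  by_cases hA : A G <;> by_cases hB : B G <;> simp [hA, hB]

lemma prob_exists_le (hp : ∀ i j, p i j ∈ Set.Icc 0 1) {ι : Type*} [Fintype ι]
    (A : ι → SimpleGraph V → Prop) : prob p (fun G => ∃ a, A a G) ≤ ∑ a, prob p (A a) := by
  simp_rw [prob]
  rw [← expect_sum]
  refine expect_mono hp fun G => ?_
  have h_nonneg : ∀ a ∈ Finset.univ, (0 : ℝ) ≤ if A a G then 1 else 0 := fun a _ => by
    split_ifs <;> norm_num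
  split_ifs with h
  · obtain ⟨a, ha⟩ := h
    simpa [ha] using Finset.single_le_sum h_nonneg (Finset.mem_univ a)
  · exact Finset.sum_nonneg h_nonneg

lemma prob_exists₂_le (hp : ∀ i j, p i j ∈ Set.Icc 0 1) {ι : Type*} [Fintype ι]
    (A : ι → ι → SimpleGraph V → Prop) {ε : ℝ} (hA : ∀ a b, prob p (A a b) ≤ ε) :
    prob p (fun G => ∃ a b, A a b G) ≤ Fintype.card ι ^ 2 * ε :=
  calc _ ≤ ∑ a, prob p (fun G => ∃ b, A a b G) := prob_exists_le hp _
    _ ≤ ∑ a, ∑ b, prob p (A a b) := Finset.sum_le_sum fun a _ => prob_exists_le hp _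
    _ ≤ ∑ _a : ι, ∑ _b : ι, ε := Finset.sum_le_sum fun a _ => Finset.sum_le_sum fun b _ => hA a b
    _ = _ := by
      simp only [Finset.sum_const, Finset.card_univ, nsmul_eq_mul]
      ring

lemma prob_le_expect (hp : ∀ i j, p i j ∈ Set.Icc 0 1) {A : SimpleGraph V → Prop}
    {f : SimpleGraph V → ℝ} (hf : ∀ G, 0 ≤ f G) (h : ∀ G, A G → 1 ≤ f G) :
    prob p A ≤ expect p f :=
  expect_mono hp fun G => by
    split_ifs with hA
    exacts [h G hA, hf G]

end Probability

section Independence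

variable {V : Type*} {α : Type*}

/-- `f` depends on the graph only through which of the pairs in `S` are edges. -/
def DependsOnEdges (S : Set (Sym2 V)) (f : SimpleGraph V → α) : Prop :=
  ∀ ⦃G H : SimpleGraph V⦄, (∀ e ∈ S, e ∈ G.edgeSet ↔ e ∈ H.edgeSet) → f G = f H

lemma DependsOnEdges.mono {S T : Set (Sym2 V)} {f : SimpleGraph V → α} (h : DependsOnEdges S f)
    (hST : S ⊆ T) : DependsOnEdges T f :=
  fun _ _ hGH => h fun e he => hGH e (hST he)

lemma DependsOnEdges.comp {β : Type*} {S : Set (Sym2 V)} {f : SimpleGraph V → α}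
    (h : DependsOnEdges S f) (g : α → β) : DependsOnEdges S fun G => g (f G) :=
  fun _ _ hGH => congrArg g (h hGH)

/-- The graph that agrees with `G` on the pairs in `S` and with `H` on all other pairs. -/
def splice (S : Set (Sym2 V)) (G H : SimpleGraph V) : SimpleGraph V :=
  SimpleGraph.fromEdgeSet (S.ite G.edgeSet H.edgeSet)

lemma splice_adj {S : Set (Sym2 V)} {G H : SimpleGraph V} {i j : V} :
    (splice S G H).Adj i j ↔ if s(i, j) ∈ S then G.Adj i j else H.Adj i j := by
  rw [splice, SimpleGraph.fromEdgeSet_adj]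
  by_cases h : s(i, j) ∈ S
  · simpa [Set.ite, h] using fun hadj : G.Adj i j => hadj.ne
  · simpa [Set.ite, h] using fun hadj : H.Adj i j => hadj.ne

variable [Fintype V] [LinearOrder V] {p : V → V → ℝ}

lemma weight_splice_mul_weight_splice (S : Set (Sym2 V)) (G H : SimpleGraph V) :
    weight p (splice S G H) * weight p (splice S H G) = weight p G * weight p H := by
  simp_rw [weight, ← Finset.prod_mul_distrib]
  refine Finset.prod_congr rfl fun i _ => Finset.prod_congr rfl fun j _ => ?_
  by_cases h : s(i, j) ∈ S
  · simp only [splice_adj, h, if_true]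
  · simp only [splice_adj, h, if_false]
    exact mul_comm _ _

/-- Two independent copies of the graph can exchange their edges outside `S` without changing
their joint law. -/
theorem expect_mul_of_disjoint {S T : Set (Sym2 V)} (hST : Disjoint S T)
    {f g : SimpleGraph V → ℝ} (hf : DependsOnEdges S f) (hg : DependsOnEdges T g) :
    expect p (fun G => f G * g G) = expect p f * expect p g := by
  have h_inv : Function.Involutive fun x : SimpleGraph V × SimpleGraph V =>
      (splice S x.1 x.2, splice S x.2 x.1) := by
    rintro ⟨G, H⟩
    ext i j <;> by_cases h : s(i, j) ∈ S <;> simp [splice_adj, h]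
  have hfS : ∀ G H, f (splice S G H) = f G := fun G H => hf <| by
    rintro ⟨i, j⟩ (he : s(i, j) ∈ S)
    simp [splice_adj, he]
  have hgS : ∀ G H, g (splice S G H) = g H := fun G H => hg <| by
    rintro ⟨i, j⟩ (he : s(i, j) ∈ T)
    simp [splice_adj, hST.notMem_of_mem_right he]
  calc expect p (fun G => f G * g G) = expect p (fun G => f G * g G) * expect p (fun _ => 1) := by
        rw [expect_const, mul_one]
    _ = ∑ x : SimpleGraph V × SimpleGraph V, weight p x.1 * weight p x.2 * (f x.1 * g x.1) := by
        rw [expect, expect, Finset.sum_mul_sum, Fintype.sum_prod_type]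
        exact Finset.sum_congr rfl fun _ _ => Finset.sum_congr rfl fun _ _ => by ring
    _ = ∑ x : SimpleGraph V × SimpleGraph V, weight p x.1 * weight p x.2 * (f x.1 * g x.2) := by
        rw [← Equiv.sum_comp (h_inv.toPerm _)]
        simp only [Function.Involutive.coe_toPerm, weight_splice_mul_weight_splice, hfS, hgS]
    _ = expect p f * expect p g := by
        rw [expect, expect, Finset.sum_mul_sum, Fintype.sum_prod_type]
        exact Finset.sum_congr rfl fun _ _ => Finset.sum_congr rfl fun _ _ => by ring

theorem expect_prod {ι : Type*} (U : Finset ι) {S : ι → Set (Sym2 V)}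
    (hS : (U : Set ι).PairwiseDisjoint S) {f : ι → SimpleGraph V → ℝ}
    (hf : ∀ a ∈ U, DependsOnEdges (S a) (f a)) :
    expect p (fun G => ∏ a ∈ U, f a G) = ∏ a ∈ U, expect p (f a) := by
  induction U using Finset.induction_on with
  | empty => simp [expect_const]
  | insert a U ha ih =>
    rw [Finset.coe_insert, Set.pairwiseDisjoint_insert_of_notMem (by simpa using ha)] at hS
    rw [Finset.forall_mem_insert] at hf
    have h_rest : DependsOnEdges (⋃ b ∈ U, S b) fun G => ∏ b ∈ U, f b G := fun G H hGH =>
      Finset.prod_congr rfl fun b hb => ((hf.2 b hb).mono (Set.subset_biUnion_of_mem hb)) hGH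
    simp_rw [Finset.prod_insert ha]
    rw [expect_mul_of_disjoint (Set.disjoint_iUnion₂_right.2 hS.2) hf.1 h_rest, ih hS.1 hf.2]

end Independence

section Neighbors

variable {V : Type*}

/-- The vertices of `U` adjacent to `F`. -/
def nbr (G : SimpleGraph V) (F U : Finset V) : Finset V :=
  U.filter fun j => ∃ i ∈ F, G.Adj i j

lemma mem_nbr {G : SimpleGraph V} {F U : Finset V} {j : V} :
    j ∈ nbr G F U ↔ j ∈ U ∧ ∃ i ∈ F, G.Adj i j :=
  Finset.mem_filter

lemma nbr_subset (G : SimpleGraph V) (F U : Finset V) : nbr G F U ⊆ U :=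
  Finset.filter_subset _ _

lemma nbr_dependsOnEdges (F U : Finset V) :
    DependsOnEdges {e | ∃ i ∈ F, ∃ j ∈ U, e = s(i, j)} fun G => nbr G F U := fun G H hGH => by
  ext j
  simp only [mem_nbr]
  exact and_congr_right fun hj => exists_congr fun i => and_congr_right fun hi =>
    hGH s(i, j) ⟨i, hi, j, hj, rfl⟩

variable [Fintype V] [LinearOrder V] {p : V → V → ℝ}

lemma prob_forall_not_adj (hp : ∀ i j, p i j = p j i) (F : Finset V) {j : V} (hj : j ∉ F) :
    prob p (fun G => ∀ i ∈ F, ¬ G.Adj i j) = ∏ i ∈ F, (1 - p i j) := by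
  have h_ind : ∀ G : SimpleGraph V, (if ∀ i ∈ F, ¬ G.Adj i j then (1 : ℝ) else 0) =
      ∏ i ∈ F, if G.Adj i j then 0 else 1 := fun G => by
    simp only [← ite_not (p := G.Adj _ j), Finset.prod_ite_zero, Finset.prod_const_one]
  simp_rw [prob_eq_expect, h_ind]
  rw [expect_prod F (S := fun i => {s(i, j)})]
  · refine Finset.prod_congr rfl fun i hi => ?_
    rw [expect_ite_adj hp (ne_of_mem_of_not_mem hi hj)]
    ring
  · intro a _ b _ hab
    exact Set.disjoint_singleton.2 (mt Sym2.congr_left.1 hab)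
  · intro i _ G H hGH
    have : G.Adj i j ↔ H.Adj i j := hGH s(i, j) rfl
    simp only [this]

theorem expect_prod_nbr (hp : ∀ i j, p i j = p j i) {F U : Finset V} (hFU : Disjoint F U)
    (a : V → ℝ) :
    expect p (fun G => ∏ j ∈ nbr G F U, a j) =
      ∏ j ∈ U, (∏ i ∈ F, (1 - p i j) + (1 - ∏ i ∈ F, (1 - p i j)) * a j) := by
  have hU : ∀ j ∈ U, j ∉ F := fun j hj hF => Finset.disjoint_left.1 hFU hF hj
  have h_factor : ∀ G : SimpleGraph V, ∏ j ∈ nbr G F U, a j =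
      ∏ j ∈ U, (a j + (if ∀ i ∈ F, ¬ G.Adj i j then 1 else 0) * (1 - a j)) := fun G => by
    rw [nbr, Finset.prod_filter]
    refine Finset.prod_congr rfl fun j _ => ?_
    by_cases h : ∀ i ∈ F, ¬ G.Adj i j
    · have h_adj : ¬ ∃ i ∈ F, G.Adj i j := by simpa using h
      rw [if_pos h, if_neg h_adj]
      ring
    · have h_adj : ∃ i ∈ F, G.Adj i j := by simpa using h
      rw [if_neg h, if_pos h_adj, zero_mul, add_zero]
  simp_rw [h_factor]
  rw [expect_prod U (S := fun j => {e | ∃ i ∈ F, e = s(i, j)})]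
  · refine Finset.prod_congr rfl fun j hj => ?_
    have h_prob : expect p (fun G => if ∀ i ∈ F, ¬ G.Adj i j then 1 else 0) =
        ∏ i ∈ F, (1 - p i j) := by
      rw [← prob_forall_not_adj hp F (hU j hj), prob_eq_expect]
    rw [expect_add, expect_mul_const, expect_const, h_prob]
    ring
  · intro a ha b hb hab
    rw [Function.onFun, Set.disjoint_left]
    rintro e ⟨i, -, rfl⟩ ⟨i', hi', h⟩
    rcases Sym2.eq_iff.1 h with ⟨-, rfl⟩ | ⟨-, rfl⟩
    exacts [hab rfl, hU _ ha hi']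
  · intro j _ G H hGH
    have : (∀ i ∈ F, ¬ G.Adj i j) ↔ ∀ i ∈ F, ¬ H.Adj i j :=
      forall₂_congr fun i hi => not_congr (hGH s(i, j) ⟨i, hi, rfl⟩)
    simp only [this]

/-- Conditionally on the neighbourhood of `F` in `U`, the edges in `T` keep their distribution. -/
theorem prob_nbr_le (hp : ∀ i j, p i j ∈ Set.Icc 0 1) {F U : Finset V} {T : Set (Sym2 V)}
    (hT : ∀ i ∈ F, ∀ j, s(i, j) ∉ T) {A : Finset V → SimpleGraph V → Prop}
    (hA : ∀ S ⊆ U, DependsOnEdges T (A S)) {v : Finset V → ℝ} (hv : ∀ S ⊆ U, prob p (A S) ≤ v S) :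
    prob p (fun G => A (nbr G F U) G) ≤ expect p fun G => v (nbr G F U) := by
  have h_split : ∀ (g : Finset V → ℝ) (G : SimpleGraph V), g (nbr G F U) =
      ∑ S ∈ U.powerset, (if nbr G F U = S then 1 else 0) * g S := fun g G => by
    rw [Finset.sum_eq_single (nbr G F U) (fun S _ hS => by simp [hS.symm])
      fun h => absurd (Finset.mem_powerset.2 (nbr_subset G F U)) h]
    simp
  rw [prob, funext (h_split v), funext fun G => h_split (fun S => if A S G then 1 else 0) G,
    expect_sum, expect_sum]
  refine Finset.sum_le_sum fun S hS => ?_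
  have hS := Finset.mem_powerset.1 hS
  have h_disj : Disjoint {e | ∃ i ∈ F, ∃ j ∈ U, e = s(i, j)} T := by
    rw [Set.disjoint_left]
    rintro _ ⟨i, hi, j, -, rfl⟩
    exact hT i hi j
  rw [expect_mul_const, expect_mul_of_disjoint h_disj
    ((nbr_dependsOnEdges F U).comp fun S' => if S' = S then (1 : ℝ) else 0)
    ((hA S hS).comp fun Q => if Q then (1 : ℝ) else 0)]
  rw [← prob_eq_expect fun G => nbr G F U = S, ← prob_eq_expect]
  exact mul_le_mul_of_nonneg_left (hv S hS) (prob_nonneg hp _)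

end Neighbors

section Exploration

variable {V : Type*}

/-- Total weight of the vertices of `F`. -/
def totalWeight (ω : V → ℝ) (F : Finset V) : ℝ :=
  ∑ i ∈ F, ω i

lemma totalWeight_empty (ω : V → ℝ) : totalWeight ω ∅ = 0 :=
  Finset.sum_empty

lemma totalWeight_singleton (ω : V → ℝ) (i : V) : totalWeight ω {i} = ω i :=
  Finset.sum_singleton _ _

lemma card_le_totalWeight {ω : V → ℝ} (hω : ∀ i, 1 ≤ ω i) (F : Finset V) :
    (F.card : ℝ) ≤ totalWeight ω F := by
  simpa [totalWeight] using F.card_nsmul_le_sum ω 1 fun i _ => hω i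

lemma one_le_totalWeight {ω : V → ℝ} (hω : ∀ i, 1 ≤ ω i) {F : Finset V} (hF : F.Nonempty) :
    1 ≤ totalWeight ω F :=
  le_trans (by exact_mod_cast hF.card_pos) (card_le_totalWeight hω F)

/-- The exploration neither died out nor built up a frontier of weight `B`. -/
def Stalled (ω : V → ℝ) (B : ℝ) (x : Finset V × Finset V) : Prop :=
  totalWeight ω x.1 < B ∧ x.1.Nonempty

lemma not_stalled_iff {ω : V → ℝ} {B : ℝ} {x : Finset V × Finset V} :
    ¬ Stalled ω B x ↔ B ≤ totalWeight ω x.1 ∨ x.1 = ∅ := by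
  rw [Stalled, not_and_or, not_lt, Finset.not_nonempty_iff_eq_empty]

variable [DecidableEq V]

/-- One generation of breadth-first exploration. A state `(F, U)` consists of the current frontier
`F` and the set `U` of vertices that are still undiscovered; the exploration stops for good once the
frontier has weight at least `B`. -/
def exploreStep (ω : V → ℝ) (B : ℝ) (G : SimpleGraph V) (x : Finset V × Finset V) :
    Finset V × Finset V :=
  if B ≤ totalWeight ω x.1 then x else (nbr G x.1 x.2, x.2 \ nbr G x.1 x.2)

/-- The state reached from `x` after `r` generations of exploration. -/
def explore (ω : V → ℝ) (B : ℝ) (G : SimpleGraph V) (r : ℕ) (x : Finset V × Finset V) :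
    Finset V × Finset V :=
  (exploreStep ω B G)^[r] x

variable {ω : V → ℝ} {B : ℝ} {G : SimpleGraph V} {x : Finset V × Finset V}

lemma explore_of_le (h : B ≤ totalWeight ω x.1) (r : ℕ) : explore ω B G r x = x :=
  Function.iterate_fixed (f := exploreStep ω B G) (if_pos h) r

lemma explore_succ_of_lt (h : totalWeight ω x.1 < B) (r : ℕ) :
    explore ω B G (r + 1) x = explore ω B G r (nbr G x.1 x.2, x.2 \ nbr G x.1 x.2) := by
  rw [explore, Function.iterate_succ_apply, exploreStep, if_neg h.not_ge, explore]

lemma explore_of_eq_empty (h : x.1 = ∅) (r : ℕ) : (explore ω B G r x).1 = ∅ := by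
  induction r generalizing x with
  | zero => exact h
  | succ r ih =>
    by_cases hB : B ≤ totalWeight ω x.1
    · rwa [explore_of_le hB]
    · rw [explore_succ_of_lt (not_le.1 hB)]
      exact ih (by simp [nbr, h])

variable {α : Type*}

theorem DependsOnEdges.explore {A : Finset V × Finset V → SimpleGraph V → α} {X : Finset V}
    (hA : ∀ x, DependsOnEdges (X ∪ (x.1 ∪ x.2)).sym2 (A x)) (r : ℕ) (x : Finset V × Finset V) :
    DependsOnEdges (X ∪ (x.1 ∪ x.2)).sym2 fun G => A (explore ω B G r x) G := by
  induction r generalizing x with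
  | zero => exact hA x
  | succ r ih =>
    by_cases hB : B ≤ totalWeight ω x.1
    · simpa only [explore_of_le hB] using hA x
    · simp only [explore_succ_of_lt (not_le.1 hB)]
      intro G H hGH
      have h_nbr : nbr G x.1 x.2 = nbr H x.1 x.2 := nbr_dependsOnEdges x.1 x.2 <| by
        rintro _ ⟨i, hi, j, hj, rfl⟩
        exact hGH _ (by simp [hi, hj])
      have h_sub : nbr H x.1 x.2 ∪ x.2 \ nbr H x.1 x.2 ⊆ x.1 ∪ x.2 := by
        rw [Finset.union_sdiff_of_subset (nbr_subset H x.1 x.2)]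
        exact Finset.subset_union_right
      beta_reduce
      rw [h_nbr]
      exact ih _ fun e he => hGH e (Finset.sym2_mono (Finset.union_subset_union_right h_sub) he)

end Exploration

section ExplorationProbability

variable {V : Type*} [DecidableEq V] {ω : V → ℝ} {M X : Finset V} {B K σ δ : ℝ}

/-- The states from which `r` more generations can be explored inside `M` while at most `K`
vertices of `M` get discovered. The vertices of `X` have to be avoided. -/
structure Admissible (M X : Finset V) (B K : ℝ) (r : ℕ) (x : Finset V × Finset V) : Prop where
  disjoint : Disjoint x.1 x.2
  disjoint_avoid : Disjoint (x.1 ∪ x.2) X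
  subset : x.2 ⊆ M
  card_le : ((M \ (x.1 ∪ x.2)).card : ℝ) + r * B ≤ K

namespace Admissible

variable {r : ℕ} {x : Finset V × Finset V}

lemma anti (h : Admissible M X B K r x) (hB : 0 ≤ B) {r' : ℕ} (hr : r' ≤ r) :
    Admissible M X B K r' x where
  __ := h
  card_le := h.card_le.trans' (by gcongr)

lemma card_sdiff_add_le (h : Admissible M X B K (r + 1) x) (hω : ∀ i, 1 ≤ ω i)
    (hB : totalWeight ω x.1 < B) : ((M \ x.2).card : ℝ) + r * B ≤ K := by
  have h_sub : M \ x.2 ⊆ (M \ (x.1 ∪ x.2)) ∪ x.1 := fun i => by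
    simp only [Finset.mem_sdiff, Finset.mem_union]
    tauto
  have h_card : ((M \ x.2).card : ℝ) ≤ (M \ (x.1 ∪ x.2)).card + x.1.card := by
    exact_mod_cast (Finset.card_le_card h_sub).trans (Finset.card_union_le _ _)
  have h_le := h.card_le
  push_cast at h_le
  linarith [card_le_totalWeight hω x.1]

lemma card_sdiff_le (h : Admissible M X B K (r + 1) x) (hω : ∀ i, 1 ≤ ω i) (hB₀ : 0 ≤ B)
    (hB : totalWeight ω x.1 < B) : ((M \ x.2).card : ℝ) ≤ K := by
  have h_add := h.card_sdiff_add_le hω hB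
  have h_nonneg : 0 ≤ r * B := mul_nonneg r.cast_nonneg hB₀
  linarith

lemma next (h : Admissible M X B K (r + 1) x) (hω : ∀ i, 1 ≤ ω i) (hB : totalWeight ω x.1 < B)
    {S : Finset V} (hS : S ⊆ x.2) : Admissible M X B K r (S, x.2 \ S) where
  disjoint := Finset.disjoint_sdiff
  disjoint_avoid := by
    rw [Finset.union_sdiff_of_subset hS]
    exact h.disjoint_avoid.mono_left Finset.subset_union_right
  subset := Finset.sdiff_subset.trans h.subset
  card_le := by
    rw [Finset.union_sdiff_of_subset hS]
    exact h.card_sdiff_add_le hω hB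

end Admissible

end ExplorationProbability

section Supercritical

variable {V : Type*} [Fintype V] [LinearOrder V] {p : V → V → ℝ} {ω : V → ℝ} {M X : Finset V}
  {B K σ δ : ℝ}

/-- As long as fewer than `K` vertices of `M` have been discovered, every generation of weight below
`B` is followed by one that is larger by the factor `1 + δ`, in the sense of Laplace transforms at
all `s ≤ σ`. -/
structure Supercritical (p : V → V → ℝ) (ω : V → ℝ) (M : Finset V) (B K σ δ : ℝ) : Prop where
  mem_Icc : ∀ i j, p i j ∈ Set.Icc 0 1
  one_le : ∀ i, 1 ≤ ω i
  B_pos : 0 < B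
  σ_pos : 0 < σ
  δ_pos : 0 < δ
  laplace_le : ∀ {F U : Finset V} {s : ℝ}, F.Nonempty → Disjoint F U → U ⊆ M →
    totalWeight ω F < B → ((M \ U).card : ℝ) ≤ K → 0 ≤ s → s ≤ σ →
      expect p (fun G => Real.exp (-(s * totalWeight ω (nbr G F U)))) ≤
        Real.exp (-(s * (1 + δ) * totalWeight ω F))

namespace Supercritical

variable (hS : Supercritical p ω M B K σ δ)
include hS

theorem prob_explore_succ_le {A : Finset V × Finset V → SimpleGraph V → Prop}
    (hA : ∀ x, DependsOnEdges (X ∪ (x.1 ∪ x.2)).sym2 (A x)) {v : Finset V → ℝ} {L : ℝ} {r : ℕ}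
    {x : Finset V × Finset V} (hx : Admissible M X B L (r + 1) x) (hB : totalWeight ω x.1 < B)
    (hv : ∀ y, Admissible M X B L r y → prob p (fun G => A (explore ω B G r y) G) ≤ v y.1) :
    prob p (fun G => A (explore ω B G (r + 1) x) G) ≤ expect p fun G => v (nbr G x.1 x.2) := by
  simp only [explore_succ_of_lt hB]
  have hX : Disjoint x.1 (X ∪ x.2) := Finset.disjoint_union_right.2
    ⟨hx.disjoint_avoid.mono_left Finset.subset_union_left, hx.disjoint⟩
  refine prob_nbr_le hS.mem_Icc (T := (X ∪ x.2).sym2)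
    (A := fun S G => A (explore ω B G r (S, x.2 \ S)) G)
    (fun i hi j hij => Finset.disjoint_left.1 hX hi (Finset.mk_mem_sym2_iff.1 hij).1)
    (fun S hSU => ?_) fun S hSU => hv _ (hx.next hS.one_le hB hSU)
  simpa only [Finset.union_sdiff_of_subset hSU] using DependsOnEdges.explore hA r (S, x.2 \ S)

theorem prob_reached_and_le {A : Finset V × Finset V → SimpleGraph V → Prop}
    (hA : ∀ x, DependsOnEdges (X ∪ (x.1 ∪ x.2)).sym2 (A x)) {L ε : ℝ} (hε : 0 ≤ ε)
    (hAε : ∀ y, Admissible M X B L 0 y → B ≤ totalWeight ω y.1 → prob p (A y) ≤ ε) {r : ℕ}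
    {x : Finset V × Finset V} (hx : Admissible M X B L r x) :
    prob p (fun G => B ≤ totalWeight ω (explore ω B G r x).1 ∧ A (explore ω B G r x) G) ≤ ε := by
  have h_reached : ∀ r x, Admissible M X B L r x → B ≤ totalWeight ω x.1 →
      prob p (fun G => B ≤ totalWeight ω (explore ω B G r x).1 ∧ A (explore ω B G r x) G) ≤ ε :=
    fun r x hx hB => by
      simpa only [explore_of_le hB, hB, true_and] using hAε x (hx.anti hS.B_pos.le r.zero_le) hB
  induction r generalizing x with
  | zero =>
    by_cases hB : B ≤ totalWeight ω x.1
    · exact h_reached 0 x hx hB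
    · simpa [explore, hB, prob_const] using hε
  | succ r ih =>
    by_cases hB : B ≤ totalWeight ω x.1
    · exact h_reached _ x hx hB
    · have h_dep : ∀ x, DependsOnEdges (X ∪ (x.1 ∪ x.2)).sym2 fun G =>
          B ≤ totalWeight ω x.1 ∧ A x G := fun x => (hA x).comp fun Q => B ≤ totalWeight ω x.1 ∧ Q
      refine (hS.prob_explore_succ_le h_dep hx (not_le.1 hB) (v := fun _ => ε)
        fun y hy => ih hy).trans_eq ?_
      exact expect_const p ε

lemma prob_stalled_succ_le {L a s : ℝ} (hL : L ≤ K) (ha : 0 ≤ a) (hs : 0 ≤ s) (hsσ : s ≤ σ) {r : ℕ}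
    (ih : ∀ y, Admissible M X B L r y →
      prob p (fun G => Stalled ω B (explore ω B G r y)) ≤ a * Real.exp (-(s * totalWeight ω y.1)))
    {x : Finset V × Finset V} (hx : Admissible M X B L (r + 1) x) (h_ne : x.1.Nonempty) :
    prob p (fun G => Stalled ω B (explore ω B G (r + 1) x)) ≤
      a * Real.exp (-(s * (1 + δ) * totalWeight ω x.1)) := by
  by_cases hB : B ≤ totalWeight ω x.1
  · simp only [explore_of_le hB, Stalled, hB.not_gt, false_and, prob_const, if_false]
    positivity
  rw [not_le] at hB
  have h_card := (hx.card_sdiff_le hS.one_le hS.B_pos.le hB).trans hL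
  calc prob p (fun G => Stalled ω B (explore ω B G (r + 1) x))
      ≤ expect p fun G => a * Real.exp (-(s * totalWeight ω (nbr G x.1 x.2))) :=
        hS.prob_explore_succ_le (A := fun x _ => Stalled ω B x)
          (v := fun S => a * Real.exp (-(s * totalWeight ω S))) (fun _ _ _ _ => rfl) hx hB ih
    _ = a * expect p fun G => Real.exp (-(s * totalWeight ω (nbr G x.1 x.2))) := by
        simp_rw [mul_comm a, expect_mul_const]
    _ ≤ a * Real.exp (-(s * (1 + δ) * totalWeight ω x.1)) := by
        gcongr
        exact hS.laplace_le h_ne hx.disjoint hx.subset hB h_card hs hsσ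

omit hS in
lemma prob_stalled_of_empty {x : Finset V × Finset V} (h : x.1 = ∅) (r : ℕ) :
    prob p (fun G => Stalled ω B (explore ω B G r x)) = 0 := by
  simp [Stalled, explore_of_eq_empty h, prob_const]

lemma prob_stalled_le_of_mul_le_one {L s : ℝ} (hL : L ≤ K) (hs : 0 ≤ s) (hsB : s * B ≤ 1) {r : ℕ}
    (hr : s * (1 + δ) ^ r ≤ σ) {x : Finset V × Finset V} (hx : Admissible M X B L r x) :
    prob p (fun G => Stalled ω B (explore ω B G r x)) ≤
      Real.exp 1 * Real.exp (-(s * (1 + δ) ^ r * totalWeight ω x.1)) := by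
  have hδ := hS.δ_pos
  induction r generalizing x with
  | zero =>
    by_cases hB : B ≤ totalWeight ω x.1
    · simp only [explore_of_le hB, Stalled, hB.not_gt, false_and, prob_const, if_false]
      positivity
    · refine (prob_le_one hS.mem_Icc _).trans ?_
      rw [← Real.exp_add, Real.one_le_exp_iff, pow_zero, mul_one]
      have := mul_le_mul_of_nonneg_left (not_le.1 hB).le hs
      linarith
  | succ r ih =>
    rcases x.1.eq_empty_or_nonempty with h | h_ne
    · rw [prob_stalled_of_empty h]
      positivity
    · have hr' : s * (1 + δ) ^ r ≤ σ := hr.trans' <| by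
        gcongr
        exacts [by linarith, by lia]
      rw [pow_succ, ← mul_assoc]
      exact hS.prob_stalled_succ_le hL (Real.exp_pos 1).le (by positivity) hr'
        (fun y hy => ih hr' hy) hx h_ne

/-- The frontier must first grow from weight `1` to weight `B`, which takes `m` generations; each
generation after that gains a further factor `exp (-σ * δ)`. -/
theorem prob_stalled_le {L : ℝ} (hL : L ≤ K) {m : ℕ} (hm : σ * B ≤ (1 + δ) ^ m) (k : ℕ)
    {x : Finset V × Finset V} (hx : Admissible M X B L (m + k) x) :
    prob p (fun G => Stalled ω B (explore ω B G (m + k) x)) ≤ Real.exp (1 - σ * δ * k) := by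
  have hσ := hS.σ_pos
  have hδ := hS.δ_pos
  have h_decay : ∀ x, Admissible M X B L (m + k) x →
      prob p (fun G => Stalled ω B (explore ω B G (m + k) x)) ≤
        Real.exp (1 - σ * δ * k) * Real.exp (-(σ * totalWeight ω x.1)) := by
    clear hx
    induction k with
    | zero =>
      intro x hx
      have h_grow := hS.prob_stalled_le_of_mul_le_one hL (s := σ / (1 + δ) ^ m) (by positivity)
        (by rwa [div_mul_eq_mul_div, div_le_one (by positivity)])
        (r := m) (by rw [div_mul_cancel₀ _ (by positivity)]) hx
      rw [div_mul_cancel₀ _ (by positivity)] at h_grow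
      simpa using h_grow
    | succ k ih =>
      intro x hx
      rcases x.1.eq_empty_or_nonempty with h | h_ne
      · rw [prob_stalled_of_empty h]
        positivity
      · refine (hS.prob_stalled_succ_le hL (Real.exp_pos _).le hσ.le le_rfl ih hx h_ne).trans ?_
        rw [← Real.exp_add, ← Real.exp_add, Real.exp_le_exp]
        have := mul_le_mul_of_nonneg_left (one_le_totalWeight hS.one_le h_ne) (mul_pos hσ hδ).le
        push_cast
        linarith
  refine (h_decay x hx).trans (mul_le_of_le_one_right (Real.exp_pos _).le ?_)
  rw [Real.exp_le_one_iff, neg_nonpos]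
  exact mul_nonneg hσ.le ((Nat.cast_nonneg _).trans (card_le_totalWeight hS.one_le _))

theorem prob_extinct_le {L : ℝ} (hL : L ≤ K) {r : ℕ} {x : Finset V × Finset V}
    (hx : Admissible M X B L r x) :
    prob p (fun G => (explore ω B G r x).1 = ∅) ≤ Real.exp (-(σ * totalWeight ω x.1)) := by
  have hσ := hS.σ_pos
  have h_empty : ∀ x : Finset V × Finset V,
      prob p (fun _ => x.1 = ∅) ≤ Real.exp (-(σ * totalWeight ω x.1)) := fun x => by
    rw [prob_const]
    split_ifs with h
    · simp [h, totalWeight_empty]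
    · positivity
  induction r generalizing x with
  | zero => exact h_empty x
  | succ r ih =>
    by_cases hB : B ≤ totalWeight ω x.1
    · simpa only [explore_of_le hB] using h_empty x
    rw [not_le] at hB
    rcases x.1.eq_empty_or_nonempty with h | h_ne
    · simpa [h, totalWeight_empty] using prob_le_one hS.mem_Icc _
    have h_card := (hx.card_sdiff_le hS.one_le hS.B_pos.le hB).trans hL
    calc prob p (fun G => (explore ω B G (r + 1) x).1 = ∅)
        ≤ expect p fun G => Real.exp (-(σ * totalWeight ω (nbr G x.1 x.2))) :=
          hS.prob_explore_succ_le (A := fun x _ => x.1 = ∅)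
            (v := fun S => Real.exp (-(σ * totalWeight ω S))) (fun _ _ _ _ => rfl) hx hB
            fun y hy => ih hy
      _ ≤ Real.exp (-(σ * (1 + δ) * totalWeight ω x.1)) :=
          hS.laplace_le h_ne hx.disjoint hx.subset hB h_card hσ.le le_rfl
      _ ≤ Real.exp (-(σ * totalWeight ω x.1)) := by
          have := mul_pos (mul_pos hσ hS.δ_pos)
            (one_pos.trans_le (one_le_totalWeight hS.one_le h_ne))
          rw [Real.exp_le_exp]
          linarith

end Supercritical

end Supercritical

section Pairs

variable {V : Type*} [DecidableEq V]

/-- The exploration started from `s`, inside `M` and avoiding `s'`. -/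
def exploreFirst (ω : V → ℝ) (M : Finset V) (B : ℝ) (r : ℕ) (s s' : V) (G : SimpleGraph V) :
    Finset V × Finset V :=
  explore ω B G r ({s}, M \ {s, s'})

/-- The exploration started from `s'` among the vertices left undiscovered by the exploration
from `s`. -/
def exploreSecond (ω : V → ℝ) (M : Finset V) (B : ℝ) (r : ℕ) (s s' : V) (G : SimpleGraph V) :
    Finset V × Finset V :=
  explore ω B G r ({s'}, (exploreFirst ω M B r s s' G).2)

/-- The exploration from `s` ends with a frontier of weight at least `B` that has at most `k`
vertices. -/
def FirstReaches (ω : V → ℝ) (M : Finset V) (B k : ℝ) (r : ℕ) (s s' : V) (G : SimpleGraph V) :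
    Prop :=
  B ≤ totalWeight ω (exploreFirst ω M B r s s' G).1 ∧
    ((exploreFirst ω M B r s s' G).1.card : ℝ) ≤ k

/-- One of the two explorations is neither dead nor large after `r` generations, or both are large
but their frontiers are not adjacent. -/
def PairStalls (ω : V → ℝ) (M : Finset V) (B k : ℝ) (r : ℕ) (s s' : V) (G : SimpleGraph V) :
    Prop :=
  Stalled ω B (exploreFirst ω M B r s s' G) ∨
    FirstReaches ω M B k r s s' G ∧ (Stalled ω B (exploreSecond ω M B r s s' G) ∨
      B ≤ totalWeight ω (exploreSecond ω M B r s s' G).1 ∧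
        ∀ i ∈ (exploreFirst ω M B r s s' G).1, ∀ j ∈ (exploreSecond ω M B r s s' G).1, ¬ G.Adj i j)

/-- One of the two explorations dies out. -/
def PairDies (ω : V → ℝ) (M : Finset V) (B k : ℝ) (r : ℕ) (s s' : V) (G : SimpleGraph V) : Prop :=
  (exploreFirst ω M B r s s' G).1 = ∅ ∨
    FirstReaches ω M B k r s s' G ∧ (exploreSecond ω M B r s s' G).1 = ∅

variable {ω : V → ℝ} {M : Finset V} {B K L k : ℝ} {r : ℕ} {s s' : V}

lemma admissible_first (hss' : s ≠ s') (hL : 1 + r * B ≤ L) :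
    Admissible M {s'} B L r ({s}, M \ {s, s'}) where
  disjoint := by simp
  disjoint_avoid := by simpa using hss'.symm
  subset := Finset.sdiff_subset
  card_le := by
    have h_sub : M \ ({s} ∪ M \ {s, s'}) ⊆ {s'} := fun i => by
      simp only [Finset.mem_sdiff, Finset.mem_union, Finset.mem_singleton, Finset.mem_insert]
      tauto
    have h_card : ((M \ ({s} ∪ M \ {s, s'})).card : ℝ) ≤ 1 := by
      exact_mod_cast Finset.card_le_card h_sub
    linarith

lemma Admissible.second {y : Finset V × Finset V} (hy : Admissible M {s'} B L 0 y)
    (hyk : (y.1.card : ℝ) ≤ k) (hK : L + k + r * B ≤ K) :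
    Admissible M y.1 B K r ({s'}, y.2) where
  disjoint := (hy.disjoint_avoid.mono_left Finset.subset_union_right).symm
  disjoint_avoid := Finset.disjoint_union_left.2
    ⟨(hy.disjoint_avoid.mono_left Finset.subset_union_left).symm, hy.disjoint.symm⟩
  subset := hy.subset
  card_le := by
    have h_sub : M \ ({s'} ∪ y.2) ⊆ M \ (y.1 ∪ y.2) ∪ y.1 := fun i => by
      simp only [Finset.mem_sdiff, Finset.mem_union]
      tauto
    have h_card : ((M \ ({s'} ∪ y.2)).card : ℝ) ≤ (M \ (y.1 ∪ y.2)).card + y.1.card := by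
      exact_mod_cast (Finset.card_le_card h_sub).trans (Finset.card_union_le _ _)
    have h_le := hy.card_le
    rw [Nat.cast_zero, zero_mul] at h_le
    linarith

end Pairs

namespace Supercritical

variable {V : Type*} [Fintype V] [LinearOrder V] {p : V → V → ℝ} {ω : V → ℝ} {M : Finset V}
  {B K L σ δ ε k : ℝ} {r m n : ℕ} {s s' : V}

theorem prob_firstReaches_and_le (hS : Supercritical p ω M B K σ δ) (hss' : s ≠ s')
    (hL : 1 + r * B ≤ L) (hK : L + k + r * B ≤ K)
    {A : Finset V → Finset V × Finset V → SimpleGraph V → Prop}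
    (hA : ∀ F x, DependsOnEdges (F ∪ (x.1 ∪ x.2)).sym2 (A F x)) (hε : 0 ≤ ε)
    (hAε : ∀ F x, B ≤ totalWeight ω F → x.1 = {s'} → Admissible M F B K r x →
      prob p (fun G => A F (explore ω B G r x) G) ≤ ε) :
    prob p (fun G => FirstReaches ω M B k r s s' G ∧
      A (exploreFirst ω M B r s s' G).1 (exploreSecond ω M B r s s' G) G) ≤ ε := by
  have h_dep : ∀ y : Finset V × Finset V, DependsOnEdges ({s'} ∪ (y.1 ∪ y.2)).sym2 fun G =>
      (y.1.card : ℝ) ≤ k ∧ A y.1 (explore ω B G r ({s'}, y.2)) G := fun y => by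
    rw [Finset.union_left_comm]
    exact (DependsOnEdges.explore (hA y.1) r ({s'}, y.2)).comp fun Q => (y.1.card : ℝ) ≤ k ∧ Q
  refine (prob_mono hS.mem_Icc fun G h => ?_).trans <| hS.prob_reached_and_le h_dep hε
    (fun y hy hB => ?_) (admissible_first hss' hL)
  · exact ⟨h.1.1, h.1.2, h.2⟩
  · by_cases hyk : (y.1.card : ℝ) ≤ k
    · simpa only [hyk, true_and] using hAε y.1 _ hB rfl (hy.second hyk hK)
    · simpa only [hyk, false_and, prob_const, if_false] using hε

theorem prob_pairStalls_le (hS : Supercritical p ω M B K σ δ) (hss' : s ≠ s') (hε : 0 ≤ ε)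
    (hk : 0 ≤ k) (hm : σ * B ≤ (1 + δ) ^ m) (hL : 1 + (m + n : ℕ) * B ≤ L)
    (hK : L + k + (m + n : ℕ) * B ≤ K)
    (h_link : ∀ E F, Disjoint E F → B ≤ totalWeight ω E → B ≤ totalWeight ω F →
      prob p (fun G => ∀ i ∈ E, ∀ j ∈ F, ¬ G.Adj i j) ≤ ε) :
    prob p (PairStalls ω M B k (m + n) s s') ≤ ε + 2 * Real.exp (1 - σ * δ * n) := by
  have hrB : 0 ≤ (m + n : ℕ) * B := mul_nonneg (Nat.cast_nonneg _) hS.B_pos.le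
  have h_first : prob p (fun G => Stalled ω B (exploreFirst ω M B (m + n) s s' G)) ≤
      Real.exp (1 - σ * δ * n) :=
    hS.prob_stalled_le (by linarith) hm n (admissible_first hss' hL)
  have h_second := hS.prob_firstReaches_and_le hss' hL hK
    (A := fun _ x _ => Stalled ω B x) (fun _ _ _ _ _ => rfl) (Real.exp_pos (1 - σ * δ * n)).le
    fun F x _ _ hx => hS.prob_stalled_le le_rfl hm n hx
  have h_adj := hS.prob_firstReaches_and_le hss' hL hK (ε := ε)
    (A := fun F x G => B ≤ totalWeight ω x.1 ∧ ∀ i ∈ F, ∀ j ∈ x.1, ¬ G.Adj i j)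
    (fun F x G H hGH => by
      simp only [eq_iff_iff]
      refine and_congr_right fun _ => forall₂_congr fun i hi => forall₂_congr fun j hj =>
        not_congr (hGH s(i, j) ?_)
      simp [hi, hj]) hε
    fun F x hF _ hx => hS.prob_reached_and_le (fun x G H hGH => by
      simp only [eq_iff_iff]
      refine forall₂_congr fun i hi => forall₂_congr fun j hj => not_congr (hGH s(i, j) ?_)
      simp [hi, hj]) hε (fun y hy hB => h_link F y.1
        (hy.disjoint_avoid.mono_left Finset.subset_union_left).symm hF hB) hx
  calc prob p (PairStalls ω M B k (m + n) s s')
      ≤ _ := prob_mono hS.mem_Icc fun G h => by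
        rwa [PairStalls, and_or_left] at h
    _ ≤ _ := prob_or_le hS.mem_Icc _ _
    _ ≤ _ := add_le_add h_first
        ((prob_or_le hS.mem_Icc _ _).trans (add_le_add h_second h_adj))
    _ = _ := by ring

theorem prob_pairDies_le (hS : Supercritical p ω M B K σ δ) (hss' : s ≠ s') (hk : 0 ≤ k)
    (hL : 1 + r * B ≤ L) (hK : L + k + r * B ≤ K) :
    prob p (PairDies ω M B k r s s') ≤ Real.exp (-(σ * ω s)) + Real.exp (-(σ * ω s')) := by
  have hrB : 0 ≤ r * B := mul_nonneg (Nat.cast_nonneg _) hS.B_pos.le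
  have h_first := hS.prob_extinct_le (by linarith) (admissible_first (M := M) hss' hL)
  have h_second := hS.prob_firstReaches_and_le hss' hL hK (A := fun _ x _ => x.1 = ∅)
    (fun _ _ _ _ _ => rfl) (Real.exp_pos (-(σ * ω s'))).le fun F x _ hx₁ hx => by
      simpa only [hx₁, totalWeight_singleton] using hS.prob_extinct_le le_rfl hx
  rw [totalWeight_singleton] at h_first
  exact (prob_or_le hS.mem_Icc _ _).trans (add_le_add h_first h_second)

end Supercritical

section EdgesMeeting

variable {V : Type*} {G : SimpleGraph V} {M : Finset V}

/-- The subgraph of `G` formed by the edges with at least one endpoint in `M`. -/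
def edgesMeeting (G : SimpleGraph V) (M : Finset V) : SimpleGraph V where
  Adj i j := G.Adj i j ∧ (i ∈ M ∨ j ∈ M)
  symm := ⟨fun _ _ h => ⟨h.1.symm, h.2.symm⟩⟩
  loopless := ⟨fun i h => G.loopless.irrefl i h.1⟩

lemma edgesMeeting_le : edgesMeeting G M ≤ G :=
  fun _ _ h => h.1

/-- `s` and `t` are joined by a path of edges meeting `M` whose interior vertices lie in `M`. -/
def ConnectedThrough (G : SimpleGraph V) (M : Finset V) (s t : V) : Prop :=
  ∃ w : (edgesMeeting G M).Walk s t, ∀ v ∈ w.support, v ∈ M ∨ v = s ∨ v = t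

lemma ConnectedThrough.refl (s : V) : ConnectedThrough G M s s :=
  ⟨.nil, by simp⟩

lemma ConnectedThrough.symm {s t : V} (h : ConnectedThrough G M s t) :
    ConnectedThrough G M t s := by
  obtain ⟨w, hw⟩ := h
  refine ⟨w.reverse, fun v hv => (hw v ?_).imp_right Or.symm⟩
  simpa using hv

lemma ConnectedThrough.cons {s u t : V} (hs : s ∈ M) (hu : u ∈ M) (hsu : G.Adj s u)
    (h : ConnectedThrough G M u t) : ConnectedThrough G M s t := by
  obtain ⟨w, hw⟩ := h
  refine ⟨.cons ⟨hsu, Or.inl hs⟩ w, fun v hv => ?_⟩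
  rcases List.mem_cons.1 (SimpleGraph.Walk.support_cons _ w ▸ hv) with rfl | hv
  · exact Or.inl hs
  · rcases hw v hv with h | rfl | rfl
    exacts [Or.inl h, Or.inl hu, Or.inr (Or.inr rfl)]

lemma connectedThrough_or_exists_notMem {s t : V} (w : G.Walk s t) :
    ConnectedThrough G M s t ∨ ∃ a ∉ M, ConnectedThrough G M s a := by
  induction w with
  | nil => exact Or.inl (.refl _)
  | @cons s u t hsu _ ih =>
    by_cases hs : s ∈ M
    · by_cases hu : u ∈ M
      · exact ih.imp (.cons hs hu hsu) fun ⟨a, ha, h⟩ => ⟨a, ha, h.cons hs hu hsu⟩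
      · have h_adj : (edgesMeeting G M).Adj s u := ⟨hsu, Or.inl hs⟩
        exact Or.inr ⟨u, hu, h_adj.toWalk, by simp⟩
    · exact Or.inr ⟨s, hs, .refl s⟩

lemma ConnectedThrough.exists_boundary {s s' : V}
    (h : ConnectedThrough G M s s') (C : Set V) (hs : s ∈ C) (hs' : s' ∉ C) :
    ∃ i j, (edgesMeeting G M).Adj i j ∧ i ∈ C ∧ j ∉ C ∧ (j ∈ M ∨ j = s') := by
  obtain ⟨w, hw⟩ := h
  obtain ⟨d, hd, hd₁, hd₂⟩ := w.exists_boundary_dart C hs hs'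
  refine ⟨d.fst, d.snd, d.adj, hd₁, hd₂, ?_⟩
  rcases hw _ (w.dart_snd_mem_support_of_mem_darts hd) with h | h | h
  exacts [Or.inl h, absurd (h ▸ hs) hd₂, Or.inr h]

lemma edist_le_of_adj {H : SimpleGraph V} {s s' v v' : V} {r r' : ℕ} (h : H.edist s v ≤ r)
    (hvv' : H.Adj v v') (h' : H.edist s' v' ≤ r') : H.edist s s' ≤ (r + 1 + r' : ℕ) := by
  have h_one := (SimpleGraph.edist_eq_one_iff_adj.2 hvv').le
  rw [SimpleGraph.edist_comm] at h'
  push_cast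
  exact (SimpleGraph.edist_triangle.trans (add_le_add SimpleGraph.edist_triangle le_rfl)).trans
    (add_le_add (add_le_add h h_one) h')

theorem edist_edgesMeeting_le {l : ℕ}
    (h_conn : ∀ s s', ConnectedThrough G M s s' → (edgesMeeting G M).edist s s' ≤ l)
    (h_notMem : ∀ s s', s ∉ M → s' ∉ M → (edgesMeeting G M).edist s s' ≤ l) {s t : V}
    (h : G.Reachable s t) : (edgesMeeting G M).edist s t ≤ (3 * l : ℕ) := by
  obtain ⟨w⟩ := h
  have h_le : ∀ {s t : V}, ConnectedThrough G M s t → (edgesMeeting G M).edist s t ≤ (3 * l : ℕ) :=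
    fun h => (h_conn _ _ h).trans (by exact_mod_cast (by lia : l ≤ 3 * l))
  rcases connectedThrough_or_exists_notMem (M := M) w with h | ⟨a, ha, hsa⟩
  · exact h_le h
  rcases connectedThrough_or_exists_notMem (M := M) w.reverse with h | ⟨b, hb, htb⟩
  · exact h_le h.symm
  have h_triangle : (edgesMeeting G M).edist s t ≤ l + l + l :=
    SimpleGraph.edist_triangle.trans <| add_le_add (SimpleGraph.edist_triangle.trans
      (add_le_add (h_conn s a hsa) (h_notMem a b ha hb))) (h_conn b t htb.symm)
  exact h_triangle.trans_eq (by push_cast; ring)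

lemma card_le_mul_totalWeight [Fintype V] {ω : V → ℝ} {F F' : Finset V} {D : ℝ}
    (hD : ∀ i, (G.degree i : ℝ) ≤ D * ω i) (h : ∀ j ∈ F', ∃ i ∈ F, G.Adj i j) :
    (F'.card : ℝ) ≤ D * totalWeight ω F := by
  have h_sub : F' ⊆ F.biUnion fun i => G.neighborFinset i := fun j hj => by simpa using h j hj
  have h_card : F'.card ≤ ∑ i ∈ F, G.degree i :=
    (Finset.card_le_card h_sub).trans Finset.card_biUnion_le
  calc (F'.card : ℝ) ≤ ∑ i ∈ F, (G.degree i : ℝ) := by exact_mod_cast h_card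
    _ ≤ ∑ i ∈ F, D * ω i := Finset.sum_le_sum fun i _ => hD i
    _ = _ := by rw [totalWeight, Finset.mul_sum]

end EdgesMeeting

section Explored

variable {V : Type*} [DecidableEq V] {ω : V → ℝ} {B : ℝ} {G : SimpleGraph V} {M : Finset V}

lemma explore_induction {x : Finset V × Finset V} {P : ℕ → Finset V × Finset V → Prop} (h₀ : P 0 x)
    (h_stop : ∀ r y, P r y → P (r + 1) y)
    (h_step : ∀ r y, totalWeight ω y.1 < B → P r y → P (r + 1) (nbr G y.1 y.2, y.2 \ nbr G y.1 y.2))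
    (r : ℕ) : P r (explore ω B G r x) := by
  induction r with
  | zero => exact h₀
  | succ r ih =>
    rw [explore, Function.iterate_succ_apply', ← explore]
    by_cases hB : B ≤ totalWeight ω (explore ω B G r x).1
    · rw [exploreStep, if_pos hB]
      exact h_stop r _ ih
    · rw [exploreStep, if_neg hB]
      exact h_step r _ (not_le.1 hB) ih

variable (x : Finset V × Finset V) (r : ℕ)

lemma explore_snd_subset : (explore ω B G r x).2 ⊆ x.2 :=
  explore_induction (P := fun _ y => y.2 ⊆ x.2) (Finset.Subset.refl _) (fun _ _ h => h)
    (fun _ _ _ h => Finset.sdiff_subset.trans h) r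

variable {x}

lemma explore_fst_subset (hx : Disjoint x.1 x.2) :
    (explore ω B G r x).1 ⊆ (x.1 ∪ x.2) \ (explore ω B G r x).2 := by
  refine explore_induction (P := fun _ y => y.1 ⊆ (x.1 ∪ x.2) \ y.2 ∧ y.2 ⊆ x.2) ⟨?_, le_rfl⟩
    (fun _ _ h => h) (fun _ y _ h => ⟨fun i hi => ?_, Finset.sdiff_subset.trans h.2⟩) r |>.1
  · exact fun i hi => Finset.mem_sdiff.2
      ⟨Finset.mem_union_left _ hi, Finset.disjoint_left.1 hx hi⟩
  · exact Finset.mem_sdiff.2 ⟨Finset.mem_union_right _ (h.2 (nbr_subset G y.1 y.2 hi)),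
      fun h => (Finset.mem_sdiff.1 h).2 hi⟩

lemma not_adj_explore_snd {i j : V} (hi : i ∈ x.1 ∪ x.2)
    (hi' : i ∉ (explore ω B G r x).1 ∪ (explore ω B G r x).2) (hj : j ∈ (explore ω B G r x).2) :
    ¬ G.Adj i j := by
  refine explore_induction (x := x)
    (P := fun _ y => i ∉ y.1 ∪ y.2 → j ∈ y.2 → ¬ G.Adj i j) (fun h => absurd hi h)
    (fun _ _ h => h) (fun _ y _ h hi' hj hij => ?_) r hi' hj
  rw [Finset.union_sdiff_of_subset (nbr_subset G y.1 y.2)] at hi'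
  rw [Finset.mem_sdiff, mem_nbr] at hj
  by_cases hiy : i ∈ y.1
  · exact hj.2 ⟨hj.1, i, hiy, hij⟩
  · exact h (by simp [hiy, hi']) hj.1 hij

lemma exists_edist_explored_le (hx : x.2 ⊆ M) {i : V} (hi : i ∈ x.1 ∪ x.2)
    (hi' : i ∉ (explore ω B G r x).2) : ∃ a ∈ x.1, (edgesMeeting G M).edist a i ≤ r := by
  have h_mono : ∀ {r : ℕ} {i : V}, (∃ a ∈ x.1, (edgesMeeting G M).edist a i ≤ r) →
      ∃ a ∈ x.1, (edgesMeeting G M).edist a i ≤ (r + 1 : ℕ) := fun ⟨a, ha, h⟩ =>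
    ⟨a, ha, h.trans (by exact_mod_cast Nat.le_succ _)⟩
  have h_inv := explore_induction (ω := ω) (B := B) (G := G) (x := x) (P := fun r y =>
      y.2 ⊆ x.2 ∧
        (∀ i ∈ y.1, ∃ a ∈ x.1, (edgesMeeting G M).edist a i ≤ r) ∧
        ∀ i ∈ x.1 ∪ x.2, i ∉ y.2 → ∃ a ∈ x.1, (edgesMeeting G M).edist a i ≤ r)
    ⟨le_rfl, fun i hi => ⟨i, hi, by simp⟩, fun i hi hi' =>
      ⟨i, (Finset.mem_union.1 hi).resolve_right hi', by simp⟩⟩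
    (fun r y h => ⟨h.1, fun i hi => h_mono (h.2.1 i hi), fun i hi hi' => h_mono (h.2.2 i hi hi')⟩)
    (fun r y _ h => ?_) r
  · exact h_inv.2.2 i hi hi'
  obtain ⟨h_snd, h_fst, h_seen⟩ := h
  have h_nbr : ∀ i ∈ nbr G y.1 y.2, ∃ a ∈ x.1, (edgesMeeting G M).edist a i ≤ (r + 1 : ℕ) := by
    intro i hi
    obtain ⟨hiy, j, hj, hji⟩ := mem_nbr.1 hi
    obtain ⟨a, ha, haj⟩ := h_fst j hj
    have h_adj : (edgesMeeting G M).Adj j i := ⟨hji, Or.inr (hx (h_snd hiy))⟩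
    exact ⟨a, ha, edist_le_of_adj (r' := 0) haj h_adj (by simp)⟩
  refine ⟨Finset.sdiff_subset.trans h_snd, h_nbr, fun i hi hi' => ?_⟩
  by_cases hiy : i ∈ y.2
  · exact h_nbr i (by_contra fun h => hi' (Finset.mem_sdiff.2 ⟨hiy, h⟩))
  · exact h_mono (h_seen i hi hiy)

lemma exists_previous_frontier (hx : totalWeight ω x.1 < B)
    (h : B ≤ totalWeight ω (explore ω B G r x).1) :
    (explore ω B G r x).1 ⊆ x.2 ∧ ∃ F, totalWeight ω F < B ∧
      ∀ j ∈ (explore ω B G r x).1, ∃ i ∈ F, G.Adj i j := by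
  have h_inv := explore_induction (ω := ω) (B := B) (G := G) (x := x) (P := fun _ y =>
      y.2 ⊆ x.2 ∧ (y.1 = x.1 ∨ y.1 ⊆ x.2 ∧ ∃ F, totalWeight ω F < B ∧
        ∀ j ∈ y.1, ∃ i ∈ F, G.Adj i j)) ⟨le_rfl, Or.inl rfl⟩ (fun _ _ h => h)
    (fun _ y hy h => ⟨Finset.sdiff_subset.trans h.1, Or.inr
      ⟨(nbr_subset _ _ _).trans h.1, y.1, hy, fun j hj => (mem_nbr.1 hj).2⟩⟩) r
  refine h_inv.2.resolve_left fun h_eq => ?_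
  rw [h_eq] at h
  exact hx.not_ge h

end Explored

section Pairs

variable {V : Type*} [DecidableEq V] {ω : V → ℝ} {B k : ℝ} {G : SimpleGraph V} {M : Finset V}
  {r : ℕ} {s s' : V}

lemma edist_exploreFirst_le {i : V} (hi : i ∈ M) (hi' : i ≠ s')
    (h : i ∉ (exploreFirst ω M B r s s' G).2) : (edgesMeeting G M).edist s i ≤ r := by
  have h_mem : i ∈ ({s} : Finset V) ∪ M \ {s, s'} := by
    simp only [Finset.mem_union, Finset.mem_singleton, Finset.mem_sdiff, Finset.mem_insert]
    tauto
  simpa using exists_edist_explored_le r Finset.sdiff_subset h_mem h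

lemma edist_exploreSecond_le {j : V}
    (hj : j ∈ ({s'} : Finset V) ∪ (exploreFirst ω M B r s s' G).2)
    (h : j ∉ (exploreSecond ω M B r s s' G).2) : (edgesMeeting G M).edist s' j ≤ r := by
  have h_sub : (exploreFirst ω M B r s s' G).2 ⊆ M :=
    (explore_snd_subset _ r).trans Finset.sdiff_subset
  simpa using exists_edist_explored_le (x := ({s'}, (exploreFirst ω M B r s s' G).2)) r h_sub hj h

lemma edist_le_of_first_eq_empty (hss' : s ≠ s') (h : (exploreFirst ω M B r s s' G).1 = ∅)
    (h_conn : ConnectedThrough G M s s') : (edgesMeeting G M).edist s s' ≤ (r + 1 : ℕ) := by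
  set y := exploreFirst ω M B r s s' G with hy
  have h_snd : y.2 ⊆ M \ {s, s'} := explore_snd_subset _ r
  obtain ⟨i, j, hij, ⟨hi, hi'⟩, hj, hj'⟩ := h_conn.exists_boundary
    {i | i ∈ ({s} : Finset V) ∪ M \ {s, s'} ∧ i ∉ y.2}
    ⟨by simp, fun hs => by simpa using h_snd hs⟩ (by simp [hss'.symm])
  obtain rfl : j = s' := by
    by_contra hjs'
    have hjy : j ∈ y.2 := by
      by_contra hjy
      refine hj ⟨?_, hjy⟩
      simp only [Finset.mem_union, Finset.mem_singleton, Finset.mem_sdiff, Finset.mem_insert]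
      tauto
    have hi_not : i ∉ (explore ω B G r ({s}, M \ {s, s'})).1 ∪ y.2 := by
      change i ∉ y.1 ∪ y.2
      simpa [h] using hi'
    exact not_adj_explore_snd r hi hi_not hjy hij.1
  have h_edist : (edgesMeeting G M).edist s i ≤ r := by
    simpa using exists_edist_explored_le r Finset.sdiff_subset hi hi'
  exact edist_le_of_adj h_edist hij (r' := 0) (by simp)

lemma edist_le_of_second_eq_empty (h : (exploreSecond ω M B r s s' G).1 = ∅)
    (h_conn : ConnectedThrough G M s s') : (edgesMeeting G M).edist s s' ≤ (r + 1 + r : ℕ) := by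
  set y := exploreFirst ω M B r s s' G with hy
  set z := exploreSecond ω M B r s s' G with hz
  have h_snd : y.2 ⊆ M \ {s, s'} := explore_snd_subset _ r
  have hz_snd : z.2 ⊆ y.2 := explore_snd_subset _ r
  by_cases hss' : s = s'
  · simp [hss']
  obtain ⟨j, i, hji, ⟨hj, hj'⟩, hi, hi'⟩ := h_conn.symm.exists_boundary
    {j | j ∈ ({s'} : Finset V) ∪ y.2 ∧ j ∉ z.2}
    ⟨by simp, fun hs' => by simpa using h_snd (hz_snd hs')⟩
    (fun hs => by
      rcases Finset.mem_union.1 hs.1 with h | h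
      exacts [hss' (Finset.mem_singleton.1 h), by simpa using h_snd h])
  have hiy : i ∉ y.2 := fun hiy => by
    have hiz : i ∈ z.2 := by_contra fun hiz => hi ⟨Finset.mem_union_right _ hiy, hiz⟩
    have hj_not : j ∉ (explore ω B G r ({s'}, y.2)).1 ∪ z.2 := by
      change j ∉ z.1 ∪ z.2
      simpa [h] using hj'
    exact not_adj_explore_snd r hj hj_not hiz hji.1
  have h_first : (edgesMeeting G M).edist s i ≤ r := by
    rcases hi' with hiM | rfl
    · refine edist_exploreFirst_le hiM (fun his' => hi ?_) hiy
      subst his'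
      exact ⟨by simp, fun h => by simpa using h_snd (hz_snd h)⟩
    · simp
  exact edist_le_of_adj h_first hji.symm (edist_exploreSecond_le hj hj')

lemma edist_le_of_adj_frontiers (hss' : s ≠ s') (hs : ω s < B)
    (h_first : B ≤ totalWeight ω (exploreFirst ω M B r s s' G).1) {i j : V}
    (hi : i ∈ (exploreFirst ω M B r s s' G).1) (hj : j ∈ (exploreSecond ω M B r s s' G).1)
    (hij : G.Adj i j) : (edgesMeeting G M).edist s s' ≤ (r + 1 + r : ℕ) := by
  have hs : totalWeight ω ({s} : Finset V) < B := (totalWeight_singleton ω s).trans_lt hs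
  have hi_mem : i ∈ M \ {s, s'} :=
    (exists_previous_frontier (x := ({s}, M \ {s, s'})) r hs h_first).1 hi
  have hi' := (Finset.mem_sdiff.1 (explore_fst_subset (x := ({s}, M \ {s, s'})) r (by simp) hi)).2
  have h_snd : (exploreFirst ω M B r s s' G).2 ⊆ M \ {s, s'} := explore_snd_subset _ r
  have hj' := Finset.mem_sdiff.1 <| explore_fst_subset
    (x := ({s'}, (exploreFirst ω M B r s s' G).2)) r
    (Finset.disjoint_singleton_left.2 fun h => by simpa using h_snd h) hj
  have hiM : i ∈ M := (Finset.mem_sdiff.1 hi_mem).1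
  exact edist_le_of_adj (edist_exploreFirst_le hiM (by rintro rfl; simp at hi_mem) hi')
    ⟨hij, Or.inl hiM⟩ (edist_exploreSecond_le hj'.1 hj'.2)

theorem edist_le_of_not_pairStalls (hss' : s ≠ s') (h_pair : ¬ PairStalls ω M B k r s s' G)
    (hs : ω s < B)
    (h_card : ∀ F F' : Finset V, totalWeight ω F < B → (∀ j ∈ F', ∃ i ∈ F, G.Adj i j) →
      (F'.card : ℝ) ≤ k)
    (h : ¬ PairDies ω M B k r s s' G ∨ ConnectedThrough G M s s') :
    (edgesMeeting G M).edist s s' ≤ (r + 1 + r : ℕ) := by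
  rw [PairStalls, not_or, not_and] at h_pair
  rcases not_stalled_iff.1 h_pair.1 with h_first | h_first
  · have h_reach : FirstReaches ω M B k r s s' G := by
      obtain ⟨-, F, hF, hF'⟩ := exists_previous_frontier (x := ({s}, M \ {s, s'})) r
        ((totalWeight_singleton ω s).trans_lt hs) h_first
      exact ⟨h_first, h_card F _ hF hF'⟩
    obtain ⟨h_second, h_adj⟩ := not_or.1 (h_pair.2 h_reach)
    rcases not_stalled_iff.1 h_second with h_second | h_second
    · push Not at h_adj
      obtain ⟨i, hi, j, hj, hij⟩ := h_adj h_second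
      exact edist_le_of_adj_frontiers hss' hs h_first hi hj hij
    · exact edist_le_of_second_eq_empty h_second
        (h.resolve_left (not_not.2 (Or.inr ⟨h_reach, h_second⟩)))
  · refine (edist_le_of_first_eq_empty hss' h_first
      (h.resolve_left (not_not.2 (Or.inl h_first)))).trans ?_
    exact_mod_cast Nat.le_add_right _ _

/-- The exploration event that has to be excluded for the pair `s, s'`: neither vertex of a pair
outside `M` may have an exploration that dies out. -/
def BadPair (ω : V → ℝ) (M : Finset V) (B k : ℝ) (r : ℕ) (s s' : V) (G : SimpleGraph V) : Prop :=
  PairStalls ω M B k r s s' G ∨ s ∉ M ∧ s' ∉ M ∧ PairDies ω M B k r s s' G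

theorem edist_le_of_forall_not_badPair (h_pair : ∀ s s', s ≠ s' → ¬ BadPair ω M B k r s s' G)
    (hB : ∀ i, ω i < B)
    (h_card : ∀ F F' : Finset V, totalWeight ω F < B → (∀ j ∈ F', ∃ i ∈ F, G.Adj i j) →
      (F'.card : ℝ) ≤ k) (h : G.Reachable s s') :
    (edgesMeeting G M).edist s s' ≤ (3 * (r + 1 + r) : ℕ) := by
  refine edist_edgesMeeting_le (fun s s' h => ?_) (fun s s' hs hs' => ?_) h <;>
    rcases eq_or_ne s s' with rfl | hss'
  · simp
  · exact edist_le_of_not_pairStalls hss' (fun h' => h_pair s s' hss' (Or.inl h')) (hB s) h_card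
      (Or.inr h)
  · simp
  · exact edist_le_of_not_pairStalls hss' (fun h' => h_pair s s' hss' (Or.inl h')) (hB s) h_card
      (Or.inl fun h' => h_pair s s' hss' (Or.inr ⟨hs, hs', h'⟩))

end Pairs

section LargeComponent

variable {V : Type*} [Fintype V] [DecidableEq V] {ω : V → ℝ} {B R : ℝ} {G : SimpleGraph V}
  {M F : Finset V} {r : ℕ}

theorem exists_le_card_reachable (hF : F ⊆ M) (hF_ne : F.Nonempty) (hR : 0 < R)
    (hωR : ∀ i ∈ M, ω i ≤ R) (h : B ≤ totalWeight ω (explore ω B G r (F, M \ F)).1) :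
    ∃ s, B / (R * F.card) ≤ ((Finset.univ.filter fun x => G.Reachable s x).card : ℝ) := by
  set y := (explore ω B G r (F, M \ F)).1
  have hy : ∀ i ∈ y, i ∈ F ∪ M \ F ∧ i ∉ (explore ω B G r (F, M \ F)).2 := fun i hi =>
    Finset.mem_sdiff.1 (explore_fst_subset r Finset.disjoint_sdiff hi)
  have hyM : ∀ i ∈ y, i ∈ M := fun i hi =>
    Finset.union_subset hF Finset.sdiff_subset (hy i hi).1
  have h_sub : y ⊆ F.biUnion fun s => Finset.univ.filter fun x => G.Reachable s x := fun i hi => by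
    obtain ⟨a, ha, hai⟩ := exists_edist_explored_le r Finset.sdiff_subset (hy i hi).1 (hy i hi).2
    have h_reach : (edgesMeeting G M).Reachable a i :=
      SimpleGraph.reachable_of_edist_ne_top (ne_top_of_le_ne_top (by simp) hai)
    simpa using ⟨a, ha, h_reach.mono edgesMeeting_le⟩
  have h_card : (y.card : ℝ) ≤
      ∑ s ∈ F, ((Finset.univ.filter fun x => G.Reachable s x).card : ℝ) := by
    exact_mod_cast (Finset.card_le_card h_sub).trans Finset.card_biUnion_le
  have h_sum : ∑ _s ∈ F, B / (R * F.card) ≤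
      ∑ s ∈ F, ((Finset.univ.filter fun x => G.Reachable s x).card : ℝ) :=
    calc ∑ _s ∈ F, B / (R * F.card) = B / R := by
          have hF_card : (F.card : ℝ) ≠ 0 := by exact_mod_cast hF_ne.card_pos.ne'
          rw [Finset.sum_const, nsmul_eq_mul, ← mul_div_assoc, mul_comm R,
            mul_div_mul_left _ _ hF_card]
      _ ≤ y.card := by
          rw [div_le_iff₀ hR, ← nsmul_eq_mul]
          exact h.trans (Finset.sum_le_card_nsmul y ω R fun i hi => hωR i (hyM i hi))
      _ ≤ _ := h_card
  obtain ⟨s, -, hs⟩ := Finset.exists_le_of_sum_le hF_ne h_sum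
  exact ⟨s, hs⟩

end LargeComponent

section RealExponential

lemma exp_neg_le_one_sub_add_sq {x : ℝ} (hx : 0 ≤ x) : Real.exp (-x) ≤ 1 - x + x ^ 2 / 2 := by
  have h_pos : 0 < 1 - x + x ^ 2 / 2 := by nlinarith [sq_nonneg (x - 1)]
  rw [Real.exp_neg, inv_le_iff_one_le_mul₀ (Real.exp_pos x)]
  calc 1 ≤ (1 - x + x ^ 2 / 2) * (1 + x + x ^ 2 / 2) := by nlinarith [sq_nonneg (x ^ 2)]
    _ ≤ _ := mul_le_mul_of_nonneg_left (Real.quadratic_le_exp_of_nonneg hx) h_pos.le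

lemma mul_one_sub_le_one_sub_exp_neg {x η : ℝ} (hx : 0 ≤ x) (hxη : x ≤ 2 * η) :
    x * (1 - η) ≤ 1 - Real.exp (-x) := by
  nlinarith [exp_neg_le_one_sub_add_sq hx]

lemma add_one_sub_mul_exp_neg_le {q x y η : ℝ} (hη : η ≤ 1) (hx : 0 ≤ x) (hxη : x ≤ 2 * η)
    (hy : 0 ≤ y) (hyη : y ≤ 2 * η) (hq : q ≤ Real.exp (-x)) :
    q + (1 - q) * Real.exp (-y) ≤ Real.exp (-((1 - η) ^ 2 * (x * y))) := by
  have h_mul : x * (1 - η) * (y * (1 - η)) ≤ (1 - q) * (1 - Real.exp (-y)) := by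
    have : 0 ≤ 1 - η := by linarith
    have h_q := (mul_one_sub_le_one_sub_exp_neg hx hxη).trans (sub_le_sub_left hq 1)
    exact mul_le_mul h_q (mul_one_sub_le_one_sub_exp_neg hy hyη) (by positivity)
      (le_trans (by positivity) h_q)
  linarith [Real.add_one_le_exp (-((1 - η) ^ 2 * (x * y)))]

end RealExponential

section RankOne

variable {V : Type*} {b : ℝ} {w ω : V → ℝ}

/-- The edge probabilities of the Norros–Reittu model with vertex weights `w`, where `b` is the
inverse of the total weight. -/
def rankOneProb (b : ℝ) (w : V → ℝ) (i j : V) : ℝ :=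
  1 - Real.exp (-(b * w i * w j))

lemma rankOneProb_comm (b : ℝ) (w : V → ℝ) (i j : V) :
    rankOneProb b w i j = rankOneProb b w j i := by
  rw [rankOneProb, rankOneProb, mul_right_comm]

lemma rankOneProb_mem_Icc (hb : 0 ≤ b) (hw : ∀ i, 0 ≤ w i) (i j : V) :
    rankOneProb b w i j ∈ Set.Icc 0 1 := by
  have h_le : Real.exp (-(b * w i * w j)) ≤ 1 :=
    Real.exp_le_one_iff.2 (neg_nonpos.2 (mul_nonneg (mul_nonneg hb (hw i)) (hw j)))
  exact ⟨sub_nonneg.2 h_le, sub_le_self 1 (Real.exp_pos _).le⟩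

lemma rankOneProb_le (b : ℝ) (w : V → ℝ) (i j : V) : rankOneProb b w i j ≤ b * w i * w j := by
  rw [rankOneProb]
  linarith [Real.add_one_le_exp (-(b * w i * w j))]

lemma prod_one_sub_rankOneProb (b : ℝ) (w : V → ℝ) (F : Finset V) (j : V) :
    ∏ i ∈ F, (1 - rankOneProb b w i j) = Real.exp (-(b * totalWeight w F * w j)) := by
  simp only [rankOneProb, sub_sub_cancel, ← Real.exp_sum, totalWeight, Finset.mul_sum,
    Finset.sum_mul, Finset.sum_neg_distrib]

lemma prod_one_sub_rankOneProb_le (hb : 0 ≤ b) (hω : ∀ i, 0 ≤ ω i) (hωw : ∀ i, ω i ≤ w i)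
    (F : Finset V) (j : V) :
    ∏ i ∈ F, (1 - rankOneProb b w i j) ≤ Real.exp (-(b * totalWeight ω F * ω j)) := by
  have h_total : totalWeight ω F ≤ totalWeight w F := Finset.sum_le_sum fun i _ => hωw i
  have h_pos : 0 ≤ totalWeight w F := Finset.sum_nonneg fun i _ => (hω i).trans (hωw i)
  rw [prod_one_sub_rankOneProb, Real.exp_le_exp, neg_le_neg_iff]
  exact mul_le_mul (mul_le_mul_of_nonneg_left h_total hb) (hωw j) (hω j) (mul_nonneg hb h_pos)

lemma sum_sq_le_add [DecidableEq V] {M U : Finset V} {K R : ℝ} (hω : ∀ i, 0 ≤ ω i)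
    (hωR : ∀ i ∈ M, ω i ≤ R) (hU : U ⊆ M) (hK : ((M \ U).card : ℝ) ≤ K) :
    ∑ i ∈ M, ω i ^ 2 ≤ K * R ^ 2 + ∑ i ∈ U, ω i ^ 2 := by
  rw [← Finset.sum_sdiff hU]
  gcongr
  calc ∑ i ∈ M \ U, ω i ^ 2 ≤ (M \ U).card • R ^ 2 := Finset.sum_le_card_nsmul _ _ _ fun i hi =>
        pow_le_pow_left₀ (hω i) (hωR i (Finset.sdiff_subset hi)) 2
    _ ≤ K * R ^ 2 := by
        rw [nsmul_eq_mul]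
        gcongr

variable [Fintype V] [LinearOrder V]

lemma prob_forall_not_adj_le (hb : 0 ≤ b) (hω : ∀ i, 0 ≤ ω i) (hωw : ∀ i, ω i ≤ w i)
    {E F : Finset V} (hEF : Disjoint E F) :
    prob (rankOneProb b w) (fun G => ∀ i ∈ E, ∀ j ∈ F, ¬ G.Adj i j) ≤
      Real.exp (-(b * totalWeight ω E * totalWeight ω F)) := by
  have h_ind : ∀ G : SimpleGraph V, (if ∀ i ∈ E, ∀ j ∈ F, ¬ G.Adj i j then (1 : ℝ) else 0) =
      ∏ _j ∈ nbr G E F, 0 := fun G => by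
    rw [Finset.prod_const, zero_pow_eq]
    refine if_congr ?_ rfl rfl
    simp only [Finset.card_eq_zero, Finset.eq_empty_iff_forall_notMem, mem_nbr]
    grind
  rw [prob_eq_expect]
  simp_rw [h_ind]
  rw [expect_prod_nbr (rankOneProb_comm b w) hEF]
  simp only [mul_zero, add_zero]
  calc ∏ j ∈ F, ∏ i ∈ E, (1 - rankOneProb b w i j)
      ≤ ∏ j ∈ F, Real.exp (-(b * totalWeight ω E * ω j)) :=
        Finset.prod_le_prod (fun j _ => by rw [prod_one_sub_rankOneProb]; positivity)
          fun j _ => prod_one_sub_rankOneProb_le hb hω hωw E j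
    _ = _ := by
        rw [← Real.exp_sum, Finset.sum_neg_distrib, ← Finset.mul_sum, ← totalWeight]

theorem prob_lt_degree_le (hb : 0 ≤ b) (hw : ∀ i, 0 ≤ w i) (i : V) (T : ℝ) :
    prob (rankOneProb b w) (fun G => T < (G.degree i : ℝ)) ≤
      Real.exp (2 * (b * w i * ∑ j, w j) - T) := by
  have h_nbr : ∀ G : SimpleGraph V, nbr G {i} (Finset.univ.erase i) = G.neighborFinset i :=
    fun G => by
      ext j
      simpa [mem_nbr] using fun h : G.Adj i j => h.ne'
  have h_factor : ∀ j, rankOneProb b w i j * Real.exp 1 + (1 - rankOneProb b w i j) ≤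
      Real.exp (2 * (b * w i * w j)) := fun j => by
    nlinarith [Real.exp_one_lt_d9, (rankOneProb_mem_Icc hb hw i j).1, rankOneProb_le b w i j,
      Real.add_one_le_exp (2 * (b * w i * w j))]
  calc prob (rankOneProb b w) (fun G => T < (G.degree i : ℝ))
      ≤ expect (rankOneProb b w) fun G =>
          (∏ _j ∈ nbr G {i} (Finset.univ.erase i), Real.exp 1) * Real.exp (-T) := by
        refine prob_le_expect (rankOneProb_mem_Icc hb hw) (fun G => by positivity) fun G hG => ?_
        rw [h_nbr, Finset.prod_const, SimpleGraph.card_neighborFinset_eq_degree,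
          ← Real.exp_nat_mul, ← Real.exp_add]
        exact Real.one_le_exp (by linarith)
    _ = (∏ j ∈ Finset.univ.erase i,
          (rankOneProb b w i j * Real.exp 1 + (1 - rankOneProb b w i j))) * Real.exp (-T) := by
        rw [expect_mul_const, expect_prod_nbr (rankOneProb_comm b w) (by simp)]
        simp only [Finset.prod_singleton, sub_sub_cancel, add_comm]
    _ ≤ (∏ j, Real.exp (2 * (b * w i * w j))) * Real.exp (-T) := by
        refine mul_le_mul_of_nonneg_right ((Finset.prod_le_prod (fun j _ => ?_)
          fun j _ => h_factor j).trans ?_) (Real.exp_pos _).le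
        · have := rankOneProb_mem_Icc hb hw i j
          exact add_nonneg (mul_nonneg this.1 (Real.exp_pos 1).le) (sub_nonneg.2 this.2)
        · exact Finset.prod_le_prod_of_subset_of_one_le (Finset.erase_subset _ _)
            (fun j _ => (Real.exp_pos _).le) fun j _ _ => Real.one_le_exp
              (mul_nonneg zero_le_two (mul_nonneg (mul_nonneg hb (hw i)) (hw j)))
    _ = _ := by
        rw [← Real.exp_sum, ← Real.exp_add, ← sub_eq_add_neg, ← Finset.mul_sum, ← Finset.mul_sum]

section Laplace

variable {B K R δ η s σ : ℝ} {F M U : Finset V}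

lemma expect_exp_neg_totalWeight_le (hb : 0 ≤ b) (hω : ∀ i, 0 ≤ ω i) (hωw : ∀ i, ω i ≤ w i)
    (hη : η ≤ 1) (hs : 0 ≤ s) (hFU : Disjoint F U)
    (hFη : ∀ j ∈ U, b * totalWeight ω F * ω j ≤ 2 * η) (hsη : ∀ j ∈ U, s * ω j ≤ 2 * η) :
    expect (rankOneProb b w) (fun G => Real.exp (-(s * totalWeight ω (nbr G F U)))) ≤
      Real.exp (-((1 - η) ^ 2 * (b * ∑ j ∈ U, ω j ^ 2) * (s * totalWeight ω F))) := by
  have h_total : 0 ≤ totalWeight ω F := Finset.sum_nonneg fun i _ => hω i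
  have h_exp : ∀ S : Finset V, Real.exp (-(s * totalWeight ω S)) =
      ∏ j ∈ S, Real.exp (-(s * ω j)) := fun S => by
    rw [totalWeight, Finset.mul_sum, ← Finset.sum_neg_distrib, Real.exp_sum]
  simp_rw [h_exp]
  rw [expect_prod_nbr (rankOneProb_comm b w) hFU]
  calc _ ≤ ∏ j ∈ U, Real.exp (-((1 - η) ^ 2 * (b * totalWeight ω F * ω j * (s * ω j)))) := by
        refine Finset.prod_le_prod (fun j _ => ?_) fun j hj => ?_
        · have h_le : b * totalWeight w F * w j ≥ 0 := mul_nonneg (mul_nonneg hb <|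
            Finset.sum_nonneg fun i _ => (hω i).trans (hωw i)) ((hω j).trans (hωw j))
          rw [prod_one_sub_rankOneProb]
          have := sub_nonneg.2 (Real.exp_le_one_iff.2 (neg_nonpos.2 h_le))
          positivity
        · exact add_one_sub_mul_exp_neg_le hη (mul_nonneg (mul_nonneg hb h_total) (hω j)) (hFη j hj)
            (mul_nonneg hs (hω j)) (hsη j hj) (prod_one_sub_rankOneProb_le hb hω hωw F j)
    _ = _ := by
        rw [← Real.exp_sum, Finset.sum_neg_distrib, Finset.mul_sum, Finset.mul_sum,
          Finset.sum_mul]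
        congr 2
        exact Finset.sum_congr rfl fun j _ => by ring

theorem Supercritical.of_rankOne (hb : 0 ≤ b) (hB : 0 < B) (hσ : 0 < σ) (hδ : 0 < δ)
    (hη : η ≤ 1) (hω : ∀ i, 1 ≤ ω i) (hωw : ∀ i, ω i ≤ w i)
    (hωR : ∀ i ∈ M, ω i ≤ R) (hBR : b * B * R ≤ 2 * η) (hσR : σ * R ≤ 2 * η)
    (hM : 1 + δ ≤ (1 - η) ^ 2 * (b * (∑ i ∈ M, ω i ^ 2 - K * R ^ 2))) :
    Supercritical (rankOneProb b w) ω M B K σ δ where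
  mem_Icc := rankOneProb_mem_Icc hb fun i => zero_le_one.trans ((hω i).trans (hωw i))
  one_le := hω
  B_pos := hB
  σ_pos := hσ
  δ_pos := hδ
  laplace_le {F U s} _ hFU hU hF hK hs hsσ := by
    have hω₀ : ∀ i, 0 ≤ ω i := fun i => zero_le_one.trans (hω i)
    have h_total : 0 ≤ totalWeight ω F := Finset.sum_nonneg fun i _ => hω₀ i
    refine (expect_exp_neg_totalWeight_le hb hω₀ hωw hη hs hFU (fun j hj => ?_)
      fun j hj => ?_).trans (Real.exp_le_exp.2 (neg_le_neg ?_))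
    · have := hωR j (hU hj)
      have := hω₀ j
      exact le_trans (by gcongr) hBR
    · have := hωR j (hU hj)
      have := hω₀ j
      exact le_trans (by gcongr) hσR
    · have h_sum : 1 + δ ≤ (1 - η) ^ 2 * (b * ∑ i ∈ U, ω i ^ 2) := hM.trans <| by
        gcongr
        linarith [sum_sq_le_add hω₀ hωR hU hK]
      calc s * (1 + δ) * totalWeight ω F = (1 + δ) * (s * totalWeight ω F) := by ring
        _ ≤ _ := mul_le_mul_of_nonneg_right h_sum (mul_nonneg hs h_total)

end Laplace

end RankOne

namespace Supercritical

variable {V : Type*} [Fintype V] [LinearOrder V] {p : V → V → ℝ} {ω : V → ℝ} {M : Finset V}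
  {B K L σ δ ε k : ℝ} {m n : ℕ}

lemma prob_badPair_le (hS : Supercritical p ω M B K σ δ) {s s' : V} (hss' : s ≠ s') (hε : 0 ≤ ε)
    (hk : 0 ≤ k) (hm : σ * B ≤ (1 + δ) ^ m) (hn : Real.exp (1 - σ * δ * n) ≤ ε)
    (hL : 1 + (m + n : ℕ) * B ≤ L) (hK : L + k + (m + n : ℕ) * B ≤ K)
    (h_link : ∀ E F, Disjoint E F → B ≤ totalWeight ω E → B ≤ totalWeight ω F →
      prob p (fun G => ∀ i ∈ E, ∀ j ∈ F, ¬ G.Adj i j) ≤ ε)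
    (h_notMem : ∀ i ∉ M, Real.exp (-(σ * ω i)) ≤ ε) :
    prob p (BadPair ω M B k (m + n) s s') ≤ 5 * ε := by
  have h_dies : prob p (fun G => s ∉ M ∧ s' ∉ M ∧ PairDies ω M B k (m + n) s s' G) ≤ 2 * ε := by
    by_cases hs : s ∈ M ∨ s' ∈ M
    · have h_false : ∀ G : SimpleGraph V, ¬ (s ∉ M ∧ s' ∉ M ∧ PairDies ω M B k (m + n) s s' G) :=
        fun G h => hs.elim h.1 h.2.1
      simpa only [h_false, prob_const, if_false] using by positivity
    · rw [not_or] at hs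
      refine (prob_mono hS.mem_Icc fun G h => h.2.2).trans
        ((hS.prob_pairDies_le hss' hk hL hK).trans ?_)
      linarith [h_notMem s hs.1, h_notMem s' hs.2]
  calc prob p (BadPair ω M B k (m + n) s s') ≤ _ := prob_or_le hS.mem_Icc _ _
    _ ≤ (ε + 2 * ε) + 2 * ε := add_le_add
        ((hS.prob_pairStalls_le hss' hε hk hm hL hK h_link).trans (by linarith)) h_dies
    _ = 5 * ε := by ring

theorem prob_exists_badPair_le (hS : Supercritical p ω M B K σ δ) (hε : 0 ≤ ε)
    (hk : 0 ≤ k) (hm : σ * B ≤ (1 + δ) ^ m) (hn : Real.exp (1 - σ * δ * n) ≤ ε)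
    (hL : 1 + (m + n : ℕ) * B ≤ L) (hK : L + k + (m + n : ℕ) * B ≤ K)
    (h_link : ∀ E F, Disjoint E F → B ≤ totalWeight ω E → B ≤ totalWeight ω F →
      prob p (fun G => ∀ i ∈ E, ∀ j ∈ F, ¬ G.Adj i j) ≤ ε)
    (h_notMem : ∀ i ∉ M, Real.exp (-(σ * ω i)) ≤ ε) :
    prob p (fun G => ∃ s s', s ≠ s' ∧ BadPair ω M B k (m + n) s s' G) ≤
      Fintype.card V ^ 2 * (5 * ε) := by
  refine prob_exists₂_le hS.mem_Icc _ fun s s' => ?_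
  by_cases hss' : s = s'
  · simpa [hss', prob_const] using hε
  · simpa [hss'] using hS.prob_badPair_le hss' hε hk hm hn hL hK h_link h_notMem

end Supercritical

section WithHighProb

/-- The properties `A N` hold with probability tending to `1` as `N → ∞` when `{i, j}` is an edge
of the random graph on `N` vertices with probability `p N i j`. -/
def WithHighProb (p : ∀ N, Fin N → Fin N → ℝ) (A : ∀ N, SimpleGraph (Fin N) → Prop) : Prop :=
  Tendsto (fun N => prob (p N) (A N)) atTop (nhds 1)

variable {p : ∀ N, Fin N → Fin N → ℝ} {A A' : ∀ N, SimpleGraph (Fin N) → Prop}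

lemma WithHighProb.of_prob_not_le (hp : ∀ N i j, p N i j ∈ Set.Icc 0 1) {f : ℕ → ℝ}
    (hf : Tendsto f atTop (nhds 0)) (hA : ∀ᶠ N in atTop, prob (p N) (fun G => ¬ A N G) ≤ f N) :
    WithHighProb p A := by
  have h_lim : Tendsto (fun N => 1 - f N) atTop (nhds 1) := by simpa using hf.const_sub 1
  refine tendsto_of_tendsto_of_tendsto_of_le_of_le' h_lim tendsto_const_nhds ?_
    (Eventually.of_forall fun N => prob_le_one (hp N) (A N))
  filter_upwards [hA] with N hN
  rw [prob_not] at hN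
  linarith

lemma WithHighProb.and (hp : ∀ N i j, p N i j ∈ Set.Icc 0 1) (hA : WithHighProb p A)
    (hA' : WithHighProb p A') : WithHighProb p fun N G => A N G ∧ A' N G := by
  have h_lim : Tendsto (fun N => (1 - prob (p N) (A N)) + (1 - prob (p N) (A' N))) atTop
      (nhds 0) := by simpa using (hA.const_sub 1).add (hA'.const_sub 1)
  refine of_prob_not_le hp h_lim (Eventually.of_forall fun N => ?_)
  simpa only [not_and_or, prob_not] using
    prob_or_le (hp N) (fun G => ¬ A N G) fun G => ¬ A' N G

lemma WithHighProb.mono (hp : ∀ N i j, p N i j ∈ Set.Icc 0 1) (hA : WithHighProb p A)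
    (h : ∀ᶠ N in atTop, ∀ G, A N G → A' N G) : WithHighProb p A' :=
  tendsto_of_tendsto_of_tendsto_of_le_of_le' hA tendsto_const_nhds
    (h.mono fun N hN => prob_mono (hp N) hN)
    (Eventually.of_forall fun N => prob_le_one (hp N) (A' N))

end WithHighProb

section VertexWeight

/-- The weight `(N / i) ^ γ` of the vertex `i` of the Simplified Norros–Reittu graph; as in
`snrEdgeProb`, the vertices are numbered from `1`. -/
def vertexWeight (γ : ℝ) (N : ℕ) (i : Fin N) : ℝ :=
  (N / (i + 1 : ℕ)) ^ γ

/-- The edge probabilities of the Simplified Norros–Reittu graph, as a function on vertices. -/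
def snrModel (β γ : ℝ) (N : ℕ) : Fin N → Fin N → ℝ :=
  rankOneProb (β / N) (vertexWeight γ N)

lemma snrEdgeProb_eq_snrModel (β γ : ℝ) {N : ℕ} (i j : Fin N) :
    snrEdgeProb β γ N (i + 1) (j + 1) = snrModel β γ N i j := by
  have hN : 0 < (N : ℝ) := by exact_mod_cast i.pos
  have hi : 0 < ((i + 1 : ℕ) : ℝ) := by positivity
  have hj : 0 < ((j + 1 : ℕ) : ℝ) := by positivity
  simp only [snrEdgeProb, snrModel, rankOneProb, vertexWeight]
  rw [Real.div_rpow hN.le hi.le, Real.div_rpow hN.le hj.le, Real.rpow_neg hi.le,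
    Real.rpow_neg hj.le, Real.rpow_sub hN, Real.rpow_one, two_mul, Real.rpow_add hN]
  congr 3
  field_simp

lemma snrProb_eq_prob (β γ : ℝ) (N : ℕ) (A : SimpleGraph (Fin N) → Prop) :
    snrProb β γ N A = prob (snrModel β γ N) A := by
  simp only [snrProb, graphProb, graphWeight, snrEdgeProb_eq_snrModel, prob, expect, weight]
  refine Finset.sum_congr rfl fun G _ => ?_
  by_cases h : A G <;> simp [h]

variable {γ : ℝ} {N : ℕ}

lemma one_le_div_succ (i : Fin N) : 1 ≤ (N : ℝ) / (i + 1 : ℕ) := by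
  rw [one_le_div (by positivity)]
  exact_mod_cast i.isLt

lemma one_le_vertexWeight (hγ : 0 ≤ γ) (i : Fin N) : 1 ≤ vertexWeight γ N i :=
  Real.one_le_rpow (one_le_div_succ i) hγ

lemma sq_vertexWeight_le (hγ : γ ≤ 1 / 2) (i : Fin N) :
    vertexWeight γ N i ^ 2 ≤ N / (i + 1 : ℕ) := by
  rw [vertexWeight, ← Real.rpow_mul_natCast (by positivity)]
  exact Real.rpow_le_self_of_one_le (one_le_div_succ i) (by push_cast; linarith)

lemma sq_vertexWeight_le_natCast (hγ : γ ≤ 1 / 2) (i : Fin N) : vertexWeight γ N i ^ 2 ≤ N :=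
  (sq_vertexWeight_le hγ i).trans <|
    div_le_self N.cast_nonneg (by exact_mod_cast Nat.le_add_left 1 _)

lemma sum_sq_vertexWeight_le (hγ : γ ≤ 1 / 2) :
    ∑ i, vertexWeight γ N i ^ 2 ≤ N * (1 + Real.log N) :=
  calc ∑ i, vertexWeight γ N i ^ 2 ≤ ∑ i : Fin N, (N : ℝ) / (i + 1 : ℕ) :=
        Finset.sum_le_sum fun i _ => sq_vertexWeight_le hγ i
    _ = N * (harmonic N : ℚ) := by
        rw [Fin.sum_univ_eq_sum_range (fun i => (N : ℝ) / (i + 1 : ℕ)), harmonic]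
        push_cast
        simp only [Finset.mul_sum, div_eq_mul_inv]
    _ ≤ N * (1 + Real.log N) := by
        gcongr
        exact harmonic_le_one_add_log N

lemma sum_vertexWeight_le (hγ : γ ∈ Set.Icc 0 (1 / 2)) :
    ∑ i, vertexWeight γ N i ≤ N * (1 + Real.log N) :=
  (Finset.sum_le_sum fun i _ => le_self_pow₀ (one_le_vertexWeight hγ.1 i) two_ne_zero).trans
    (sum_sq_vertexWeight_le hγ.2)

lemma snrModel_mem_Icc {β : ℝ} (hβ : 0 ≤ β) (hγ : 0 ≤ γ) (N : ℕ) (i j : Fin N) :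
    snrModel β γ N i j ∈ Set.Icc 0 1 :=
  rankOneProb_mem_Icc (by positivity) (fun i => zero_le_one.trans (one_le_vertexWeight hγ i)) i j

end VertexWeight

section SecondMoment

lemma rpow_sub_rpow_le_mul_sum {a : ℝ} (ha₀ : 0 ≤ a) (ha : a < 1) {m n : ℕ} (hm : 0 < m)
    (hmn : m ≤ n) :
    (n : ℝ) ^ (1 - a) - (m : ℝ) ^ (1 - a) ≤ (1 - a) * ∑ i ∈ Finset.Ico m n, (i : ℝ) ^ (-a) := by
  have hm' : 0 < (m : ℝ) := by exact_mod_cast hm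
  have h_anti : AntitoneOn (fun x : ℝ => x ^ (-a)) (Set.Icc m n) := fun x hx y _ hxy =>
    Real.rpow_le_rpow_of_nonpos (hm'.trans_le hx.1) hxy (by linarith)
  have h_int := h_anti.integral_le_sum_Ico hmn
  rw [integral_rpow (Or.inl (by linarith)), neg_add_eq_sub, div_le_iff₀ (by linarith)] at h_int
  linarith

lemma exists_one_lt_div_mul_one_sub_rpow {a β : ℝ} (ha : a < 1) (hβ : 1 - a < β) :
    ∃ x ∈ Set.Ioo (0 : ℝ) 1, 1 < β / (1 - a) * (1 - x ^ (1 - a)) := by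
  have ha' : 0 < 1 - a := by linarith
  have h_cont : ContinuousAt (fun x : ℝ => β / (1 - a) * (1 - x ^ (1 - a))) 0 :=
    continuousAt_const.mul <| continuousAt_const.sub <|
      Real.continuousAt_rpow_const _ _ (Or.inr ha'.le)
  have h_zero : 1 < β / (1 - a) * (1 - (0 : ℝ) ^ (1 - a)) := by
    rwa [Real.zero_rpow ha'.ne', sub_zero, mul_one, one_lt_div ha']
  have h_near : ∀ᶠ x in nhdsWithin 0 (Set.Ioi 0), 1 < β / (1 - a) * (1 - x ^ (1 - a)) :=
    (h_cont.eventually_const_lt h_zero).filter_mono nhdsWithin_le_nhds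
  obtain ⟨x, hx, hx'⟩ := (h_near.and (Ioo_mem_nhdsGT one_pos)).exists
  exact ⟨x, hx', hx⟩

lemma exists_exponent {β γ : ℝ} (hγ : γ ∈ Set.Icc 0 (1 / 2)) (hβ : 1 - 2 * γ < β) :
    ∃ a, 0 ≤ a ∧ a < 1 ∧ a ≤ 2 * γ ∧ 1 - a < β := by
  have hβ₀ : 0 < β := by linarith [hγ.2]
  refine ⟨min (2 * γ) (max 0 (1 - β / 2)), le_min (by linarith [hγ.1]) (le_max_left _ _),
    min_lt_of_right_lt (max_lt one_pos (by linarith)), min_le_left _ _, ?_⟩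
  rcases min_choice (2 * γ) (max 0 (1 - β / 2)) with h | h <;> rw [h]
  · exact hβ
  · linarith [le_max_right 0 (1 - β / 2)]

lemma sum_rpow_le_sum_sq_vertexWeight {a γ : ℝ} (ha : a ≤ 2 * γ) (hγ : 0 ≤ γ) {N m : ℕ}
    (hm : 0 < m) :
    N ^ a * ∑ j ∈ Finset.Ico m N, (j : ℝ) ^ (-a) ≤
      ∑ i : Fin N with vertexWeight γ N i ≤ (N / m) ^ γ, vertexWeight γ N i ^ 2 := by
  let g : ℕ → ℝ := fun j =>
    if ((N : ℝ) / j) ^ γ ≤ ((N : ℝ) / m) ^ γ then (((N : ℝ) / j) ^ γ) ^ 2 else 0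
  have hg : ∀ j, 0 ≤ g j := fun j => by
    unfold g
    positivity
  have h_sum : ∑ i : Fin N with vertexWeight γ N i ≤ (N / m) ^ γ, vertexWeight γ N i ^ 2 =
      ∑ j ∈ Finset.Ico 1 (N + 1), g j := by
    rw [Finset.sum_filter, ← Finset.sum_Ico_add' g 0 N 1, Nat.Ico_zero_eq_range,
      ← Fin.sum_univ_eq_sum_range fun j => g (j + 1)]
    rfl
  rw [h_sum, Finset.mul_sum]
  refine (Finset.sum_le_sum fun j hj => ?_).trans <| Finset.sum_le_sum_of_subset_of_nonneg
    (Finset.Ico_subset_Ico hm N.le_succ) fun j _ _ => hg j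
  obtain ⟨hmj, hjN⟩ := Finset.mem_Ico.1 hj
  have hj₀ : 0 < (j : ℝ) := by exact_mod_cast hm.trans_le hmj
  have h_le : ((N : ℝ) / j) ^ γ ≤ ((N : ℝ) / m) ^ γ := by gcongr
  have h_one : 1 ≤ (N : ℝ) / j := (one_le_div hj₀).2 (by exact_mod_cast hjN.le)
  calc (N : ℝ) ^ a * (j : ℝ) ^ (-a) = ((N : ℝ) / j) ^ a := by
        rw [Real.div_rpow N.cast_nonneg hj₀.le, Real.rpow_neg hj₀.le, div_eq_mul_inv]
    _ ≤ ((N : ℝ) / j) ^ (2 * γ) := Real.rpow_le_rpow_of_exponent_le h_one ha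
    _ = g j := by
        rw [show g j = _ from if_pos h_le, ← Real.rpow_mul_natCast (by positivity), mul_comm]
        norm_cast

lemma le_sum_sq_vertexWeight {a β γ x : ℝ} (ha₀ : 0 ≤ a) (ha : a < 1) (haγ : a ≤ 2 * γ)
    (hβ : 0 ≤ β) (hx₀ : 0 ≤ x) (hx : x ≤ 1) {N m : ℕ} (hm : 0 < m) (hmx : m ≤ x * N) :
    β / (1 - a) * (1 - x ^ (1 - a)) ≤
      β / N * ∑ i : Fin N with vertexWeight γ N i ≤ (N / m) ^ γ, vertexWeight γ N i ^ 2 := by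
  have ha' : 0 < 1 - a := by linarith
  have hmN : m ≤ N := by exact_mod_cast hmx.trans (mul_le_of_le_one_left N.cast_nonneg hx)
  have hN : 0 < (N : ℝ) := by exact_mod_cast hm.trans_le hmN
  have h_rpow : (m : ℝ) ^ (1 - a) ≤ x ^ (1 - a) * N ^ (1 - a) := by
    rw [← Real.mul_rpow hx₀ hN.le]
    gcongr
  have h_sum : (N : ℝ) ^ (1 - a) * (1 - x ^ (1 - a)) / (1 - a) ≤
      ∑ j ∈ Finset.Ico m N, (j : ℝ) ^ (-a) := by
    rw [div_le_iff₀' ha']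
    linarith [rpow_sub_rpow_le_mul_sum ha₀ ha hm hmN]
  calc β / (1 - a) * (1 - x ^ (1 - a))
      = β / N * (N ^ a * (N ^ (1 - a) * (1 - x ^ (1 - a)) / (1 - a))) := by
        have h_mul : (N : ℝ) ^ a * N ^ (1 - a) = N := by
          rw [← Real.rpow_add hN, add_sub_cancel, Real.rpow_one]
        rw [mul_div_assoc, ← mul_assoc (_ ^ a), h_mul]
        field_simp
    _ ≤ _ := by
        gcongr
        exact (mul_le_mul_of_nonneg_left h_sum (by positivity)).trans
          (sum_rpow_le_sum_sq_vertexWeight haγ (by linarith) hm)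

/-- The branching process approximating the exploration is supercritical once its vertex weights
are capped at a large constant: this is where `β > 1 - 2 γ` enters. -/
theorem exists_lt_sum_sq_vertexWeight {β γ : ℝ} (hγ : γ ∈ Set.Icc 0 (1 / 2))
    (hβ : 1 - 2 * γ < β) :
    ∃ R ν : ℝ, 1 ≤ R ∧ 1 < ν ∧ ∀ᶠ N : ℕ in atTop,
      ν ≤ β / N * ∑ i : Fin N with vertexWeight γ N i ≤ R, vertexWeight γ N i ^ 2 := by
  obtain ⟨a, ha₀, ha, haγ, haβ⟩ := exists_exponent hγ hβ
  have hβ₀ : 0 ≤ β := by linarith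
  obtain ⟨x, ⟨hx₀, hx⟩, hν⟩ := exists_one_lt_div_mul_one_sub_rpow ha haβ
  refine ⟨(2 / x) ^ γ, _, Real.one_le_rpow ((one_le_div hx₀).2 (by linarith)) hγ.1, hν, ?_⟩
  filter_upwards [tendsto_natCast_atTop_atTop.eventually_ge_atTop (1 / x)] with N hN
  have hm : 0 < ⌊x * N⌋₊ := Nat.floor_pos.2 ((div_le_iff₀' hx₀).1 hN)
  have hm₁ : 1 ≤ (⌊x * N⌋₊ : ℝ) := by exact_mod_cast hm
  have h_div : (N : ℝ) / ⌊x * N⌋₊ ≤ 2 / x := by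
    rw [div_le_div_iff₀ (by positivity) hx₀]
    linarith [Nat.lt_floor_add_one (x * N)]
  refine (le_sum_sq_vertexWeight ha₀ ha haγ hβ₀ hx₀.le hx.le hm
    (Nat.floor_le (by positivity))).trans ?_
  gcongr
  exact hγ.1

end SecondMoment

section Logarithm

lemma eventually_le_log (c : ℝ) : ∀ᶠ N : ℕ in atTop, c ≤ Real.log N :=
  (Real.tendsto_log_atTop.comp tendsto_natCast_atTop_atTop).eventually_ge_atTop c

lemma eventually_log_pow_le (k : ℕ) : ∀ᶠ N : ℕ in atTop, Real.log N ^ k ≤ N := by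
  have h_bound := ((Real.isLittleO_pow_log_id_atTop (n := k)).comp_tendsto
    tendsto_natCast_atTop_atTop).bound one_pos
  filter_upwards [h_bound] with N hN
  simpa using (le_abs_self _).trans hN

lemma mul_div_pow_succ_le {c l x : ℝ} (hl : 0 < l) (hc : c ≤ l) (hx : 0 ≤ x) (k : ℕ) :
    c * (x / l ^ (k + 1)) ≤ x / l ^ k := by
  calc c * (x / l ^ (k + 1)) ≤ l * (x / l ^ (k + 1)) := by gcongr
    _ = x / l ^ k := by
        field_simp
        ring

end Logarithm

section Truncation

/-- The vertices of weight at most `log N ^ 2`, in which the explorations take place. -/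
def smallVertices (γ : ℝ) (N : ℕ) : Finset (Fin N) :=
  {i | vertexWeight γ N i ≤ Real.log N ^ 2}

/-- The vertex weights, capped at `R` on the small vertices. -/
def truncatedWeight (γ R : ℝ) (N : ℕ) (i : Fin N) : ℝ :=
  if i ∈ smallVertices γ N then min (vertexWeight γ N i) R else vertexWeight γ N i

variable {β γ R δ : ℝ} {N : ℕ}

lemma mem_smallVertices {i : Fin N} :
    i ∈ smallVertices γ N ↔ vertexWeight γ N i ≤ Real.log N ^ 2 := by
  simp [smallVertices]

lemma one_le_truncatedWeight (hγ : 0 ≤ γ) (hR : 1 ≤ R) (i : Fin N) :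
    1 ≤ truncatedWeight γ R N i := by
  rw [truncatedWeight]
  split_ifs
  exacts [le_min (one_le_vertexWeight hγ i) hR, one_le_vertexWeight hγ i]

lemma truncatedWeight_le_vertexWeight (i : Fin N) :
    truncatedWeight γ R N i ≤ vertexWeight γ N i := by
  rw [truncatedWeight]
  split_ifs
  exacts [min_le_left _ _, le_rfl]

lemma truncatedWeight_le (i : Fin N) (hi : i ∈ smallVertices γ N) :
    truncatedWeight γ R N i ≤ R := by
  rw [truncatedWeight, if_pos hi]
  exact min_le_right _ _

lemma sq_log_le_truncatedWeight {i : Fin N} (hi : i ∉ smallVertices γ N) :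
    Real.log N ^ 2 ≤ truncatedWeight γ R N i := by
  rw [truncatedWeight, if_neg hi]
  exact (not_le.1 (mt mem_smallVertices.2 hi)).le

lemma vertexWeight_le_mul_truncatedWeight (hγ : 0 ≤ γ) (hR : 1 ≤ R) (hN : 1 ≤ Real.log N)
    (i : Fin N) : vertexWeight γ N i ≤ Real.log N ^ 2 * truncatedWeight γ R N i := by
  have h_one := one_le_truncatedWeight hγ hR i
  by_cases hi : i ∈ smallVertices γ N
  · exact (mem_smallVertices.1 hi).trans (le_mul_of_one_le_right (by positivity) h_one)
  · rw [truncatedWeight, if_neg hi] at h_one ⊢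
    exact le_mul_of_one_le_left (by linarith) (one_le_pow₀ hN)

lemma filter_subset_smallVertices (hRN : R ≤ Real.log N ^ 2) :
    Finset.univ.filter (fun i : Fin N => vertexWeight γ N i ≤ R) ⊆ smallVertices γ N := fun _ hi =>
  mem_smallVertices.2 ((Finset.mem_filter.1 hi).2.trans hRN)

lemma sum_sq_vertexWeight_le_sum_sq_truncatedWeight (hRN : R ≤ Real.log N ^ 2) :
    ∑ i : Fin N with vertexWeight γ N i ≤ R, vertexWeight γ N i ^ 2 ≤
      ∑ i ∈ smallVertices γ N, truncatedWeight γ R N i ^ 2 := by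
  refine (Finset.sum_le_sum fun _ hi => le_of_eq ?_).trans <|
    Finset.sum_le_sum_of_subset_of_nonneg (filter_subset_smallVertices hRN) fun _ _ _ => sq_nonneg _
  rw [truncatedWeight, if_pos (filter_subset_smallVertices hRN hi),
    min_eq_left (Finset.mem_filter.1 hi).2]

lemma natCast_le_mul_card_smallVertices (hγ : 0 ≤ γ) (hβ : 0 ≤ β) (hN : 0 < N)
    (hRN : R ≤ Real.log N ^ 2)
    (h : 1 ≤ β / N * ∑ i : Fin N with vertexWeight γ N i ≤ R, vertexWeight γ N i ^ 2) :
    (N : ℝ) ≤ β * R ^ 2 * (smallVertices γ N).card := by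
  have hN' : 0 < (N : ℝ) := by exact_mod_cast hN
  rw [div_mul_eq_mul_div, one_le_div hN'] at h
  refine h.trans ?_
  rw [mul_assoc]
  gcongr
  calc ∑ i : Fin N with vertexWeight γ N i ≤ R, vertexWeight γ N i ^ 2
      ≤ (Finset.univ.filter fun i : Fin N => vertexWeight γ N i ≤ R).card • R ^ 2 :=
        Finset.sum_le_card_nsmul _ _ _ fun i hi => pow_le_pow_left₀
          (zero_le_one.trans (one_le_vertexWeight hγ i)) (Finset.mem_filter.1 hi).2 2
    _ ≤ R ^ 2 * (smallVertices γ N).card := by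
        rw [nsmul_eq_mul, mul_comm]
        gcongr
        exact filter_subset_smallVertices hRN

lemma supercritical_snrModel (hγ : 0 ≤ γ) (hβ : 0 ≤ β) (hR : 1 ≤ R) (hδ : 0 < δ) (hN : 0 < N)
    (hlog : 1 ≤ Real.log N) (hRN : R ≤ Real.log N ^ 2)
    (hβR : β * R ≤ 2 * (δ / (1 + 4 * δ)) * Real.log N) (hβR₂ : β * R ^ 2 ≤ δ * Real.log N)
    (h : 1 + 4 * δ ≤ β / N * ∑ i : Fin N with vertexWeight γ N i ≤ R, vertexWeight γ N i ^ 2) :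
    Supercritical (snrModel β γ N) (truncatedWeight γ R N) (smallVertices γ N)
      (N / Real.log N ^ 9) (N / Real.log N ^ 4) (2 * (δ / (1 + 4 * δ)) / R) δ := by
  have : 0 < (N : ℝ) := by exact_mod_cast hN
  have hη : δ / (1 + 4 * δ) ≤ 1 := (div_le_one (by positivity)).2 (by linarith)
  have h_pow : ∀ {c d : ℝ} {k : ℕ}, c ≤ d * Real.log N → 0 ≤ d → k ≠ 0 → c / Real.log N ^ k ≤ d :=
    fun hcd hd hk => (div_le_iff₀ (by positivity)).2 (hcd.trans (by
      gcongr
      exact le_self_pow₀ hlog hk))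
  refine Supercritical.of_rankOne (by positivity) (by positivity) (by positivity) hδ hη
    (one_le_truncatedWeight hγ hR) truncatedWeight_le_vertexWeight truncatedWeight_le ?_
    (div_mul_cancel₀ _ (by positivity)).le ?_
  · convert h_pow hβR (by positivity) (k := 9) (by norm_num) using 1
    field_simp
  · have h_cut : β / N * (N / Real.log N ^ 4 * R ^ 2) ≤ δ := by
      convert h_pow hβR₂ hδ.le (k := 4) (by norm_num) using 1
      field_simp
    have h_sum : 1 + 3 * δ ≤ β / N *
        (∑ i ∈ smallVertices γ N, truncatedWeight γ R N i ^ 2 - N / Real.log N ^ 4 * R ^ 2) := by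
      rw [mul_sub]
      have h_le := mul_le_mul_of_nonneg_left
        (sum_sq_vertexWeight_le_sum_sq_truncatedWeight (γ := γ) hRN)
        (by positivity : 0 ≤ β / N)
      linarith
    have h_sq : 1 - 2 * (δ / (1 + 4 * δ)) ≤ (1 - δ / (1 + 4 * δ)) ^ 2 := by
      nlinarith [sq_nonneg (δ / (1 + 4 * δ))]
    calc 1 + δ ≤ (1 - 2 * (δ / (1 + 4 * δ))) * (1 + 3 * δ) := by
          rw [← sub_nonneg]
          have : 0 ≤ 2 * δ ^ 2 / (1 + 4 * δ) := by positivity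
          convert this using 1
          field_simp
          ring
      _ ≤ _ := mul_le_mul h_sq h_sum (by positivity) (sq_nonneg _)

theorem exists_supercritical_snrModel (hγ : γ ∈ Set.Icc 0 (1 / 2)) (hβ : 1 - 2 * γ < β) :
    ∃ R σ δ : ℝ, 1 ≤ R ∧
      (∀ᶠ N : ℕ in atTop, Supercritical (snrModel β γ N) (truncatedWeight γ R N) (smallVertices γ N)
        (N / Real.log N ^ 9) (N / Real.log N ^ 4) σ δ) ∧
      ∀ᶠ N : ℕ in atTop, (N : ℝ) ≤ β * R ^ 2 * (smallVertices γ N).card := by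
  obtain ⟨R, ν, hR, hν, h_sum⟩ := exists_lt_sum_sq_vertexWeight hγ hβ
  obtain ⟨δ, rfl⟩ : ∃ δ, ν = 1 + 4 * δ := ⟨(ν - 1) / 4, by ring⟩
  have hδ : 0 < δ := by linarith
  have hβ₀ : 0 ≤ β := by linarith [hγ.2]
  have h_log := (eventually_gt_atTop 0).and (eventually_le_log R)
  refine ⟨R, 2 * (δ / (1 + 4 * δ)) / R, δ, hR, ?_, ?_⟩
  · filter_upwards [h_sum, h_log, eventually_le_log (β * R / (2 * (δ / (1 + 4 * δ)))),
      eventually_le_log (β * R ^ 2 / δ)] with N h_sum hN hβR hβR₂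
    have hlog := hR.trans hN.2
    exact supercritical_snrModel hγ.1 hβ₀ hR hδ hN.1 hlog
      (hN.2.trans (le_self_pow₀ hlog two_ne_zero)) ((div_le_iff₀' (by positivity)).1 hβR)
      ((div_le_iff₀' hδ).1 hβR₂) h_sum
  · filter_upwards [h_sum, h_log] with N h_sum hN
    exact natCast_le_mul_card_smallVertices hγ.1 hβ₀ hN.1
      (hN.2.trans (le_self_pow₀ (hR.trans hN.2) two_ne_zero)) (hν.le.trans h_sum)

end Truncation

section TypicalGraph

variable {A D R β γ δ κ σ : ℝ} {N : ℕ}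

lemma exp_neg_mul_log (hN : 0 < N) (k : ℕ) :
    Real.exp (-(k * Real.log N)) = 1 / (N : ℝ) ^ k := by
  rw [Real.exp_neg, Real.exp_nat_mul, Real.exp_log (by exact_mod_cast hN), one_div]

lemma exp_one_sub_le_three_div_pow (hN : 0 < N) {k : ℕ} {x : ℝ} (hx : k * Real.log N ≤ x) :
    Real.exp (1 - x) ≤ 3 / (N : ℝ) ^ k := by
  calc Real.exp (1 - x) ≤ Real.exp 1 * Real.exp (-(k * Real.log N)) := by
        rw [← Real.exp_add, Real.exp_le_exp]
        linarith
    _ ≤ 3 * (1 / (N : ℝ) ^ k) := by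
        rw [exp_neg_mul_log hN]
        gcongr
        exact Real.exp_one_lt_three.le
    _ = _ := mul_one_div _ _

lemma exp_neg_le_three_div_pow (hN : 0 < N) {k : ℕ} {x : ℝ} (hx : k * Real.log N ≤ x) :
    Real.exp (-x) ≤ 3 / (N : ℝ) ^ k :=
  (Real.exp_le_exp.2 (by linarith)).trans (exp_one_sub_le_three_div_pow hN hx)

lemma prob_lt_degree_snrModel_le (hγ : γ ∈ Set.Icc 0 (1 / 2)) (hβ : 0 ≤ β) (hN : 0 < N)
    (hlog : 4 * β + 2 ≤ Real.log N) (i : Fin N) :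
    prob (snrModel β γ N) (fun G => Real.log N ^ 2 * vertexWeight γ N i < (G.degree i : ℝ)) ≤
      1 / (N : ℝ) ^ 2 := by
  have h_one : ∀ j, 1 ≤ vertexWeight γ N j := one_le_vertexWeight hγ.1
  have hlog₁ : 1 ≤ Real.log N := by linarith
  have hw := zero_le_one.trans (h_one i)
  have h_mean : β / N * vertexWeight γ N i * ∑ j, vertexWeight γ N j ≤
      2 * β * (vertexWeight γ N i * Real.log N) := by
    calc _ ≤ β / N * vertexWeight γ N i * (N * (2 * Real.log N)) := by
          gcongr
          refine (sum_vertexWeight_le hγ).trans ?_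
          gcongr
          linarith
      _ = _ := by field_simp
  refine (prob_lt_degree_le (by positivity) (fun j => zero_le_one.trans (h_one j)) i _).trans ?_
  rw [← exp_neg_mul_log hN, Real.exp_le_exp]
  push_cast
  have h_threshold : (4 * β + 2) * (vertexWeight γ N i * Real.log N) ≤
      Real.log N ^ 2 * vertexWeight γ N i := by
    calc _ ≤ Real.log N * (vertexWeight γ N i * Real.log N) := by gcongr
      _ = _ := by ring
  linarith [le_mul_of_one_le_left (zero_le_one.trans hlog₁) (h_one i)]

theorem withHighProb_degree_le (hγ : γ ∈ Set.Icc 0 (1 / 2)) (hβ : 0 ≤ β) :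
    WithHighProb (snrModel β γ) fun N G =>
      ∀ i, (G.degree i : ℝ) ≤ Real.log N ^ 2 * vertexWeight γ N i := by
  refine WithHighProb.of_prob_not_le (snrModel_mem_Icc hβ hγ.1)
    tendsto_one_div_atTop_nhds_zero_nat ?_
  filter_upwards [eventually_gt_atTop 0, eventually_le_log (4 * β + 2)] with N hN hlog
  simp only [not_forall, not_le]
  calc _ ≤ ∑ i : Fin N, prob (snrModel β γ N)
          (fun G => Real.log N ^ 2 * vertexWeight γ N i < (G.degree i : ℝ)) :=
        prob_exists_le (snrModel_mem_Icc hβ hγ.1 N) _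
    _ ≤ ∑ _i : Fin N, 1 / (N : ℝ) ^ 2 :=
        Finset.sum_le_sum fun i _ => prob_lt_degree_snrModel_le hγ hβ hN hlog i
    _ = 1 / N := by
        rw [Finset.sum_const, Finset.card_univ, Fintype.card_fin, nsmul_eq_mul]
        field_simp

lemma exists_le_pow_and_le_mul (hδ : 0 < δ) (hκ : 0 < κ) :
    ∃ A, ∀ N : ℕ, 1 ≤ Real.log N → ∃ m n : ℕ, (N : ℝ) ≤ (1 + δ) ^ m ∧
      4 * Real.log N ≤ κ * n ∧ ((m + n : ℕ) : ℝ) ≤ A * Real.log N := by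
  have hδ' : 0 < Real.log (1 + δ) := Real.log_pos (by linarith)
  refine ⟨1 / Real.log (1 + δ) + 4 / κ + 2, fun N hN =>
    ⟨⌈1 / Real.log (1 + δ) * Real.log N⌉₊, ⌈4 / κ * Real.log N⌉₊, ?_, ?_, ?_⟩⟩
  · have hN' : N ≠ 0 := by
      rintro rfl
      norm_num at hN
    rw [← Real.log_le_log_iff (by positivity) (by positivity), Real.log_pow,
      ← div_le_iff₀ hδ', div_eq_inv_mul, ← one_div]
    exact Nat.le_ceil _
  · rw [← div_le_iff₀' hκ, mul_div_right_comm]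
    exact Nat.le_ceil _
  · have h_ceil : ∀ {x : ℝ}, 0 ≤ x → (⌈x⌉₊ : ℝ) ≤ x + 1 := fun hx => (Nat.ceil_lt_add_one hx).le
    have h_m := h_ceil (by positivity : 0 ≤ 1 / Real.log (1 + δ) * Real.log N)
    have h_n := h_ceil (by positivity : 0 ≤ 4 / κ * Real.log N)
    push_cast
    linarith

lemma one_add_mul_div_pow_le {l x r : ℝ} (hl : 1 + A ≤ l) (hl' : 1 ≤ l) (hx : l ^ 9 ≤ x)
    (hr : r ≤ A * l) : 1 + r * (x / l ^ 9) ≤ x / l ^ 7 := by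
  have hx₀ : 0 ≤ x := (by positivity : (0 : ℝ) ≤ l ^ 9).trans hx
  have h_one : 1 ≤ x / l ^ 9 := (one_le_div (by positivity)).2 hx
  calc 1 + r * (x / l ^ 9) ≤ 1 * (x / l ^ 9) + A * l * (x / l ^ 9) := by
        gcongr
        linarith
    _ = (1 + A * l) * (x / l ^ 9) := by ring
    _ ≤ l * l * (x / l ^ 9) := by
        gcongr
        nlinarith
    _ = l * (l * (x / l ^ (8 + 1))) := by ring
    _ ≤ l * (x / l ^ (7 + 1)) := by
        gcongr
        exact mul_div_pow_succ_le (by positivity) le_rfl hx₀ 8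
    _ ≤ x / l ^ 7 := mul_div_pow_succ_le (by positivity) le_rfl hx₀ 7

lemma mul_div_pow_le {l x : ℝ} {k : ℕ} (hσ : σ ≤ l) (hl : 1 ≤ l) (hk : k ≠ 0) (hx : 0 ≤ x) :
    σ * (x / l ^ k) ≤ x := by
  rw [mul_div_left_comm]
  exact mul_le_of_le_one_right hx ((div_le_one (by positivity)).2 (hσ.trans (le_self_pow₀ hl hk)))

lemma exp_neg_mul_le_three_div_pow (hN : 0 < N) (hσ : 0 ≤ σ) (hσN : 4 ≤ σ * Real.log N) {x : ℝ}
    (hx : Real.log N ^ 2 ≤ x) : Real.exp (-(σ * x)) ≤ 3 / (N : ℝ) ^ 4 := by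
  refine exp_neg_le_three_div_pow hN ?_
  push_cast
  calc 4 * Real.log N ≤ σ * Real.log N * Real.log N := by gcongr
    _ = σ * Real.log N ^ 2 := by ring
    _ ≤ σ * x := by gcongr

lemma prob_forall_not_adj_snrModel_le (hγ : 0 ≤ γ) (hβ : 0 ≤ β) (hR : 1 ≤ R) (hN : 0 < N)
    (hlog : 1 ≤ Real.log N) (hN_pow : Real.log N ^ 20 ≤ N) (hβ' : 4 ≤ β * Real.log N)
    {E F : Finset (Fin N)} (hEF : Disjoint E F)
    (hE : N / Real.log N ^ 9 ≤ totalWeight (truncatedWeight γ R N) E)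
    (hF : N / Real.log N ^ 9 ≤ totalWeight (truncatedWeight γ R N) F) :
    prob (snrModel β γ N) (fun G => ∀ i ∈ E, ∀ j ∈ F, ¬ G.Adj i j) ≤ 3 / (N : ℝ) ^ 4 := by
  refine (prob_forall_not_adj_le (by positivity)
    (fun i => zero_le_one.trans (one_le_truncatedWeight hγ hR i))
    truncatedWeight_le_vertexWeight hEF).trans (exp_neg_le_three_div_pow hN ?_)
  have : 0 ≤ totalWeight (truncatedWeight γ R N) E := le_trans (by positivity) hE
  push_cast
  calc 4 * Real.log N ≤ β * Real.log N * Real.log N := by gcongr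
    _ = β * (Real.log N ^ 20 / Real.log N ^ 18) := by field_simp
    _ ≤ β * (N / Real.log N ^ 18) := by gcongr
    _ = β / N * (N / Real.log N ^ 9) * (N / Real.log N ^ 9) := by field_simp
    _ ≤ β / N * totalWeight (truncatedWeight γ R N) E * totalWeight (truncatedWeight γ R N) F := by
        gcongr

lemma prob_exists_badPair_snrModel_le (hγ : 0 ≤ γ) (hβ : 0 ≤ β) (hR : 1 ≤ R)
    (hS : Supercritical (snrModel β γ N) (truncatedWeight γ R N) (smallVertices γ N)
      (N / Real.log N ^ 9) (N / Real.log N ^ 4) σ δ)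
    (hN : 0 < N) (hlog : 3 ≤ Real.log N) (hN_pow : Real.log N ^ 20 ≤ N)
    (hσ : σ ≤ Real.log N) (hσ' : 4 ≤ σ * Real.log N) (hβ' : 4 ≤ β * Real.log N)
    (hA : 1 + A ≤ Real.log N) {m n : ℕ} (hm : (N : ℝ) ≤ (1 + δ) ^ m)
    (hn : 4 * Real.log N ≤ σ * δ * n) (hmn : ((m + n : ℕ) : ℝ) ≤ A * Real.log N) :
    prob (snrModel β γ N) (fun G => ∃ s s', s ≠ s' ∧ BadPair (truncatedWeight γ R N)
      (smallVertices γ N) (N / Real.log N ^ 9) (N / Real.log N ^ 5) (m + n) s s' G) ≤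
        15 / (N : ℝ) ^ 2 := by
  have hlog₁ : 1 ≤ Real.log N := by linarith
  have h_gen := one_add_mul_div_pow_le hA hlog₁
    ((pow_le_pow_right₀ hlog₁ (by norm_num)).trans hN_pow) hmn
  have h_57 : N / Real.log N ^ 7 ≤ N / Real.log N ^ 5 :=
    div_le_div_of_nonneg_left (by positivity) (by positivity)
      (pow_le_pow_right₀ hlog₁ (by norm_num))
  have h_cut := mul_div_pow_succ_le (by positivity) hlog (Nat.cast_nonneg N) 4
  have h_prob := hS.prob_exists_badPair_le (ε := 3 / (N : ℝ) ^ 4) (k := N / Real.log N ^ 5)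
    (by positivity) (by positivity)
    ((mul_div_pow_le hσ hlog₁ (by norm_num) (Nat.cast_nonneg N)).trans hm)
    (exp_one_sub_le_three_div_pow hN (by exact_mod_cast hn)) h_gen (by linarith)
    (fun E F => prob_forall_not_adj_snrModel_le hγ hβ hR hN hlog₁ hN_pow hβ')
    (fun i hi => exp_neg_mul_le_three_div_pow hN hS.σ_pos.le hσ' (sq_log_le_truncatedWeight hi))
  refine h_prob.trans_eq ?_
  rw [Fintype.card_fin]
  field_simp
  norm_num

theorem exists_withHighProb_forall_not_badPair (hγ : 0 ≤ γ) (hβ : 0 < β) (hR : 1 ≤ R)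
    (hσ : 0 < σ) (hδ : 0 < δ)
    (hS : ∀ᶠ N : ℕ in atTop, Supercritical (snrModel β γ N) (truncatedWeight γ R N)
      (smallVertices γ N) (N / Real.log N ^ 9) (N / Real.log N ^ 4) σ δ) :
    ∃ A, WithHighProb (snrModel β γ) fun N G => ∃ r : ℕ, (r : ℝ) ≤ A * Real.log N ∧
      ∀ s s', s ≠ s' → ¬ BadPair (truncatedWeight γ R N) (smallVertices γ N)
        (N / Real.log N ^ 9) (N / Real.log N ^ 5) r s s' G := by
  obtain ⟨A, hA⟩ := exists_le_pow_and_le_mul hδ (mul_pos hσ hδ)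
  have h_lim : Tendsto (fun N : ℕ => 15 / (N : ℝ) ^ 2) atTop (nhds 0) :=
    tendsto_const_nhds.div_atTop
      ((tendsto_pow_atTop two_ne_zero).comp tendsto_natCast_atTop_atTop)
  refine ⟨A, WithHighProb.of_prob_not_le (snrModel_mem_Icc hβ.le hγ) h_lim ?_⟩
  filter_upwards [hS, eventually_gt_atTop 0, eventually_le_log 3, eventually_log_pow_le 20,
    eventually_le_log σ, eventually_le_log (4 / σ), eventually_le_log (4 / β),
    eventually_le_log (1 + A)] with N hS hN hlog hN_pow hσN hσN' hβN hAN
  obtain ⟨m, n, hm, hn, hmn⟩ := hA N (by linarith)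
  refine (prob_mono hS.mem_Icc fun G hG => ?_).trans <|
    prob_exists_badPair_snrModel_le hγ hβ.le hR hS hN hlog hN_pow hσN
      ((div_le_iff₀' hσ).1 hσN') ((div_le_iff₀' hβ).1 hβN) hAN hm hn hmn
  by_contra! h
  exact hG ⟨m + n, hmn, h⟩

theorem Supercritical.prob_not_le_totalWeight_explore_le {V : Type*} [Fintype V] [LinearOrder V]
    {p : V → V → ℝ} {ω : V → ℝ} {M X : Finset V} {B K : ℝ} (hS : Supercritical p ω M B K σ δ)
    {m n : ℕ} (hm : σ * B ≤ (1 + δ) ^ m) {x : Finset V × Finset V}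
    (hx : Admissible M X B K (m + n) x) :
    prob p (fun G => ¬ B ≤ totalWeight ω (explore ω B G (m + n) x).1) ≤
      Real.exp (1 - σ * δ * n) + Real.exp (-(σ * totalWeight ω x.1)) :=
  calc _ ≤ prob p (fun G => Stalled ω B (explore ω B G (m + n) x) ∨
          (explore ω B G (m + n) x).1 = ∅) :=
        prob_mono hS.mem_Icc fun _ h => or_iff_not_imp_left.2 fun h_stalled =>
          (not_stalled_iff.1 h_stalled).resolve_left h
    _ ≤ _ := (prob_or_le hS.mem_Icc _ _).trans
        (add_le_add (hS.prob_stalled_le le_rfl hm n hx) (hS.prob_extinct_le le_rfl hx))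

lemma admissible_smallVertices (hlog : 1 ≤ Real.log N) (hN_pow : Real.log N ^ 9 ≤ N)
    (hA : 1 + A ≤ Real.log N) {r : ℕ} (hr : (r : ℝ) ≤ A * Real.log N) {F : Finset (Fin N)}
    (hF : F ⊆ smallVertices γ N) :
    Admissible (smallVertices γ N) ∅ (N / Real.log N ^ 9) (N / Real.log N ^ 4) r
      (F, smallVertices γ N \ F) := by
  have h_gen := one_add_mul_div_pow_le hA hlog hN_pow hr
  have h_74 : N / Real.log N ^ 7 ≤ N / Real.log N ^ 4 :=
    div_le_div_of_nonneg_left (by positivity) (by positivity)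
      (pow_le_pow_right₀ hlog (by norm_num))
  refine ⟨Finset.disjoint_sdiff, Finset.disjoint_empty_right _, Finset.sdiff_subset, ?_⟩
  rw [Finset.union_sdiff_of_subset hF, Finset.sdiff_self, Finset.card_empty, Nat.cast_zero]
  linarith

lemma prob_not_exists_le_card_reachable_le (hR : 1 ≤ R)
    (hS : Supercritical (snrModel β γ N) (truncatedWeight γ R N) (smallVertices γ N)
      (N / Real.log N ^ 9) (N / Real.log N ^ 4) σ δ)
    (hN : 0 < N) (hlog : 1 ≤ Real.log N) (hN_pow : Real.log N ^ 9 ≤ N)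
    (hσ : σ ≤ Real.log N) (hσ' : 4 ≤ σ * Real.log N) (hRN : 2 * R ≤ Real.log N)
    (hA : 1 + A ≤ Real.log N) {m n : ℕ} (hm : (N : ℝ) ≤ (1 + δ) ^ m)
    (hn : 4 * Real.log N ≤ σ * δ * n) (hmn : ((m + n : ℕ) : ℝ) ≤ A * Real.log N)
    {F : Finset (Fin N)} (hF : F ⊆ smallVertices γ N) (hF_le : Real.log N ^ 2 ≤ F.card)
    (hF_ge : (F.card : ℝ) ≤ 2 * Real.log N ^ 2) :
    prob (snrModel β γ N) (fun G => ¬ ∃ s, N / Real.log N ^ 12 ≤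
      ((Finset.univ.filter fun x => G.Reachable s x).card : ℝ)) ≤ 6 / (N : ℝ) ^ 4 := by
  have hF_pos : (0 : ℝ) < F.card := lt_of_lt_of_le (by positivity) hF_le
  calc _ ≤ prob (snrModel β γ N) (fun G => ¬ N / Real.log N ^ 9 ≤
          totalWeight (truncatedWeight γ R N) (explore (truncatedWeight γ R N) (N / Real.log N ^ 9)
            G (m + n) (F, smallVertices γ N \ F)).1) := by
        refine prob_mono hS.mem_Icc fun G hG h => hG ?_
        obtain ⟨s, hs⟩ := exists_le_card_reachable hF (Finset.card_pos.1 (by exact_mod_cast hF_pos))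
          (by positivity) truncatedWeight_le h
        refine ⟨s, le_trans ?_ hs⟩
        rw [div_div]
        gcongr
        calc Real.log N ^ 9 * (R * F.card)
            ≤ Real.log N ^ 9 * (R * (2 * Real.log N ^ 2)) := by gcongr
          _ = Real.log N ^ 11 * (2 * R) := by ring
          _ ≤ Real.log N ^ 11 * Real.log N := by gcongr
          _ = _ := by ring
    _ ≤ _ := hS.prob_not_le_totalWeight_explore_le
        ((mul_div_pow_le hσ hlog (by norm_num) (Nat.cast_nonneg N)).trans hm)
        (admissible_smallVertices hlog hN_pow hA hmn hF)
    _ ≤ 3 / (N : ℝ) ^ 4 + 3 / (N : ℝ) ^ 4 := add_le_add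
        (exp_one_sub_le_three_div_pow hN (by exact_mod_cast hn))
        (exp_neg_mul_le_three_div_pow hN hS.σ_pos.le hσ'
          (hF_le.trans (card_le_totalWeight hS.one_le F)))
    _ = _ := by ring

lemma exists_subset_smallVertices_card (hlog : 1 ≤ Real.log N) (hN_pow : Real.log N ^ 3 ≤ N)
    (hD : 0 < D) (hDN : 2 * D ≤ Real.log N) (h : (N : ℝ) ≤ D * (smallVertices γ N).card) :
    ∃ F ⊆ smallVertices γ N, Real.log N ^ 2 ≤ F.card ∧ (F.card : ℝ) ≤ 2 * Real.log N ^ 2 := by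
  have h_ceil : (⌈Real.log N ^ 2⌉₊ : ℝ) ≤ 2 * Real.log N ^ 2 :=
    Nat.ceil_le_two_mul (by linarith [one_le_pow₀ hlog (n := 2)])
  have h_card : ⌈Real.log N ^ 2⌉₊ ≤ (smallVertices γ N).card := by
    rw [← Nat.cast_le (α := ℝ)]
    refine le_of_mul_le_mul_left ?_ hD
    calc D * (⌈Real.log N ^ 2⌉₊ : ℝ) ≤ D * (2 * Real.log N ^ 2) := by gcongr
      _ = 2 * D * Real.log N ^ 2 := by ring
      _ ≤ Real.log N * Real.log N ^ 2 := by gcongr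
      _ = Real.log N ^ 3 := by ring
      _ ≤ _ := hN_pow.trans h
  obtain ⟨F, hF, hF_card⟩ := Finset.exists_subset_card_eq h_card
  exact ⟨F, hF, hF_card ▸ Nat.le_ceil _, hF_card ▸ h_ceil⟩

theorem withHighProb_exists_le_card_reachable (hγ : 0 ≤ γ) (hβ : 0 < β) (hR : 1 ≤ R)
    (hσ : 0 < σ) (hδ : 0 < δ)
    (hS : ∀ᶠ N : ℕ in atTop, Supercritical (snrModel β γ N) (truncatedWeight γ R N)
      (smallVertices γ N) (N / Real.log N ^ 9) (N / Real.log N ^ 4) σ δ)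
    (hD : 0 < D) (h_card : ∀ᶠ N : ℕ in atTop, (N : ℝ) ≤ D * (smallVertices γ N).card) :
    WithHighProb (snrModel β γ) fun N G => ∃ s, N / Real.log N ^ 12 ≤
      ((Finset.univ.filter fun x => G.Reachable s x).card : ℝ) := by
  obtain ⟨A, hA⟩ := exists_le_pow_and_le_mul hδ (mul_pos hσ hδ)
  have h_lim : Tendsto (fun N : ℕ => 6 / (N : ℝ) ^ 4) atTop (nhds 0) :=
    tendsto_const_nhds.div_atTop
      ((tendsto_pow_atTop four_ne_zero).comp tendsto_natCast_atTop_atTop)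
  refine WithHighProb.of_prob_not_le (snrModel_mem_Icc hβ.le hγ) h_lim ?_
  filter_upwards [hS, h_card, eventually_gt_atTop 0, eventually_le_log 1, eventually_log_pow_le 3,
    eventually_log_pow_le 9, eventually_le_log σ, eventually_le_log (4 / σ),
    eventually_le_log (2 * R), eventually_le_log (2 * D), eventually_le_log (1 + A)]
    with N hS h_card hN hlog hN_pow hN_pow' hσN hσN' hRN hDN hAN
  obtain ⟨m, n, hm, hn, hmn⟩ := hA N hlog
  obtain ⟨F, hF, hF_le, hF_ge⟩ := exists_subset_smallVertices_card hlog hN_pow hD hDN h_card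
  exact prob_not_exists_le_card_reachable_le hR hS hN hlog hN_pow' hσN ((div_le_iff₀' hσ).1 hσN')
    hRN hAN hm hn hmn hF hF_le hF_ge

lemma edist_edgesMeeting_smallVertices_le (hγ : γ ∈ Set.Icc 0 (1 / 2)) (hR : 1 ≤ R)
    (hN : 0 < N) (hlog : 1 < Real.log N) (hN_pow : Real.log N ^ 20 ≤ N) {G : SimpleGraph (Fin N)}
    (h_degree : ∀ i, (G.degree i : ℝ) ≤ Real.log N ^ 2 * vertexWeight γ N i) {r : ℕ}
    (h_pair : ∀ s s', s ≠ s' → ¬ BadPair (truncatedWeight γ R N) (smallVertices γ N)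
      (N / Real.log N ^ 9) (N / Real.log N ^ 5) r s s' G) {s s' : Fin N} (h : G.Reachable s s') :
    (edgesMeeting G (smallVertices γ N)).edist s s' ≤ (3 * (r + 1 + r) : ℕ) := by
  refine edist_le_of_forall_not_badPair h_pair (fun i => ?_) (fun F F' hF h_adj => ?_) h
  · refine (truncatedWeight_le_vertexWeight i).trans_lt
      (lt_of_pow_lt_pow_left₀ 2 (by positivity) ?_)
    refine (sq_vertexWeight_le_natCast hγ.2 i).trans_lt ?_
    have h_lt : Real.log N ^ 18 < N :=
      (pow_lt_pow_right₀ hlog (by norm_num)).trans_le hN_pow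
    rw [div_pow, ← pow_mul, lt_div_iff₀ (by positivity), sq]
    gcongr
  · have h_deg : ∀ i, (G.degree i : ℝ) ≤ Real.log N ^ 4 * truncatedWeight γ R N i := fun i =>
      calc (G.degree i : ℝ) ≤ Real.log N ^ 2 * vertexWeight γ N i := h_degree i
        _ ≤ Real.log N ^ 2 * (Real.log N ^ 2 * truncatedWeight γ R N i) := by
            gcongr
            exact vertexWeight_le_mul_truncatedWeight hγ.1 hR hlog.le i
        _ = _ := by ring
    calc (F'.card : ℝ) ≤ Real.log N ^ 4 * totalWeight (truncatedWeight γ R N) F :=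
          card_le_mul_totalWeight h_deg h_adj
      _ ≤ Real.log N ^ 4 * (N / Real.log N ^ 9) := by gcongr
      _ = _ := by field_simp

/-- The features of the random graph that determine the order of the consensus time up to powers
of `log N`: the degrees, the distances along edges that meet the small vertices, and the size of the
largest component. -/
structure Typical (γ : ℝ) (G : SimpleGraph (Fin N)) : Prop where
  degree_le : ∀ i, (G.degree i : ℝ) ≤ Real.log N ^ 2 * vertexWeight γ N i
  exists_edist_le : ∃ l : ℕ, 0 < l ∧ (l : ℝ) ≤ Real.log N ^ 2 ∧
    ∀ s t, G.Reachable s t → (edgesMeeting G (smallVertices γ N)).edist s t ≤ l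
  exists_le_card_reachable : ∃ s, N / Real.log N ^ 12 ≤
    ((Finset.univ.filter fun x => G.Reachable s x).card : ℝ)

theorem withHighProb_typical (hγ : γ ∈ Set.Icc 0 (1 / 2)) (hβ : 1 - 2 * γ < β) :
    WithHighProb (snrModel β γ) fun _ G => Typical γ G := by
  obtain ⟨R, σ, δ, hR, hS, h_card⟩ := exists_supercritical_snrModel hγ hβ
  have hβ₀ : 0 < β := by linarith [hγ.2]
  have h_mem := snrModel_mem_Icc hβ₀.le hγ.1
  obtain ⟨hσ, hδ⟩ : 0 < σ ∧ 0 < δ := hS.exists.elim fun _ h => ⟨h.σ_pos, h.δ_pos⟩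
  obtain ⟨A, h_pair⟩ := exists_withHighProb_forall_not_badPair hγ.1 hβ₀ hR hσ hδ hS
  have h_comp := withHighProb_exists_le_card_reachable hγ.1 hβ₀ hR hσ hδ hS
    (by positivity : 0 < β * R ^ 2) h_card
  refine (((withHighProb_degree_le hγ hβ₀.le).and h_mem h_pair).and h_mem h_comp).mono h_mem ?_
  filter_upwards [eventually_gt_atTop 0, eventually_le_log 2, eventually_log_pow_le 20,
    eventually_le_log (6 * A + 3)] with N hN hlog hN_pow hAN G ⟨⟨h_degree, r, hr, h_pair⟩, h_comp⟩
  refine ⟨h_degree, ⟨3 * (r + 1 + r), by positivity, ?_, fun s t =>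
    edist_edgesMeeting_smallVertices_le hγ hR hN (by linarith) hN_pow h_degree h_pair⟩, h_comp⟩
  push_cast
  nlinarith

end TypicalGraph

end RandomGraph

namespace VoterModel

section MarkovSemigroup

attribute [local instance] Matrix.linftyOpNormedRing Matrix.linftyOpNormedAlgebra

variable {S : Type*} [Fintype S] [DecidableEq S]

lemma exp_apply_nonneg {A : Matrix S S ℝ} (hA : ∀ a b, 0 ≤ A a b) (a b : S) :
    0 ≤ NormedSpace.exp A a b := by
  have h_pow : ∀ (n : ℕ) a b, 0 ≤ (A ^ n) a b := by
    intro n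
    induction n with
    | zero => exact fun a b => by rw [pow_zero, Matrix.one_apply]; split_ifs <;> simp
    | succ n ih =>
      intro a b
      rw [pow_succ, Matrix.mul_apply]
      exact Finset.sum_nonneg fun k _ => mul_nonneg (ih a k) (hA k b)
  have h_sum := (NormedSpace.exp_series_hasSum_exp' (𝕂 := ℝ) A).map
    (Matrix.entryAddMonoidHom ℝ a b) (continuous_id.matrix_elem a b)
  exact h_sum.nonneg fun n => mul_nonneg (by positivity) (h_pow n a b)

theorem exp_smul_apply_nonneg {Q : Matrix S S ℝ} (hQ : ∀ a b, a ≠ b → 0 ≤ Q a b) {t : ℝ}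
    (ht : 0 ≤ t) (a b : S) : 0 ≤ NormedSpace.exp (t • Q) a b := by
  set c : ℝ := ∑ x, |Q x x|
  have h_split : t • Q = t • (Q + c • 1) + Matrix.diagonal fun _ => -(t * c) := by
    rw [← Matrix.smul_one_eq_diagonal, smul_add, smul_smul, neg_smul, add_neg_cancel_right]
  have h_comm : Commute (t • (Q + c • 1)) (Matrix.diagonal fun _ : S => -(t * c)) := by
    rw [← Matrix.smul_one_eq_diagonal]
    exact (Commute.one_right _).smul_right _
  have h_exp : NormedSpace.exp (Matrix.diagonal fun _ : S => -(t * c)) =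
      Real.exp (-(t * c)) • 1 := by
    rw [Matrix.exp_diagonal, Matrix.smul_one_eq_diagonal, Pi.exp_def, Real.exp_eq_exp_ℝ]
  rw [h_split, Matrix.exp_add_of_commute _ _ h_comm, h_exp, Matrix.mul_smul, mul_one]
  refine mul_nonneg (Real.exp_nonneg _) (exp_apply_nonneg (fun x y => mul_nonneg ht ?_) a b)
  rcases eq_or_ne x y with rfl | hxy
  · have h_diag : |Q x x| ≤ c :=
      Finset.single_le_sum (f := fun x => |Q x x|) (fun _ _ => abs_nonneg _) (Finset.mem_univ x)
    simpa using neg_le_iff_add_nonneg.1 ((neg_le_neg h_diag).trans (neg_abs_le (Q x x)))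
  · simpa [hxy] using hQ x y hxy

/-- Expectation of `f` at time `t` for the Markov chain with generator `Q` and initial weights
`μ`. -/
def markovExpect (Q : Matrix S S ℝ) (μ : S → ℝ) (t : ℝ) : (S → ℝ) →ₗ[ℝ] ℝ where
  toFun f := μ ⬝ᵥ (NormedSpace.exp (t • Q)).mulVec f
  map_add' f g := by rw [Matrix.mulVec_add, dotProduct_add]
  map_smul' c f := by rw [Matrix.mulVec_smul, dotProduct_smul, RingHom.id_apply]

variable {Q : Matrix S S ℝ} {μ : S → ℝ}

lemma markovExpect_apply (t : ℝ) (f : S → ℝ) :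
    markovExpect Q μ t f = ∑ a, ∑ b, μ a * NormedSpace.exp (t • Q) a b * f b := by
  simp [markovExpect, dotProduct, Matrix.mulVec, Finset.mul_sum, mul_assoc]

lemma markovExpect_zero (f : S → ℝ) : markovExpect Q μ 0 f = ∑ a, μ a * f a := by
  simp [markovExpect, dotProduct]

lemma hasDerivAt_markovExpect (t : ℝ) (f : S → ℝ) :
    HasDerivAt (fun t => markovExpect Q μ t f) (markovExpect Q μ t (Q.mulVec f)) t := by
  let L : Matrix S S ℝ →ₗ[ℝ] ℝ :=
    { toFun := fun A => μ ⬝ᵥ A.mulVec f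
      map_add' := fun A A' => by rw [Matrix.add_mulVec, dotProduct_add]
      map_smul' := fun c A => by rw [Matrix.smul_mulVec, dotProduct_smul, RingHom.id_apply] }
  have h := (LinearMap.toContinuousLinearMap L).hasFDerivAt.comp_hasDerivAt t
    (hasDerivAt_exp_smul_const (𝕂 := ℝ) Q t)
  exact h.congr_deriv (congrArg (μ ⬝ᵥ ·) (Matrix.mulVec_mulVec _ _ _).symm)

lemma markovExpect_mono (hQ : ∀ a b, a ≠ b → 0 ≤ Q a b) (hμ : ∀ a, 0 ≤ μ a) {t : ℝ} (ht : 0 ≤ t)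
    {f g : S → ℝ} (h : ∀ a, f a ≤ g a) : markovExpect Q μ t f ≤ markovExpect Q μ t g := by
  simp only [markovExpect_apply]
  exact Finset.sum_le_sum fun a _ => Finset.sum_le_sum fun b _ =>
    mul_le_mul_of_nonneg_left (h b) (mul_nonneg (hμ a) (exp_smul_apply_nonneg hQ ht a b))

lemma markovExpect_one (hQ : Q.mulVec 1 = 0) (hμ : ∑ a, μ a = 1) (t : ℝ) :
    markovExpect Q μ t 1 = 1 := by
  have h_deriv : ∀ t, HasDerivAt (fun t => markovExpect Q μ t 1) 0 t := fun t => by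
    simpa [hQ] using hasDerivAt_markovExpect (Q := Q) (μ := μ) t 1
  rw [is_const_of_deriv_eq_zero (fun t => (h_deriv t).differentiableAt)
    (fun t => (h_deriv t).deriv) t 0, markovExpect_zero]
  simpa using hμ

end MarkovSemigroup

section DirichletForm

lemma sum_darts_sub {V : Type*} {H : SimpleGraph V} (f : V → ℝ) {i j : V} (w : H.Walk i j) :
    (w.darts.map fun d => f d.fst - f d.snd).sum = f i - f j := by
  induction w with
  | nil => simp
  | cons h w ih => simp [ih]

variable {V : Type*} [Fintype V] {c : V → V → ℝ}

/-- Twice the Dirichlet form of `f` on the network with conductances `c`. -/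
def energy (c : V → V → ℝ) (f : V → ℝ) : ℝ :=
  ∑ x, ∑ y, c x y * (f y - f x) ^ 2

lemma energy_nonneg (hc : ∀ x y, 0 ≤ c x y) (f : V → ℝ) : 0 ≤ energy c f :=
  Finset.sum_nonneg fun x _ => Finset.sum_nonneg fun y _ => mul_nonneg (hc x y) (sq_nonneg _)

lemma sum_sum_mul_sub_eq_zero (hc : ∀ x y, c x y = c y x) (f : V → ℝ) :
    ∑ x, ∑ y, c x y * (f y - f x) = 0 := by
  have h_swap : ∑ x, ∑ y, c x y * (f y - f x) = ∑ x, ∑ y, c x y * (f x - f y) := by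
    rw [Finset.sum_comm]
    simp only [hc]
  have h_neg : ∑ x, ∑ y, c x y * (f x - f y) = -∑ x, ∑ y, c x y * (f y - f x) := by
    simp only [← Finset.sum_neg_distrib, ← mul_neg, neg_sub]
  linarith

lemma two_mul_sum_mul_sum_eq_neg_energy (hc : ∀ x y, c x y = c y x) (f : V → ℝ) :
    2 * ∑ x, f x * ∑ y, c x y * (f y - f x) = -energy c f := by
  have h_zero := sum_sum_mul_sub_eq_zero hc fun x => f x ^ 2
  rw [energy, ← sub_eq_zero, ← h_zero]
  simp only [Finset.mul_sum, ← Finset.sum_neg_distrib, ← Finset.sum_sub_distrib]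
  exact Finset.sum_congr rfl fun x _ => Finset.sum_congr rfl fun y _ => by ring

/-- A path bound in the style of Poincaré: Cauchy–Schwarz along a shortest path of `H`. -/
theorem sq_sub_le_mul_energy {H : SimpleGraph V} (hc : ∀ x y, 0 ≤ c x y) {ρ : ℝ} (hρ : 0 ≤ ρ)
    (hH : ∀ x y, H.Adj x y → 1 ≤ ρ * c x y) (f : V → ℝ) {l : ℕ} {i j : V}
    (h : H.edist i j ≤ l) : (f i - f j) ^ 2 ≤ l * ρ * energy c f := by
  classical
  have h_reach : H.Reachable i j :=
    SimpleGraph.reachable_of_edist_ne_top (ne_top_of_le_ne_top (by simp) h)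
  obtain ⟨w, hw, hw_len⟩ := h_reach.exists_path_of_dist
  have h_len : w.length ≤ l := by
    rw [hw_len]
    exact_mod_cast h_reach.coe_dist_eq_edist.trans_le h
  have h_nodup := SimpleGraph.Walk.darts_nodup_of_support_nodup hw.support_nodup
  have h_card : w.darts.toFinset.card = w.length := by
    rw [List.toFinset_card_of_nodup h_nodup, SimpleGraph.Walk.length_darts]
  have h_energy : ∑ d ∈ w.darts.toFinset, (f d.fst - f d.snd) ^ 2 ≤ ρ * energy c f :=
    calc ∑ d ∈ w.darts.toFinset, (f d.fst - f d.snd) ^ 2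
        ≤ ∑ d ∈ w.darts.toFinset, ρ * c d.fst d.snd * (f d.snd - f d.fst) ^ 2 :=
          Finset.sum_le_sum fun d _ => by
            rw [← neg_sub, neg_sq]
            exact le_mul_of_one_le_left (sq_nonneg _) (hH _ _ d.adj)
      _ = ∑ z ∈ w.darts.toFinset.image SimpleGraph.Dart.toProd,
            ρ * c z.1 z.2 * (f z.2 - f z.1) ^ 2 :=
          by rw [Finset.sum_image fun d _ d' _ h => SimpleGraph.Dart.ext _ _ h]
      _ ≤ ∑ z : V × V, ρ * c z.1 z.2 * (f z.2 - f z.1) ^ 2 :=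
          Finset.sum_le_univ_sum_of_nonneg fun z =>
            mul_nonneg (mul_nonneg hρ (hc z.1 z.2)) (sq_nonneg _)
      _ = ρ * energy c f := by
          simp only [energy, Finset.mul_sum, Fintype.sum_prod_type, mul_assoc]
  calc (f i - f j) ^ 2 = (∑ d ∈ w.darts.toFinset, (f d.fst - f d.snd)) ^ 2 := by
        rw [List.sum_toFinset _ h_nodup, sum_darts_sub]
    _ ≤ w.length * ∑ d ∈ w.darts.toFinset, (f d.fst - f d.snd) ^ 2 := by
        rw [← h_card]
        exact sq_sum_le_card_mul_sum_sq
    _ ≤ l * (ρ * energy c f) := by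
        gcongr
    _ = l * ρ * energy c f := (mul_assoc _ _ _).symm

/-- Generator of two independent walks with jump rates `c`, applied to `W` at `(i, j)`. -/
def pairDrift (c : V → V → ℝ) (W : V → V → ℝ) (i j : V) : ℝ :=
  ∑ k, c i k * (W k j - W i j) + ∑ k, c j k * (W i k - W i j)

lemma sum_pairDrift (hc : ∀ x y, c x y = c y x) (W : V → V → ℝ) :
    ∑ i, ∑ j, pairDrift c W i j = 0 := by
  simp only [pairDrift, Finset.sum_add_distrib]
  rw [Finset.sum_comm, Finset.sum_eq_zero fun j _ => sum_sum_mul_sub_eq_zero hc fun i => W i j,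
    Finset.sum_eq_zero fun i _ => sum_sum_mul_sub_eq_zero hc (W i), add_zero]

lemma sum_mul_pairDrift (hc : ∀ x y, c x y = c y x) {W : V → V → ℝ} (hW : ∀ i j, W i j = W j i) :
    ∑ i, ∑ j, W i j * pairDrift c W i j = -∑ j, energy c fun i => W i j := by
  have h_first : ∑ i, ∑ j, W i j * ∑ k, c i k * (W k j - W i j) =
      ∑ j, ∑ i, W i j * ∑ k, c i k * (W k j - W i j) := Finset.sum_comm
  have h_second : ∑ i, ∑ j, W i j * ∑ k, c j k * (W i k - W i j) =
      ∑ j, ∑ i, W i j * ∑ k, c i k * (W k j - W i j) := by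
    refine Finset.sum_congr rfl fun i _ => Finset.sum_congr rfl fun j _ => ?_
    simp only [hW i]
  simp only [pairDrift, mul_add, Finset.sum_add_distrib]
  rw [h_first, h_second, ← two_mul, Finset.mul_sum, ← Finset.sum_neg_distrib]
  exact Finset.sum_congr rfl fun j _ =>
    two_mul_sum_mul_sum_eq_neg_energy hc fun i => W i j

end DirichletForm

section Generator

variable {N : ℕ} (G : SimpleGraph (Fin N)) (θ : ℝ)

/-- The rate `d(i)^θ / d(i)` at which `i` picks a given neighbour; it is `0` at an isolated vertex,
since `0⁻¹ = 0`. -/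
def contactRate (i : Fin N) : ℝ :=
  (G.degree i : ℝ) ^ θ * (G.degree i : ℝ)⁻¹

/-- The symmetric rate at which `i` adopts the opinion of `k`. -/
def conductance (i k : Fin N) : ℝ :=
  if G.Adj i k then (contactRate G θ i + contactRate G θ k) / 2 else 0

variable {G θ}

lemma contactRate_nonneg (i : Fin N) : 0 ≤ contactRate G θ i := by
  unfold contactRate
  positivity

lemma conductance_nonneg (i k : Fin N) : 0 ≤ conductance G θ i k := by
  unfold conductance
  split_ifs
  · linarith [contactRate_nonneg (G := G) (θ := θ) i, contactRate_nonneg (G := G) (θ := θ) k]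
  · exact le_rfl

lemma conductance_comm (i k : Fin N) : conductance G θ i k = conductance G θ k i := by
  simp only [conductance, G.adj_comm i k, add_comm]

lemma sum_conductance_mul (g : Fin N → Fin N → ℝ) :
    ∑ i, ∑ k, conductance G θ i k * g i k =
      ∑ i, ∑ k, (if G.Adj i k then contactRate G θ i else 0) * ((g i k + g k i) / 2) := by
  have h_swap : ∑ i, ∑ k, (if G.Adj i k then contactRate G θ k else 0) * (g i k / 2) =
      ∑ i, ∑ k, (if G.Adj i k then contactRate G θ i else 0) * (g k i / 2) := by
    rw [Finset.sum_comm]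
    simp only [G.adj_comm]
  have h_split : ∑ i, ∑ k, conductance G θ i k * g i k =
      ∑ i, ∑ k, (if G.Adj i k then contactRate G θ i else 0) * (g i k / 2) +
        ∑ i, ∑ k, (if G.Adj i k then contactRate G θ k else 0) * (g i k / 2) := by
    simp only [← Finset.sum_add_distrib, conductance]
    refine Finset.sum_congr rfl fun i _ => Finset.sum_congr rfl fun k _ => ?_
    split_ifs <;> ring
  rw [h_split, h_swap]
  simp only [← Finset.sum_add_distrib, ← mul_add, add_div]

lemma sum_conductance :
    ∑ i, ∑ k, conductance G θ i k = ∑ i, contactRate G θ i * G.degree i := by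
  have h := sum_conductance_mul (G := G) (θ := θ) fun _ _ => 1
  simpa [← Finset.sum_filter, ← SimpleGraph.neighborFinset_eq_filter, mul_comm] using h

theorem sum_conductance_le (hθ : θ ≤ 2) :
    ∑ i, ∑ k, conductance G θ i k ≤ ∑ i, (G.degree i : ℝ) ^ 2 := by
  rw [sum_conductance]
  refine Finset.sum_le_sum fun i _ => ?_
  rcases Nat.eq_zero_or_pos (G.degree i) with h | h
  · simp [h]
  · have h_one : (1 : ℝ) ≤ G.degree i := by exact_mod_cast h
    rw [contactRate, inv_mul_cancel_right₀ (by positivity), ← Real.rpow_two]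
    exact Real.rpow_le_rpow_of_exponent_le h_one hθ

theorem voterQ_mulVec_apply (f : (Fin N → Bool) → ℝ) (η : Fin N → Bool) :
    (voterQ G θ).mulVec f η =
      ∑ i, ∑ k, conductance G θ i k * (f (Function.update η i (η k)) - f η) := by
  have h_row : voterQ G θ η = ∑ i, (G.degree i : ℝ) ^ θ • ∑ j ∈ G.neighborFinset i,
      ((G.degree i : ℝ))⁻¹ • ((1 / 2 : ℝ) • Pi.single (Function.update η j (η i)) 1 +
        (1 / 2 : ℝ) • Pi.single (Function.update η i (η j)) 1 - Pi.single η 1) := by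
    ext η'
    simp [voterQ, Pi.single_apply, Finset.sum_apply, eq_comm]
  rw [Matrix.mulVec, h_row, sum_conductance_mul]
  simp only [sum_dotProduct, smul_dotProduct, smul_eq_mul, SimpleGraph.neighborFinset_eq_filter,
    Finset.sum_filter, Finset.mul_sum]
  refine Finset.sum_congr rfl fun i _ => Finset.sum_congr rfl fun j _ => ?_
  split_ifs
  · simp only [add_dotProduct, sub_dotProduct, smul_dotProduct, single_one_dotProduct, smul_eq_mul,
      contactRate]
    ring
  · simp

lemma voterQ_nonneg_of_ne (η η' : Fin N → Bool) (h : η ≠ η') : 0 ≤ voterQ G θ η η' := by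
  simp only [voterQ, Matrix.of_apply, if_neg h, sub_zero]
  positivity

lemma voterQ_mulVec_one : (voterQ G θ).mulVec 1 = 0 := by
  ext η
  simp [voterQ_mulVec_apply]

end Generator

section InitialLaw

variable {N : ℕ} {u : ℝ}

lemma muU_nonneg (hu : u ∈ Set.Ioo (0 : ℝ) 1) (η : Fin N → Bool) : 0 ≤ muU u η :=
  Finset.prod_nonneg fun i _ => by
    split_ifs
    exacts [hu.1.le, sub_nonneg.2 hu.2.le]

lemma sum_muU_mul_prod (f : Fin N → Bool → ℝ) :
    ∑ η, muU u η * ∏ k, f k (η k) = ∏ k, (u * f k true + (1 - u) * f k false) := by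
  simp only [muU, ← Finset.prod_mul_distrib]
  rw [← Fintype.prod_sum fun (k : Fin N) (b : Bool) => (if b then u else 1 - u) * f k b]
  simp

lemma sum_muU : ∑ η : Fin N → Bool, muU u η = 1 := by
  simpa using sum_muU_mul_prod (N := N) (u := u) fun _ _ => 1

lemma sum_muU_mul_ite_true_false {i j : Fin N} (hij : i ≠ j) :
    ∑ η : Fin N → Bool, muU u η * (if η i = true ∧ η j = false then 1 else 0) = u * (1 - u) := by
  have h := sum_muU_mul_prod (u := u) fun k b =>
    (if k = i then (if b then 1 else 0) else 1) * (if k = j then (if b then 0 else 1) else 1)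
  have h_factor : ∀ k : Fin N,
      u * ((if k = i then 1 else 1) * (if k = j then 0 else 1)) +
        (1 - u) * ((if k = i then 0 else 1) * (if k = j then 1 else 1)) =
      (if k = i then u else 1) * (if k = j then 1 - u else 1) := fun k => by
    by_cases hki : k = i
    · simp [hki, hij]
    · by_cases hkj : k = j <;> simp [hki, hkj, hij.symm]
  simp only [Finset.prod_mul_distrib, Finset.prod_ite_eq', Finset.mem_univ, if_true,
    Bool.false_eq_true, if_false] at h
  rw [Finset.prod_congr rfl fun k _ => h_factor k] at h
  simp only [Finset.prod_mul_distrib, Finset.prod_ite_eq', Finset.mem_univ, if_true] at h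
  rw [← h]
  refine Finset.sum_congr rfl fun η _ => ?_
  cases η i <;> cases η j <;> simp

lemma mul_le_sum_muU_mul_ite_ne (hu : u ∈ Set.Ioo (0 : ℝ) 1) {i j : Fin N} (hij : i ≠ j) :
    u * (1 - u) ≤ ∑ η : Fin N → Bool, muU u η * (if η i ≠ η j then 1 else 0) := by
  rw [← sum_muU_mul_ite_true_false hij]
  refine Finset.sum_le_sum fun η _ => mul_le_mul_of_nonneg_left ?_ (muU_nonneg hu η)
  cases η i <;> cases η j <;> simp

end InitialLaw

section Disagreement

variable {N : ℕ} {G : SimpleGraph (Fin N)} {θ u t : ℝ}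

/-- Indicator that the connected vertices `i` and `j` hold different opinions. -/
def disagree (G : SimpleGraph (Fin N)) (i j : Fin N) (η : Fin N → Bool) : ℝ :=
  if G.Reachable i j ∧ η i ≠ η j then 1 else 0

lemma disagree_comm (i j : Fin N) : disagree G i j = disagree G j i := by
  ext η
  simp only [disagree, G.reachable_comm (u := i), ne_comm (a := η i)]

lemma disagree_self (i : Fin N) : disagree G i i = 0 := by
  ext η
  simp [disagree]

lemma disagree_of_not_reachable {i j : Fin N} (h : ¬G.Reachable i j) : disagree G i j = 0 := by
  ext η
  simp [disagree, h]

lemma disagree_nonneg (i j : Fin N) (η : Fin N → Bool) : 0 ≤ disagree G i j η := by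
  unfold disagree
  split_ifs <;> norm_num

lemma disagree_le_one (i j : Fin N) (η : Fin N → Bool) : disagree G i j η ≤ 1 := by
  unfold disagree
  split_ifs <;> norm_num

lemma disagree_update_of_adj {i j k : Fin N} (hij : i ≠ j) (hik : G.Adj i k) (η : Fin N → Bool) :
    disagree G i j (Function.update η i (η k)) = disagree G k j η := by
  have h_reach : G.Reachable i j ↔ G.Reachable k j :=
    ⟨hik.symm.reachable.trans, hik.reachable.trans⟩
  simp only [disagree, Function.update_self, Function.update_of_ne hij.symm, h_reach]

lemma conductance_mul_disagree_update_sub {i j : Fin N} (hij : i ≠ j) (k : Fin N)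
    (η : Fin N → Bool) :
    conductance G θ i k * (disagree G i j (Function.update η i (η k)) - disagree G i j η) =
      conductance G θ i k * (disagree G k j η - disagree G i j η) := by
  by_cases hik : G.Adj i k
  · rw [disagree_update_of_adj hij hik]
  · simp [conductance, hik]

lemma voterQ_mulVec_disagree {i j : Fin N} (hij : i ≠ j) :
    (voterQ G θ).mulVec (disagree G i j) =
      ∑ k, conductance G θ i k • (disagree G k j - disagree G i j) +
        ∑ k, conductance G θ j k • (disagree G i k - disagree G i j) := by
  ext η
  have h_other : ∀ x ∈ Finset.univ, x ∉ ({i, j} : Finset (Fin N)) →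
      ∑ k, conductance G θ x k *
        (disagree G i j (Function.update η x (η k)) - disagree G i j η) = 0 := by
    intro x _ hx
    simp only [Finset.mem_insert, Finset.mem_singleton, not_or] at hx
    simp [disagree, Function.update_of_ne (Ne.symm hx.1), Function.update_of_ne (Ne.symm hx.2)]
  rw [voterQ_mulVec_apply, ← Finset.sum_subset (Finset.subset_univ {i, j}) h_other,
    Finset.sum_pair hij]
  simp only [conductance_mul_disagree_update_sub hij]
  simp only [disagree_comm i, conductance_mul_disagree_update_sub hij.symm]
  simp [Finset.sum_apply]

/-- Probability that the connected vertices `i` and `j` disagree at time `t`; by duality, that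
coalescing random walks started from `i` and `j` have not met and end at different opinions. -/
def disagreementProb (G : SimpleGraph (Fin N)) (θ u t : ℝ) (i j : Fin N) : ℝ :=
  markovExpect (voterQ G θ) (muU u) t (disagree G i j)

lemma disagreementProb_comm (i j : Fin N) :
    disagreementProb G θ u t i j = disagreementProb G θ u t j i := by
  rw [disagreementProb, disagree_comm, disagreementProb]

lemma disagreementProb_self (i : Fin N) : disagreementProb G θ u t i i = 0 := by
  rw [disagreementProb, disagree_self, map_zero]

lemma disagreementProb_of_not_reachable {i j : Fin N} (h : ¬G.Reachable i j) :
    disagreementProb G θ u t i j = 0 := by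
  rw [disagreementProb, disagree_of_not_reachable h, map_zero]

lemma markovExpect_voterQ_mono (hu : u ∈ Set.Ioo (0 : ℝ) 1) (ht : 0 ≤ t)
    {f g : (Fin N → Bool) → ℝ} (h : ∀ η, f η ≤ g η) :
    markovExpect (voterQ G θ) (muU u) t f ≤ markovExpect (voterQ G θ) (muU u) t g :=
  markovExpect_mono voterQ_nonneg_of_ne (muU_nonneg hu) ht h

lemma markovExpect_voterQ_one : markovExpect (voterQ G θ) (muU u) t 1 = 1 :=
  markovExpect_one voterQ_mulVec_one sum_muU t

lemma disagreementProb_nonneg (hu : u ∈ Set.Ioo (0 : ℝ) 1) (ht : 0 ≤ t) (i j : Fin N) :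
    0 ≤ disagreementProb G θ u t i j := by
  simpa [disagreementProb] using markovExpect_voterQ_mono (f := 0) hu ht (disagree_nonneg i j)

lemma disagreementProb_le_one (hu : u ∈ Set.Ioo (0 : ℝ) 1) (ht : 0 ≤ t) (i j : Fin N) :
    disagreementProb G θ u t i j ≤ 1 :=
  (markovExpect_voterQ_mono (g := 1) hu ht (disagree_le_one i j)).trans_eq markovExpect_voterQ_one

theorem hasDerivAt_disagreementProb (t : ℝ) (i j : Fin N) :
    HasDerivAt (fun t => disagreementProb G θ u t i j)
      (if i = j then 0 else pairDrift (conductance G θ) (disagreementProb G θ u t) i j) t := by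
  split_ifs with hij
  · subst hij
    simpa only [disagreementProb_self] using hasDerivAt_const t (0 : ℝ)
  · refine (hasDerivAt_markovExpect t _).congr_deriv ?_
    rw [voterQ_mulVec_disagree hij]
    simp only [map_add, map_sum, map_smul, map_sub, smul_eq_mul, pairDrift, disagreementProb]

lemma hasDerivAt_sum_sq_disagreementProb (t : ℝ) :
    HasDerivAt (fun t => ∑ i, ∑ j, disagreementProb G θ u t i j ^ 2)
      (-2 * ∑ j, energy (conductance G θ) fun i => disagreementProb G θ u t i j) t := by
  refine (HasDerivAt.fun_sum fun i _ => HasDerivAt.fun_sum fun j _ =>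
    (hasDerivAt_disagreementProb t i j).fun_pow 2).congr_deriv ?_
  rw [neg_mul, ← mul_neg, ← sum_mul_pairDrift conductance_comm disagreementProb_comm,
    Finset.mul_sum]
  simp only [Finset.mul_sum]
  refine Finset.sum_congr rfl fun i _ => Finset.sum_congr rfl fun j _ => ?_
  split_ifs with hij
  · simp [hij, disagreementProb_self]
  · simp [mul_assoc]

lemma sum_sq_disagreementProb_le_mul_sum_energy {H : SimpleGraph (Fin N)} {l : ℕ} {ρ : ℝ}
    (hρ : 0 ≤ ρ) (hH : ∀ x y, H.Adj x y → 1 ≤ ρ * conductance G θ x y)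
    (h_dist : ∀ i j, G.Reachable i j → H.edist i j ≤ l) :
    ∑ i, ∑ j, disagreementProb G θ u t i j ^ 2 ≤
      N * l * ρ * ∑ j, energy (conductance G θ) fun i => disagreementProb G θ u t i j := by
  have h_pair : ∀ i j, disagreementProb G θ u t i j ^ 2 ≤
      l * ρ * energy (conductance G θ) fun i => disagreementProb G θ u t i j := fun i j => by
    by_cases h : G.Reachable i j
    · simpa [disagreementProb_self] using sq_sub_le_mul_energy conductance_nonneg hρ hH
        (fun i => disagreementProb G θ u t i j) (h_dist i j h)
    · have := energy_nonneg conductance_nonneg (c := conductance G θ)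
        fun i => disagreementProb G θ u t i j
      rw [disagreementProb_of_not_reachable h, zero_pow two_ne_zero]
      positivity
  calc ∑ i, ∑ j, disagreementProb G θ u t i j ^ 2
      ≤ ∑ _i : Fin N, ∑ j,
          l * ρ * energy (conductance G θ) fun i => disagreementProb G θ u t i j :=
        Finset.sum_le_sum fun i _ => Finset.sum_le_sum fun j _ => h_pair i j
    _ = _ := by
        simp only [Finset.sum_const, Finset.card_univ, Fintype.card_fin, nsmul_eq_mul,
          ← Finset.mul_sum]
        ring

theorem sum_sq_disagreementProb_le (hu : u ∈ Set.Ioo (0 : ℝ) 1) {H : SimpleGraph (Fin N)} {l : ℕ}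
    {ρ : ℝ} (hρ : 0 ≤ ρ) (hH : ∀ x y, H.Adj x y → 1 ≤ ρ * conductance G θ x y)
    (h_dist : ∀ i j, G.Reachable i j → H.edist i j ≤ l) (ht : 0 ≤ t) :
    ∑ i, ∑ j, disagreementProb G θ u t i j ^ 2 ≤
      (N : ℝ) ^ 2 * Real.exp (-(2 / (N * l * ρ) * t)) := by
  set r : ℝ := 2 / (N * l * ρ) with hr
  have h_deriv : ∀ t, HasDerivAt
      (fun t => (∑ i, ∑ j, disagreementProb G θ u t i j ^ 2) * Real.exp (r * t)) _ t := fun t =>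
    (hasDerivAt_sum_sq_disagreementProb t).fun_mul
      ((hasDerivAt_id t).const_mul r).exp
  have h_anti : Antitone fun t =>
      (∑ i, ∑ j, disagreementProb G θ u t i j ^ 2) * Real.exp (r * t) := by
    refine antitone_of_deriv_nonpos (fun t => (h_deriv t).differentiableAt) fun t => ?_
    have h_energy := sum_sq_disagreementProb_le_mul_sum_energy (u := u) (t := t) hρ hH h_dist
    have h_rate : r * ∑ i, ∑ j, disagreementProb G θ u t i j ^ 2 ≤
        2 * ∑ j, energy (conductance G θ) fun i => disagreementProb G θ u t i j := by
      have : 0 ≤ ∑ j, energy (conductance G θ) fun i => disagreementProb G θ u t i j :=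
        Finset.sum_nonneg fun j _ => energy_nonneg conductance_nonneg _
      rw [hr, div_mul_eq_mul_div]
      refine div_le_of_le_mul₀ (by positivity) (by positivity) ?_
      linarith
    rw [(h_deriv t).deriv]
    simp only [id]
    nlinarith [Real.exp_pos (r * t)]
  have h_start : ∑ i, ∑ j, disagreementProb G θ u 0 i j ^ 2 ≤ (N : ℝ) ^ 2 :=
    calc ∑ i, ∑ j, disagreementProb G θ u 0 i j ^ 2 ≤ ∑ _i : Fin N, ∑ _j : Fin N, (1 : ℝ) :=
          Finset.sum_le_sum fun i _ => Finset.sum_le_sum fun j _ =>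
            pow_le_one₀ (disagreementProb_nonneg hu le_rfl i j)
              (disagreementProb_le_one hu le_rfl i j)
      _ = (N : ℝ) ^ 2 := by simp [sq]
  have h_le := h_anti ht
  simp only [mul_zero, Real.exp_zero, mul_one] at h_le
  rw [Real.exp_neg, ← div_eq_mul_inv, le_div_iff₀ (Real.exp_pos _)]
  exact h_le.trans h_start

lemma neg_le_sum_off_diag_pairDrift (hu : u ∈ Set.Ioo (0 : ℝ) 1) (ht : 0 ≤ t) :
    -(2 * ∑ i, ∑ k, conductance G θ i k) ≤ ∑ i, ∑ j,
      if i = j then 0 else pairDrift (conductance G θ) (disagreementProb G θ u t) i j := by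
  set W := disagreementProb G θ u t
  have h_diag : ∀ i, pairDrift (conductance G θ) W i i ≤ 2 * ∑ k, conductance G θ i k := by
    intro i
    rw [pairDrift, ← Finset.sum_add_distrib, Finset.mul_sum]
    refine Finset.sum_le_sum fun k _ => ?_
    have hWi : W i i = 0 := disagreementProb_self i
    have hWk : W k i = W i k := disagreementProb_comm k i
    have h_le : W i k ≤ 1 := disagreementProb_le_one hu ht i k
    rw [hWi, hWk]
    nlinarith [conductance_nonneg (G := G) (θ := θ) i k]
  have h_split : ∑ i, ∑ j, (if i = j then 0 else pairDrift (conductance G θ) W i j) =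
      ∑ i, ∑ j, pairDrift (conductance G θ) W i j - ∑ i, pairDrift (conductance G θ) W i i := by
    have h_term : ∀ i j, (if i = j then 0 else pairDrift (conductance G θ) W i j) =
        pairDrift (conductance G θ) W i j -
          if i = j then pairDrift (conductance G θ) W i j else 0 := fun i j => by
      split_ifs <;> simp
    simp only [h_term, Finset.sum_sub_distrib, Finset.sum_ite_eq, Finset.mem_univ, if_true]
  rw [h_split, sum_pairDrift conductance_comm, zero_sub, neg_le_neg_iff, Finset.mul_sum]
  exact Finset.sum_le_sum fun i _ => h_diag i

theorem sum_disagreementProb_zero_sub_le (hu : u ∈ Set.Ioo (0 : ℝ) 1) (ht : 0 ≤ t) :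
    ∑ i, ∑ j, disagreementProb G θ u 0 i j - 2 * (∑ i, ∑ k, conductance G θ i k) * t ≤
      ∑ i, ∑ j, disagreementProb G θ u t i j := by
  set S := ∑ i, ∑ k, conductance G θ i k
  have h_deriv : ∀ t, HasDerivAt
      (fun t => ∑ i, ∑ j, disagreementProb G θ u t i j + 2 * S * t) _ t := fun t =>
    (HasDerivAt.fun_sum fun i _ => HasDerivAt.fun_sum fun j _ =>
      hasDerivAt_disagreementProb t i j).add ((hasDerivAt_id t).const_mul (2 * S))
  have h_mono : MonotoneOn (fun t => ∑ i, ∑ j, disagreementProb G θ u t i j + 2 * S * t)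
      (Set.Ici 0) := by
    refine monotoneOn_of_deriv_nonneg (convex_Ici 0)
      (fun t _ => (h_deriv t).continuousAt.continuousWithinAt)
      (fun t _ => (h_deriv t).differentiableAt.differentiableWithinAt) fun t ht => ?_
    rw [interior_Ici] at ht
    rw [(h_deriv t).deriv]
    linarith [neg_le_sum_off_diag_pairDrift (G := G) (θ := θ) hu ht.le]
  have h_le := h_mono Set.self_mem_Ici ht ht
  simp only [mul_zero, add_zero] at h_le
  linarith

theorem le_sum_disagreementProb_zero (hu : u ∈ Set.Ioo (0 : ℝ) 1) (s : Fin N) {n : ℕ}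
    (hn : n = (Finset.univ.filter fun x => G.Reachable s x).card) :
    u * (1 - u) * (n * (n - 1)) ≤ ∑ i, ∑ j, disagreementProb G θ u 0 i j := by
  set F := Finset.univ.filter fun x => G.Reachable s x
  have h_pair : ∀ z ∈ F.offDiag, u * (1 - u) ≤ disagreementProb G θ u 0 z.1 z.2 := by
    rintro ⟨i, j⟩ hz
    obtain ⟨hi, hj, hij⟩ := Finset.mem_offDiag.1 hz
    have h_reach : G.Reachable i j :=
      (Finset.mem_filter.1 hi).2.symm.trans (Finset.mem_filter.1 hj).2
    simpa only [disagreementProb, markovExpect_zero, disagree, h_reach, true_and] using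
      mul_le_sum_muU_mul_ite_ne hu hij
  calc u * (1 - u) * (n * (n - 1)) = ∑ _z ∈ F.offDiag, u * (1 - u) := by
        rw [Finset.sum_const, Finset.offDiag_card, ← hn, nsmul_eq_mul,
          Nat.cast_sub (Nat.le_mul_self n), Nat.cast_mul]
        ring
    _ ≤ ∑ z ∈ F.offDiag, disagreementProb G θ u 0 z.1 z.2 := Finset.sum_le_sum h_pair
    _ ≤ ∑ z : Fin N × Fin N, disagreementProb G θ u 0 z.1 z.2 :=
        Finset.sum_le_univ_sum_of_nonneg fun z => disagreementProb_nonneg hu le_rfl z.1 z.2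
    _ = ∑ i, ∑ j, disagreementProb G θ u 0 i j := Fintype.sum_prod_type _

end Disagreement

section ConsensusTime

variable {N : ℕ} {G : SimpleGraph (Fin N)} {θ u t : ℝ}

lemma one_sub_probConsensusAt (t : ℝ) :
    1 - probConsensusAt G θ u t =
      markovExpect (voterQ G θ) (muU u) t (1 - (consensusStates G).indicator 1) := by
  rw [map_sub, markovExpect_voterQ_one, markovExpect_apply]
  simp only [probConsensusAt, Set.indicator_apply, Pi.one_apply]

lemma continuous_one_sub_probConsensusAt :
    Continuous fun t => 1 - probConsensusAt G θ u t := by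
  simp only [one_sub_probConsensusAt]
  exact continuous_iff_continuousAt.2 fun t => (hasDerivAt_markovExpect t _).continuousAt

lemma one_sub_probConsensusAt_nonneg (hu : u ∈ Set.Ioo (0 : ℝ) 1) (ht : 0 ≤ t) :
    0 ≤ 1 - probConsensusAt G θ u t := by
  rw [one_sub_probConsensusAt, ← map_zero (markovExpect (voterQ G θ) (muU u) t)]
  exact markovExpect_voterQ_mono hu ht fun η => by by_cases h : η ∈ consensusStates G <;> simp [h]

lemma one_sub_probConsensusAt_le_one (hu : u ∈ Set.Ioo (0 : ℝ) 1) (ht : 0 ≤ t) :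
    1 - probConsensusAt G θ u t ≤ 1 := by
  rw [one_sub_probConsensusAt]
  refine (markovExpect_voterQ_mono (g := 1) hu ht fun η => ?_).trans_eq markovExpect_voterQ_one
  by_cases h : η ∈ consensusStates G <;> simp [h]

lemma one_sub_probConsensusAt_le_sum (hu : u ∈ Set.Ioo (0 : ℝ) 1) (ht : 0 ≤ t) :
    1 - probConsensusAt G θ u t ≤ ∑ i, ∑ j, disagreementProb G θ u t i j := by
  simp only [one_sub_probConsensusAt, disagreementProb, ← map_sum]
  refine markovExpect_voterQ_mono hu ht fun η => ?_
  simp only [Finset.sum_apply, Pi.sub_apply, Pi.one_apply]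
  by_cases h : η ∈ consensusStates G
  · simpa [h] using Finset.sum_nonneg fun i _ => Finset.sum_nonneg fun j _ =>
      disagree_nonneg (G := G) i j η
  · obtain ⟨i, j, hij, h_ne⟩ : ∃ i j, G.Reachable i j ∧ η i ≠ η j := by
      simpa [consensusStates] using h
    calc 1 - (consensusStates G).indicator 1 η = disagree G i j η := by
          simp [h, disagree, hij, h_ne]
      _ ≤ ∑ z : Fin N × Fin N, disagree G z.1 z.2 η :=
          Finset.single_le_sum (f := fun z : Fin N × Fin N => disagree G z.1 z.2 η)
            (fun z _ => disagree_nonneg z.1 z.2 η) (Finset.mem_univ (i, j))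
      _ = ∑ i, ∑ j, disagree G i j η := Fintype.sum_prod_type _

lemma sum_disagreementProb_le (hu : u ∈ Set.Ioo (0 : ℝ) 1) (ht : 0 ≤ t) :
    ∑ i, ∑ j, disagreementProb G θ u t i j ≤ (N : ℝ) ^ 2 * (1 - probConsensusAt G θ u t) := by
  simp only [one_sub_probConsensusAt, disagreementProb, ← map_sum, ← smul_eq_mul, ← map_smul]
  refine markovExpect_voterQ_mono hu ht fun η => ?_
  simp only [Finset.sum_apply, Pi.smul_apply, Pi.sub_apply, Pi.one_apply]
  by_cases h : η ∈ consensusStates G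
  · have h_zero : ∀ i j, disagree G i j η = 0 := fun i j =>
      if_neg fun h_dis => h_dis.2 (h i j h_dis.1)
    simp [h, h_zero]
  · calc ∑ i, ∑ j, disagree G i j η ≤ ∑ _i : Fin N, ∑ _j : Fin N, (1 : ℝ) :=
          Finset.sum_le_sum fun i _ => Finset.sum_le_sum fun j _ => disagree_le_one i j η
      _ = (N : ℝ) ^ 2 • (1 - (consensusStates G).indicator 1 η) := by simp [h, sq]

/-- Waiting a factor `log N` longer than the decay time absorbs the number of pairs. -/
lemma one_sub_probConsensusAt_le (hu : u ∈ Set.Ioo (0 : ℝ) 1) (hN : 1 ≤ Real.log N) {a : ℝ}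
    (ha : ∑ i, ∑ j, disagreementProb G θ u t i j ^ 2 ≤
      (N : ℝ) ^ 2 * Real.exp (-(2 * a * Real.log N * t))) (ht : 0 ≤ t) :
    1 - probConsensusAt G θ u t ≤ Real.exp 2 * Real.exp (-a * t) := by
  set y := 1 - probConsensusAt G θ u t
  have h_nonneg : 0 ≤ y := one_sub_probConsensusAt_nonneg hu ht
  have h_le_one : y ≤ 1 := one_sub_probConsensusAt_le_one hu ht
  have h_sq : y ^ 2 ≤ Real.exp (Real.log N * (4 - 2 * a * t)) :=
    calc y ^ 2 ≤ (∑ z : Fin N × Fin N, disagreementProb G θ u t z.1 z.2) ^ 2 := by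
          rw [Fintype.sum_prod_type]
          exact pow_le_pow_left₀ h_nonneg (one_sub_probConsensusAt_le_sum hu ht) 2
      _ ≤ (N : ℝ) ^ 2 * ∑ i, ∑ j, disagreementProb G θ u t i j ^ 2 := by
          rw [← Fintype.sum_prod_type']
          simpa [sq] using sq_sum_le_card_mul_sum_sq (s := Finset.univ)
            (f := fun z : Fin N × Fin N => disagreementProb G θ u t z.1 z.2)
      _ ≤ (N : ℝ) ^ 2 * ((N : ℝ) ^ 2 * Real.exp (-(2 * a * Real.log N * t))) := by gcongr
      _ = Real.exp (Real.log N * (4 - 2 * a * t)) := by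
          have h_pos : (0 : ℝ) < N := by
            rcases Nat.eq_zero_or_pos N with rfl | h
            · norm_num at hN
            · exact_mod_cast h
          have h_exp : (N : ℝ) ^ 2 = Real.exp (2 * Real.log N) := by
            rw [← Real.exp_log h_pos, ← Real.exp_nat_mul, Real.log_exp, Nat.cast_ofNat]
          rw [h_exp, ← Real.exp_add, ← Real.exp_add]
          ring_nf
  refine le_of_sq_le_sq ?_ (by positivity)
  rw [← Real.exp_add, ← Real.exp_nat_mul]
  rcases le_total 0 (4 - 2 * a * t) with h | h
  · refine (pow_le_one₀ h_nonneg h_le_one).trans (Real.one_le_exp ?_)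
    push_cast
    linarith
  · refine h_sq.trans (Real.exp_le_exp.2 ?_)
    push_cast
    nlinarith

theorem expectedConsensusTime_le (hu : u ∈ Set.Ioo (0 : ℝ) 1) {H : SimpleGraph (Fin N)} {l : ℕ}
    (hl : 0 < l) {ρ : ℝ} (hρ : 0 < ρ) (hH : ∀ x y, H.Adj x y → 1 ≤ ρ * conductance G θ x y)
    (h_dist : ∀ i j, G.Reachable i j → H.edist i j ≤ l) (hN : 1 ≤ Real.log N) :
    MeasureTheory.IntegrableOn (fun t => 1 - probConsensusAt G θ u t) (Set.Ioi 0) ∧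
      expectedConsensusTime G θ u ≤ Real.exp 2 * (N * l * ρ * Real.log N) := by
  have hN_pos : (0 : ℝ) < N := by
    rcases Nat.eq_zero_or_pos N with rfl | h
    · norm_num at hN
    · exact_mod_cast h
  set a := 1 / (N * l * ρ * Real.log N) with ha
  have ha_pos : 0 < a := by positivity
  have h_nonneg : ∀ᵐ t ∂MeasureTheory.volume.restrict (Set.Ioi 0),
      0 ≤ 1 - probConsensusAt G θ u t :=
    (MeasureTheory.ae_restrict_mem measurableSet_Ioi).mono fun t ht =>
      one_sub_probConsensusAt_nonneg hu (Set.mem_Ioi.1 ht).le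
  have h_le : ∀ᵐ t ∂MeasureTheory.volume.restrict (Set.Ioi 0),
      1 - probConsensusAt G θ u t ≤ Real.exp 2 * Real.exp (-a * t) := by
    refine (MeasureTheory.ae_restrict_mem measurableSet_Ioi).mono fun t ht => ?_
    have h_rate : 2 * a * Real.log N = 2 / (N * l * ρ) := by
      rw [ha]
      field_simp
    refine one_sub_probConsensusAt_le hu hN ?_ (Set.mem_Ioi.1 ht).le
    rw [h_rate]
    exact sum_sq_disagreementProb_le hu hρ.le hH h_dist (Set.mem_Ioi.1 ht).le
  have h_int : MeasureTheory.IntegrableOn (fun t => Real.exp 2 * Real.exp (-a * t)) (Set.Ioi 0) :=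
    (integrableOn_exp_mul_Ioi (neg_lt_zero.2 ha_pos) 0).const_mul _
  refine ⟨h_int.mono' continuous_one_sub_probConsensusAt.aestronglyMeasurable ?_, ?_⟩
  · filter_upwards [h_nonneg, h_le] with t h_nonneg h_le
    rwa [Real.norm_of_nonneg h_nonneg]
  · refine (MeasureTheory.integral_mono_of_nonneg h_nonneg h_int h_le).trans_eq ?_
    rw [MeasureTheory.integral_const_mul, integral_exp_mul_Ioi (neg_lt_zero.2 ha_pos), ha]
    simp

/-- The total disagreement `V` decreases at rate at most `2 * S`, so it is at least `V / 2` up to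
time `V / (4 * S)`. -/
theorem le_expectedConsensusTime (hu : u ∈ Set.Ioo (0 : ℝ) 1)
    (h_int : MeasureTheory.IntegrableOn (fun t => 1 - probConsensusAt G θ u t) (Set.Ioi 0))
    {S V : ℝ} (hS : 0 < S) (hGS : ∑ i, ∑ k, conductance G θ i k ≤ S) (hV : 0 ≤ V)
    (hGV : V ≤ ∑ i, ∑ j, disagreementProb G θ u 0 i j) :
    V ^ 2 / (8 * S * (N : ℝ) ^ 2) ≤ expectedConsensusTime G θ u := by
  have h_low : ∀ t ∈ Set.Ioc 0 (V / (4 * S)),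
      V / (2 * (N : ℝ) ^ 2) ≤ 1 - probConsensusAt G θ u t := by
    rintro t ⟨ht, ht'⟩
    have h_decrease := sum_disagreementProb_zero_sub_le (G := G) (θ := θ) hu ht.le
    have h_half : 2 * (∑ i, ∑ k, conductance G θ i k) * t ≤ V / 2 :=
      calc 2 * (∑ i, ∑ k, conductance G θ i k) * t ≤ 2 * S * (V / (4 * S)) := by gcongr
        _ = V / 2 := by field_simp; ring
    refine div_le_of_le_mul₀ (by positivity) (one_sub_probConsensusAt_nonneg hu ht.le) ?_
    linarith [sum_disagreementProb_le (G := G) (θ := θ) hu ht.le]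
  have h_time : 0 ≤ V / (4 * S) := by positivity
  calc V ^ 2 / (8 * S * (N : ℝ) ^ 2) = ∫ _t in Set.Ioc 0 (V / (4 * S)), V / (2 * (N : ℝ) ^ 2) := by
        rw [MeasureTheory.setIntegral_const, Real.volume_real_Ioc_of_le h_time, smul_eq_mul,
          sub_zero, div_mul_div_comm]
        ring_nf
    _ ≤ ∫ t in Set.Ioc 0 (V / (4 * S)), (1 - probConsensusAt G θ u t) :=
        MeasureTheory.setIntegral_mono_on (MeasureTheory.integrableOn_const (by simp))
          (h_int.mono_set Set.Ioc_subset_Ioi_self) measurableSet_Ioc h_low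
    _ ≤ expectedConsensusTime G θ u :=
        MeasureTheory.setIntegral_mono_set h_int
          ((MeasureTheory.ae_restrict_mem measurableSet_Ioi).mono fun t ht =>
            one_sub_probConsensusAt_nonneg hu (Set.mem_Ioi.1 ht).le)
          Set.Ioc_subset_Ioi_self.eventuallyLE

end ConsensusTime

section DegreeBound

open RandomGraph

variable {N : ℕ} {G : SimpleGraph (Fin N)} {θ u γ D : ℝ}

lemma one_le_mul_contactRate {x y : Fin N} (h_adj : G.Adj x y) (hD : G.degree x ≤ D) :
    1 ≤ D ^ |θ - 1| * contactRate G θ x := by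
  have hd : (1 : ℝ) ≤ G.degree x := by exact_mod_cast h_adj.degree_pos_left
  have hd_pos := one_pos.trans_le hd
  calc (1 : ℝ) ≤ (G.degree x : ℝ) ^ (|θ - 1| + (θ - 1)) :=
        Real.one_le_rpow hd (by linarith [neg_abs_le (θ - 1)])
    _ = (G.degree x : ℝ) ^ |θ - 1| * contactRate G θ x := by
        rw [contactRate, Real.rpow_add hd_pos, Real.rpow_sub_one hd_pos.ne', div_eq_mul_inv]
    _ ≤ D ^ |θ - 1| * contactRate G θ x := by
        have := contactRate_nonneg (G := G) (θ := θ) x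
        gcongr

lemma one_le_mul_conductance {M : Finset (Fin N)} (hM : ∀ i ∈ M, (G.degree i : ℝ) ≤ D)
    {x y : Fin N} (h : (edgesMeeting G M).Adj x y) :
    1 ≤ 2 * D ^ |θ - 1| * conductance G θ x y := by
  have hx := contactRate_nonneg (G := G) (θ := θ) x
  have hy := contactRate_nonneg (G := G) (θ := θ) y
  have hD : ∀ i ∈ M, 0 ≤ D ^ |θ - 1| := fun i hi =>
    Real.rpow_nonneg ((Nat.cast_nonneg _).trans (hM i hi)) _
  rw [conductance, if_pos h.1]
  rcases h.2 with hxM | hyM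
  · nlinarith [one_le_mul_contactRate (θ := θ) h.1 (hM x hxM), mul_nonneg (hD x hxM) hy]
  · nlinarith [one_le_mul_contactRate (θ := θ) h.1.symm (hM y hyM), mul_nonneg (hD y hyM) hx]

theorem expectedConsensusTime_le_of_degree_le (hu : u ∈ Set.Ioo (0 : ℝ) 1) {M : Finset (Fin N)}
    {l : ℕ} (hl : 0 < l) (hD : 0 < D) (hM : ∀ i ∈ M, (G.degree i : ℝ) ≤ D)
    (h_dist : ∀ i j, G.Reachable i j → (edgesMeeting G M).edist i j ≤ l)
    (hN : 1 ≤ Real.log N) :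
    MeasureTheory.IntegrableOn (fun t => 1 - probConsensusAt G θ u t) (Set.Ioi 0) ∧
      expectedConsensusTime G θ u ≤ Real.exp 2 * (N * l * (2 * D ^ |θ - 1|) * Real.log N) :=
  expectedConsensusTime_le hu hl (by positivity)
    (fun _ _ h => one_le_mul_conductance hM h) h_dist hN

theorem le_expectedConsensusTime_of_card_reachable (hθ : θ ≤ 2) (hu : u ∈ Set.Ioo (0 : ℝ) 1)
    (h_int : MeasureTheory.IntegrableOn (fun t => 1 - probConsensusAt G θ u t) (Set.Ioi 0))
    {S q : ℝ} (hS : 0 < S) (h_degree : ∑ i, (G.degree i : ℝ) ^ 2 ≤ S) (hq : 2 ≤ q) {s : Fin N}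
    (hs : q ≤ ((Finset.univ.filter fun x => G.Reachable s x).card : ℝ)) :
    (u * (1 - u)) ^ 2 * q ^ 4 / (32 * S * (N : ℝ) ^ 2) ≤ expectedConsensusTime G θ u := by
  have hu_pos : 0 < u * (1 - u) := mul_pos hu.1 (sub_pos.2 hu.2)
  have h_zero : u * (1 - u) * (q ^ 2 / 2) ≤ ∑ i, ∑ j, disagreementProb G θ u 0 i j := by
    refine le_trans ?_ (le_sum_disagreementProb_zero hu s rfl)
    gcongr
    nlinarith
  calc (u * (1 - u)) ^ 2 * q ^ 4 / (32 * S * (N : ℝ) ^ 2)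
      = (u * (1 - u) * (q ^ 2 / 2)) ^ 2 / (8 * S * (N : ℝ) ^ 2) := by ring
    _ ≤ expectedConsensusTime G θ u :=
        le_expectedConsensusTime hu h_int hS ((sum_conductance_le hθ).trans h_degree)
          (by positivity) h_zero

end DegreeBound

end VoterModel

namespace RandomGraph

namespace Typical

open VoterModel

variable {N : ℕ} {G : SimpleGraph (Fin N)} {θ u γ : ℝ}

lemma degree_le_of_mem_smallVertices (hG : Typical γ G) {i : Fin N}
    (hi : i ∈ smallVertices γ N) : (G.degree i : ℝ) ≤ Real.log N ^ 4 :=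
  calc (G.degree i : ℝ) ≤ Real.log N ^ 2 * vertexWeight γ N i := hG.degree_le i
    _ ≤ Real.log N ^ 2 * Real.log N ^ 2 := by
        gcongr
        exact mem_smallVertices.1 hi
    _ = Real.log N ^ 4 := by ring

lemma sum_sq_degree_le (hG : Typical γ G) (hγ : γ ≤ 1 / 2) (hlog : 2 ≤ Real.log N) :
    ∑ i, (G.degree i : ℝ) ^ 2 ≤ N * Real.log N ^ 6 :=
  calc ∑ i, (G.degree i : ℝ) ^ 2 ≤ ∑ i, (Real.log N ^ 2 * vertexWeight γ N i) ^ 2 := by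
        gcongr with i
        exact hG.degree_le i
    _ = Real.log N ^ 4 * ∑ i, vertexWeight γ N i ^ 2 := by
        rw [Finset.mul_sum]
        exact Finset.sum_congr rfl fun i _ => by ring
    _ ≤ Real.log N ^ 4 * (N * Real.log N ^ 2) := by
        gcongr
        refine (sum_sq_vertexWeight_le hγ).trans ?_
        gcongr
        nlinarith
    _ = N * Real.log N ^ 6 := by ring

lemma integrableOn_and_expectedConsensusTime_le (hG : Typical γ G) (hu : u ∈ Set.Ioo (0 : ℝ) 1)
    (hlog : 1 ≤ Real.log N) (h_exp : 2 * Real.exp 2 ≤ Real.log N) :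
    MeasureTheory.IntegrableOn (fun t => 1 - probConsensusAt G θ u t) (Set.Ioi 0) ∧
      expectedConsensusTime G θ u ≤ N * Real.log N ^ (4 + 4 * |θ - 1|) := by
  obtain ⟨l, hl, hl_le, h_dist⟩ := hG.exists_edist_le
  have hlog_pos := one_pos.trans_le hlog
  have h_rpow : (Real.log N ^ 4) ^ |θ - 1| = Real.log N ^ (4 * |θ - 1|) := by
    rw [← Real.rpow_natCast, ← Real.rpow_mul hlog_pos.le]
    norm_num
  refine (expectedConsensusTime_le_of_degree_le hu hl (pow_pos hlog_pos 4)
    (fun _ => hG.degree_le_of_mem_smallVertices) h_dist hlog).imp_right fun h => h.trans ?_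
  calc Real.exp 2 * (N * l * (2 * (Real.log N ^ 4) ^ |θ - 1|) * Real.log N)
      = 2 * Real.exp 2 * l * (N * Real.log N ^ (4 * |θ - 1|) * Real.log N) := by
        rw [h_rpow]
        ring
    _ ≤ Real.log N * Real.log N ^ 2 * (N * Real.log N ^ (4 * |θ - 1|) * Real.log N) := by
        gcongr
    _ = N * Real.log N ^ (4 + 4 * |θ - 1|) := by
        rw [Real.rpow_add hlog_pos, show (4 : ℝ) = (4 : ℕ) by norm_num, Real.rpow_natCast]
        ring

lemma div_log_pow_le_expectedConsensusTime (hG : Typical γ G) (hγ : γ ≤ 1 / 2) (hθ : θ ≤ 2)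
    (hu : u ∈ Set.Ioo (0 : ℝ) 1)
    (h_int : MeasureTheory.IntegrableOn (fun t => 1 - probConsensusAt G θ u t) (Set.Ioi 0))
    (hlog : 2 ≤ Real.log N) (hN : Real.log N ^ 13 ≤ N)
    (hu_log : 32 / (u * (1 - u)) ^ 2 ≤ Real.log N) :
    N / Real.log N ^ 55 ≤ expectedConsensusTime G θ u := by
  obtain ⟨s, hs⟩ := hG.exists_le_card_reachable
  have hu_pos : 0 < u * (1 - u) := mul_pos hu.1 (sub_pos.2 hu.2)
  have hlog_pos := two_pos.trans_le hlog
  have hN_pos := (pow_pos hlog_pos 13).trans_le hN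
  have hq : 2 ≤ N / Real.log N ^ 12 := by
    rw [le_div_iff₀ (by positivity)]
    calc (2 : ℝ) * Real.log N ^ 12 ≤ Real.log N * Real.log N ^ 12 := by gcongr
      _ ≤ (N : ℝ) := by linarith [pow_succ' (Real.log N) 12]
  calc N / Real.log N ^ 55
      ≤ (u * (1 - u)) ^ 2 / 32 * (N / Real.log N ^ 54) := by
        rw [div_le_iff₀' (by positivity)] at hu_log
        rw [div_mul_div_comm, div_le_div_iff₀ (by positivity) (by positivity)]
        calc N * (32 * Real.log N ^ 54)
            ≤ N * ((u * (1 - u)) ^ 2 * Real.log N * Real.log N ^ 54) := by gcongr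
          _ = _ := by ring
    _ = (u * (1 - u)) ^ 2 * (N / Real.log N ^ 12) ^ 4 / (32 * (N * Real.log N ^ 6) * N ^ 2) := by
        field_simp
    _ ≤ expectedConsensusTime G θ u :=
        le_expectedConsensusTime_of_card_reachable hθ hu h_int (by positivity)
          (hG.sum_sq_degree_le hγ hlog) hq hs

end Typical

theorem eventually_expectedConsensusTime_bounds_of_typical {γ u θ : ℝ} (hγ : γ ≤ 1 / 2)
    (hu : u ∈ Set.Ioo (0 : ℝ) 1) (hθ : θ ≤ 2) :
    ∀ᶠ N : ℕ in atTop, ∀ G : SimpleGraph (Fin N), Typical γ G →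
      N * Real.log N ^ (-(55 + 4 * |θ - 1|)) ≤ expectedConsensusTime G θ u ∧
        expectedConsensusTime G θ u ≤ N * Real.log N ^ (55 + 4 * |θ - 1|) := by
  filter_upwards [eventually_le_log 2, eventually_log_pow_le 13,
    eventually_le_log (2 * Real.exp 2), eventually_le_log (32 / (u * (1 - u)) ^ 2)]
    with N hlog hN h_exp hu_log G hG
  have hlog_one : 1 ≤ Real.log N := by linarith
  have := abs_nonneg (θ - 1)
  obtain ⟨h_int, h_upper⟩ := hG.integrableOn_and_expectedConsensusTime_le hu hlog_one h_exp
  refine ⟨?_, h_upper.trans (by gcongr; norm_num)⟩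
  calc N * Real.log N ^ (-(55 + 4 * |θ - 1|)) ≤ N * Real.log N ^ (-((55 : ℕ) : ℝ)) := by
        gcongr
        push_cast
        linarith
    _ = N / Real.log N ^ 55 := by
        rw [Real.rpow_neg (by linarith), Real.rpow_natCast, div_eq_mul_inv]
    _ ≤ expectedConsensusTime G θ u :=
        hG.div_log_pow_le_expectedConsensusTime hγ hθ hu h_int hlog hN hu_log

end RandomGraph

/-- For `γ ∈ [0,1/2]`, `u ∈ (0,1)`, `β > 1 − 2γ` and `θ ∈ (−∞,2]`, the
discursive voter model with temperature `θ` on the Simplified Norros–Reittu graph `G_N`,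
started from `μ_u`, has `E^θ_{μ_u}(τ_cons | G_N) = Θ_P^{log N}(N)`: there is `C > 0` such
that with probability tending to `1` as `N → ∞`,
`N · log^{−C} N ≤ E^θ_{μ_u}(τ_cons | G_N) ≤ N · log^C N`. -/
theorem discursive_consensus_small_world
    (γ u β θ : ℝ) (hγ : γ ∈ Set.Icc (0 : ℝ) (1 / 2)) (hu : u ∈ Set.Ioo (0 : ℝ) 1)
    (hβ : 1 - 2 * γ < β) (hθ : θ ≤ 2) :
    ∃ C > (0 : ℝ),
      Tendsto
        (fun N : ℕ =>
          snrProb β γ N (fun G =>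
            (N : ℝ) * Real.log N ^ (-C) ≤ expectedConsensusTime G θ u ∧
              expectedConsensusTime G θ u ≤ (N : ℝ) * Real.log N ^ C))
        atTop (nhds 1) := by
  refine ⟨55 + 4 * |θ - 1|, by positivity, ?_⟩
  have hβ₀ : 0 ≤ β := by linarith [hγ.2]
  simp only [RandomGraph.snrProb_eq_prob]
  exact (RandomGraph.withHighProb_typical hγ hβ).mono (RandomGraph.snrModel_mem_Icc hβ₀ hγ.1)
    (RandomGraph.eventually_expectedConsensusTime_bounds_of_typical hγ.2 hu hθ)
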